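/- There exists a shift space X ⊆ {0,1}^∞ which is minimal, topologically mixing, has positive topological entropy, and has the d̄-shadowing property; moreover, the ergodic measures of X are entropy dense in M_σ(X) and the set of ergodic measures of X is uncountable. -/

import Mathlib

open MeasureTheory Filter Topology

namespace DbarPaper

variable {A : Type} [Fintype A] [DecidableEq A] [Inhabited A]
  [TopologicalSpace A] [DiscreteTopology A]
  [MeasurableSpace A] [MeasurableSingletonClass A]

/-- The shift map on the full shift `𝒜^∞ = ℕ → A`. -/
def shift : (ℕ → A) → (ℕ → A) := fun x n => x (n + 1)

/-- A shift space: a nonempty, closed, shift-invariant subset of the full shift. -/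
def ShiftSpace (X : Set (ℕ → A)) : Prop :=
  X.Nonempty ∧ IsClosed X ∧ ∀ x ∈ X, shift x ∈ X

/-- The word `w` appears in the sequence `x`. -/
def occursIn (w : List A) (x : ℕ → A) : Prop :=
  ∃ i : ℕ, w = List.ofFn (fun k : Fin w.length => x (i + (k : ℕ)))

/-- The language of a set `X`: all finite words appearing in points of `X`. -/
def lang (X : Set (ℕ → A)) : Set (List A) := {w | ∃ x ∈ X, occursIn w x}

/-- Words of length `n` in the language of `X`. -/
def langN (n : ℕ) (X : Set (ℕ → A)) : Set (List A) := {w | w ∈ lang X ∧ w.length = n}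

/-- The pseudometric `d̄` on the full shift. -/
noncomputable def dbar (x y : ℕ → A) : ℝ :=
  Filter.limsup
    (fun n => (((Finset.range n).filter (fun j => x j ≠ y j)).card : ℝ) / (n : ℝ))
    Filter.atTop

/-- Hausdorff "distance" between two sets induced by a `ℝ`-valued distance. -/
noncomputable def hausdist {Z : Type*} (d : Z → Z → ℝ) (P Q : Set Z) : ℝ :=
  max (⨆ p : P, ⨅ q : Q, d p q) (⨆ q : Q, ⨅ p : P, d p q)

/-- A probability measure is shift-invariant. -/
def invariantPM (μ : ProbabilityMeasure (ℕ → A)) : Prop :=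
  (μ : Measure (ℕ → A)).map shift = (μ : Measure (ℕ → A))

/-- `M_σ(X)`: shift-invariant Borel probability measures giving `X` full measure. -/
def Msigma (X : Set (ℕ → A)) : Set (ProbabilityMeasure (ℕ → A)) :=
  {μ | invariantPM μ ∧ μ X = 1}

/-- `ξ` is a joining of `μ` and `ν`: a `σ×σ`-invariant measure on the product with
marginals `μ` and `ν`. -/
def IsJoining (ξ : Measure ((ℕ → A) × (ℕ → A))) (μ ν : ProbabilityMeasure (ℕ → A)) : Prop :=
  ξ.map (Prod.map shift shift) = ξ ∧
  ξ.map Prod.fst = (μ : Measure (ℕ → A)) ∧ ξ.map Prod.snd = (ν : Measure (ℕ → A))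

/-- Ornstein's metric `d̄_M` on invariant measures. -/
noncomputable def dbarM (μ ν : ProbabilityMeasure (ℕ → A)) : ℝ :=
  sInf {r : ℝ | ∃ ξ : Measure ((ℕ → A) × (ℕ → A)),
    IsJoining ξ μ ν ∧ r = (ξ {p | p.1 0 ≠ p.2 0}).toReal}

/-- `d̄_M`-stability of a shift space (Austin). -/
def DbarMStable (X : Set (ℕ → A)) : Prop :=
  ∀ ε : ℝ, 0 < ε → ∃ U : Set (ProbabilityMeasure (ℕ → A)), IsOpen U ∧ Msigma X ⊆ U ∧
    ∀ ν ∈ U, invariantPM ν → ∃ μ ∈ Msigma X, dbarM μ ν < ε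

/-- The infinite concatenation of a sequence of (nonempty) words. -/
def concatSeq (w : ℕ → List A) : ℕ → A := fun n =>
  ((List.ofFn (fun i : Fin (n + 1) => w (i : ℕ))).flatten).getD n default

/-- The `d̄`-shadowing property. -/
def DbarShadowing (X : Set (ℕ → A)) : Prop :=
  ∀ ε : ℝ, 0 < ε → ∃ N : ℕ, 0 < N ∧ ∀ w : ℕ → List A,
    (∀ j, w j ∈ lang X) → (∀ j, N ≤ (w j).length) →
    ∃ x' ∈ X, dbar (concatSeq w) x' < ε

/-- `U_n(X)`: the union of cylinders of words of length `n` in the language of `X`. -/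
def cylNbhd (X : Set (ℕ → A)) (n : ℕ) : Set (ℕ → A) :=
  {x | List.ofFn (fun k : Fin n => x (k : ℕ)) ∈ lang X}

/-- The `n`-th (topological) Markov approximation of `X`: all sequences whose subwords of
length `n+1` belong to the language of `X`. -/
def markovApprox (X : Set (ℕ → A)) (n : ℕ) : Set (ℕ → A) :=
  {x | ∀ i : ℕ, List.ofFn (fun k : Fin (n + 1) => x (i + (k : ℕ))) ∈ lang X}

/-- Transitivity, in terms of the language. -/
def TransitiveShift (X : Set (ℕ → A)) : Prop :=
  ∀ u ∈ lang X, ∀ w ∈ lang X, ∃ v : List A, u ++ v ++ w ∈ lang X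

/-- Topological mixing, in terms of the language. -/
def MixingShift (X : Set (ℕ → A)) : Prop :=
  ∀ u ∈ lang X, ∀ w ∈ lang X, ∃ N : ℕ, ∀ m : ℕ, N ≤ m →
    ∃ v : List A, v.length = m ∧ u ++ v ++ w ∈ lang X

/-- Chain mixing: all but finitely many Markov approximations are topologically mixing. -/
def ChainMixing (X : Set (ℕ → A)) : Prop :=
  ∃ N : ℕ, ∀ n : ℕ, N ≤ n → MixingShift (markovApprox X n)

/-- `C` is the measure center of `X`: the smallest shift space contained in `X` of full
measure for every invariant measure of `X`. -/
def IsMeasureCenter (X C : Set (ℕ → A)) : Prop :=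
  ShiftSpace C ∧ C ⊆ X ∧ (∀ μ ∈ Msigma X, μ C = 1) ∧
  ∀ Y : Set (ℕ → A), ShiftSpace Y → Y ⊆ X → (∀ μ ∈ Msigma X, μ Y = 1) → C ⊆ Y

/-- Measure of the cylinder determined by a word of length `n`. -/
noncomputable def cylMeasure (μ : ProbabilityMeasure (ℕ → A)) {n : ℕ} (w : Fin n → A) : ℝ :=
  ((μ : Measure (ℕ → A)) {x | ∀ k : Fin n, x (k : ℕ) = w k}).toReal

/-- Entropy of the partition into cylinders of length `n`. -/
noncomputable def blockEntropy (μ : ProbabilityMeasure (ℕ → A)) (n : ℕ) : ℝ :=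
  -∑ w : Fin n → A, cylMeasure μ w * Real.log (cylMeasure μ w)

/-- Kolmogorov–Sinai entropy of a shift-invariant measure. -/
noncomputable def ksEntropy (μ : ProbabilityMeasure (ℕ → A)) : ℝ :=
  Filter.limsup (fun n => blockEntropy μ n / (n : ℝ)) Filter.atTop

/-- `μ` is ergodic for the shift. -/
def ErgodicPM (μ : ProbabilityMeasure (ℕ → A)) : Prop :=
  Ergodic shift (μ : Measure (ℕ → A))

/-- Ergodic measures are entropy dense in `M_σ(X)`. -/
def EntropyDense (X : Set (ℕ → A)) : Prop :=
  ∀ μ ∈ Msigma X, ∀ U : Set (ProbabilityMeasure (ℕ → A)), IsOpen U → μ ∈ U →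
    ∀ ε : ℝ, 0 < ε →
      ∃ ν ∈ Msigma X, ν ∈ U ∧ ErgodicPM ν ∧ |ksEntropy ν - ksEntropy μ| < ε

/-- Topological entropy of a shift space. -/
noncomputable def topEntropy (X : Set (ℕ → A)) : ℝ :=
  Filter.limsup (fun n => Real.log (Nat.card ↥(langN n X)) / (n : ℝ)) Filter.atTop

/-- The standard metric on the full shift. -/
noncomputable def rho (x y : ℕ → A) : ℝ :=
  open scoped Classical in
  if x = y then 0 else (2 : ℝ) ^ (-((sInf {j : ℕ | x j ≠ y j} : ℕ) : ℤ))

/-- Proximality of a shift space. -/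
def ProximalShift (X : Set (ℕ → A)) : Prop :=
  ∀ x ∈ X, ∀ y ∈ X,
    Filter.liminf (fun n => rho (shift^[n] x) (shift^[n] y)) Filter.atTop = 0

/-- Minimality of a shift space. -/
def MinimalShift (X : Set (ℕ → A)) : Prop :=
  ShiftSpace X ∧ ∀ Y : Set (ℕ → A), ShiftSpace Y → Y ⊆ X → Y = X

/-- An `A`-labeled directed multigraph on vertices `V` with edges `E`. -/
structure LabeledGraph (A V E : Type*) where
  src : E → V
  dst : E → V
  lab : E → A

namespace LabeledGraph

variable {A' V E : Type*}

/-- `es` is a path in `G` from `u` to `v`. -/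
def PathFromTo (G : LabeledGraph A' V E) (es : List E) (u v : V) : Prop :=
  es.Chain' (fun e f => G.dst e = G.src f) ∧
  es.head?.map G.src = some u ∧ es.getLast?.map G.dst = some v

/-- `G` is strongly connected. -/
def StronglyConnected (G : LabeledGraph A' V E) : Prop :=
  ∀ u v : V, ∃ es : List E, G.PathFromTo es u v

/-- `d` is the period of `G`: the gcd of lengths of closed paths. -/
def HasPeriod (G : LabeledGraph A' V E) (d : ℕ) : Prop :=
  (∀ (es : List E) (u : V), G.PathFromTo es u u → d ∣ es.length) ∧
  ∀ d' : ℕ, (∀ (es : List E) (u : V), G.PathFromTo es u u → d' ∣ es.length) → d' ∣ d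

/-- `b` is a safe symbol for `G`. -/
def SafeSymbol (G : LabeledGraph A' V E) (b : A') : Prop :=
  ∀ e : E, ∃ e' : E, G.src e' = G.src e ∧ G.dst e' = G.dst e ∧ G.lab e' = b

/-- The shift space presented by the labeled graph `G`: labels read along infinite paths. -/
def presents (G : LabeledGraph A' V E) : Set (ℕ → A') :=
  {x | ∃ e : ℕ → E, (∀ j, G.dst (e j) = G.src (e (j + 1))) ∧ ∀ j, x j = G.lab (e j)}

end LabeledGraph

/-- The coupling of a family of labeled graphs: an edge labeled `a` from `v` to `v'` exists
iff each `G k` has an edge from `v k` to `v' k` labeled `a`. -/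
def coupling {A' : Type*} {n : ℕ} {V E : Fin n → Type*}
    (G : ∀ k, LabeledGraph A' (V k) (E k)) :
    LabeledGraph A' (∀ k, V k) {p : (∀ k, E k) × A' // ∀ k, (G k).lab (p.1 k) = p.2} where
  src p := fun k => (G k).src (p.1.1 k)
  dst p := fun k => (G k).dst (p.1.1 k)
  lab p := p.1.2

/-- Sofic shift spaces: those presented by some finite labeled graph. -/
def Sofic (X : Set (ℕ → A)) : Prop :=
  ∃ (V E : Type) (_ : Fintype V) (_ : Fintype E) (G : LabeledGraph A V E),
    X = G.presents

/-- The coded shift generated by a finite set of words `B`: the closure of the set of all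
shifts of infinite concatenations of words from `B`. -/
def codedShift (B : Finset (List A)) : Set (ℕ → A) :=
  closure {x | ∃ (b : ℕ → List A) (k : ℕ), (∀ i, b i ∈ B) ∧ x = shift^[k] (concatSeq b)}

/-! ### Finite words -/

/-- The word of length `n` read in `x` from position `i`. -/
def wordAt (x : ℕ → Bool) (i n : ℕ) : List Bool := List.ofFn (fun k : Fin n => x (i + (k : ℕ)))

@[simp] lemma length_wordAt (x : ℕ → Bool) (i n : ℕ) : (wordAt x i n).length = n := by
  simp [wordAt]

lemma wordAt_add (x : ℕ → Bool) (i m n : ℕ) :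
    wordAt x i (m + n) = wordAt x i m ++ wordAt x (i + m) n := by
  simp [wordAt, List.ofFn_add, add_assoc]

lemma wordAt_congr {x y : ℕ → Bool} {i n j : ℕ} (h : ∀ k < n, x (i + k) = y (j + k)) :
    wordAt x i n = wordAt y j n := by
  unfold wordAt
  congr 1
  funext k
  exact h k k.2

lemma wordAt_inj {x y : ℕ → Bool} {i n j : ℕ} (h : wordAt x i n = wordAt y j n) :
    ∀ k < n, x (i + k) = y (j + k) := by
  intro k hk
  exact congrFun (List.ofFn_injective h) ⟨k, hk⟩

lemma wordAt_isInfix (x : ℕ → Bool) {i n m : ℕ} (h : i + n ≤ m) :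
    wordAt x i n <:+: wordAt x 0 m := by
  obtain ⟨d, rfl⟩ := Nat.exists_eq_add_of_le h
  rw [wordAt_add, wordAt_add]
  exact ⟨wordAt x 0 i, wordAt x (0 + (i + n)) d, by simp⟩

lemma exists_wordAt_of_isInfix {x : ℕ → Bool} {i n : ℕ} {w : List Bool}
    (h : w <:+: wordAt x i n) : ∃ j, w = wordAt x j w.length := by
  obtain ⟨a, b, hab⟩ := h
  have hn : n = a.length + (w.length + b.length) := by
    have := congrArg List.length hab
    simp at this
    omega
  rw [hn, wordAt_add, wordAt_add, List.append_assoc] at hab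
  obtain ⟨_, h2⟩ := List.append_inj hab (by simp)
  obtain ⟨h3, _⟩ := List.append_inj h2 (by simp)
  exact ⟨_, h3⟩

lemma mem_lang_of_isInfix {X : Set (ℕ → Bool)} {u w : List Bool} (hw : w ∈ lang X)
    (h : u <:+: w) : u ∈ lang X := by
  obtain ⟨x, hx, i, hi⟩ := hw
  refine ⟨x, hx, ?_⟩
  change w = wordAt x i w.length at hi
  rw [hi] at h
  exact exists_wordAt_of_isInfix h

lemma flatten_split_of_isPrefix {B : Set (List Bool)} {C : ℕ} (hC : ∀ b ∈ B, b.length ≤ C) :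
    ∀ (bs : List (List Bool)), (∀ b ∈ bs, b ∈ B) → ∀ w, w <+: bs.flatten →
      ∃ (cs : List (List Bool)) (e : List Bool), (∀ b ∈ cs, b ∈ B) ∧
        w = cs.flatten ++ e ∧ e.length ≤ C := by
  intro bs
  induction bs with
  | nil =>
    intro _ w hw
    refine ⟨[], [], by simp, ?_, by simp⟩
    simpa using hw
  | cons b bs ih =>
    intro hb w hw
    rw [List.flatten_cons] at hw
    rcases List.prefix_or_prefix_of_prefix hw (List.prefix_append b bs.flatten) with h | h
    · exact ⟨[], w, by simp, by simp, h.length_le.trans (hC b (hb b (by simp)))⟩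
    · obtain ⟨v, rfl⟩ := h
      obtain ⟨cs, e, h1, h2, h3⟩ := ih (fun c hc => hb c (by simp [hc])) v
        ((List.prefix_append_right_inj b).1 hw)
      refine ⟨b :: cs, e, ?_, by simp [h2], h3⟩
      intro c hc
      rcases List.mem_cons.1 hc with rfl | hc
      · exact hb _ (by simp)
      · exact h1 c hc

lemma flatten_split_of_isInfix {B : Set (List Bool)} {C : ℕ} (hC : ∀ b ∈ B, b.length ≤ C) :
    ∀ (bs : List (List Bool)), (∀ b ∈ bs, b ∈ B) → ∀ w, w <:+: bs.flatten →
      ∃ (a : List Bool) (cs : List (List Bool)) (e : List Bool), (∀ b ∈ cs, b ∈ B) ∧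
        w = a ++ (cs.flatten ++ e) ∧ a.length ≤ C ∧ e.length ≤ C := by
  intro bs
  induction bs with
  | nil =>
    intro _ w hw
    refine ⟨[], [], [], by simp, ?_, by simp, by simp⟩
    simpa using hw
  | cons b bs ih =>
    intro hb w hw
    have hbs : ∀ c ∈ bs, c ∈ B := fun c hc => hb c (by simp [hc])
    rw [List.flatten_cons, List.infix_append_iff] at hw
    rcases hw with h | h | ⟨u, v, rfl, hu, hv⟩
    · exact ⟨w, [], [], by simp, by simp, h.length_le.trans (hC b (hb b (by simp))), by simp⟩
    · exact ih hbs w h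
    · obtain ⟨cs, e, h1, h2, h3⟩ := flatten_split_of_isPrefix hC bs hbs v hv
      exact ⟨u, cs, e, h1, by rw [h2], hu.length_le.trans (hC b (hb b (by simp))), h3⟩

/-- All finite concatenations of words from `B`. -/
def concats (B : Set (List Bool)) : Set (List Bool) :=
  {z | ∃ bs : List (List Bool), (∀ b ∈ bs, b ∈ B) ∧ z = bs.flatten}

/-- All factors of finite concatenations of words from `B`. -/
def factors (B : Set (List Bool)) : Set (List Bool) := {w | ∃ z ∈ concats B, w <:+: z}

lemma nil_mem_concats (B : Set (List Bool)) : [] ∈ concats B := ⟨[], by simp, by simp⟩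

lemma mem_concats_of_mem {B : Set (List Bool)} {b : List Bool} (h : b ∈ B) : b ∈ concats B :=
  ⟨[b], by simpa using h, by simp⟩

lemma append_mem_concats {B : Set (List Bool)} {u v : List Bool} (hu : u ∈ concats B)
    (hv : v ∈ concats B) : u ++ v ∈ concats B := by
  obtain ⟨us, h1, rfl⟩ := hu
  obtain ⟨vs, h2, rfl⟩ := hv
  refine ⟨us ++ vs, ?_, by simp⟩
  intro b hb
  rcases List.mem_append.1 hb with h | h
  · exact h1 b h
  · exact h2 b h

lemma concats_subset {B B' : Set (List Bool)} (h : B ⊆ concats B') :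
    concats B ⊆ concats B' := by
  rintro z ⟨bs, hbs, rfl⟩
  induction bs with
  | nil => exact nil_mem_concats B'
  | cons b bs ih =>
    rw [List.flatten_cons]
    exact append_mem_concats (h (hbs b (by simp))) (ih fun c hc => hbs c (by simp [hc]))

lemma factors_of_isInfix {B : Set (List Bool)} {u w : List Bool} (hw : w ∈ factors B)
    (h : u <:+: w) : u ∈ factors B := by
  obtain ⟨z, hz, hwz⟩ := hw
  exact ⟨z, hz, h.trans hwz⟩

lemma exists_concats_of_finite {B S : Set (List Bool)} (hS : S.Finite) (h : S ⊆ factors B) :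
    ∃ M ∈ concats B, ∀ w ∈ S, w <:+: M := by
  induction S, hS using Set.Finite.induction_on with
  | empty => exact ⟨[], nil_mem_concats B, by simp⟩
  | @insert a S _ _ ih =>
    obtain ⟨M, hM, hM'⟩ := ih fun w hw => h (Set.mem_insert_of_mem a hw)
    obtain ⟨z, hz, haz⟩ := h (Set.mem_insert a S)
    refine ⟨z ++ M, append_mem_concats hz hM, ?_⟩
    intro w hw
    rcases Set.mem_insert_iff.1 hw with rfl | hw
    · exact haz.trans (List.infix_append_of_infix_left (List.infix_refl _))
    · exact (hM' w hw).trans (List.infix_append_of_infix_right (List.infix_refl _))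

lemma exists_marker (B : Set (List Bool)) (n : ℕ) :
    ∃ M ∈ concats B, ∀ w ∈ factors B, w.length ≤ n → w <:+: M := by
  obtain ⟨M, hM, h⟩ := exists_concats_of_finite (B := B)
    (S := {w | w.length ≤ n} ∩ factors B)
    ((List.finite_length_le Bool n).inter_of_left _) Set.inter_subset_right
  exact ⟨M, hM, fun w hw hn => h w ⟨hn, hw⟩⟩

/-! ### The hierarchy of block sets -/

/-- A concatenation of words of `B` in which all short factors of such concatenations occur. -/
noncomputable def marker (B : Set (List Bool)) (n : ℕ) : List Bool := (exists_marker B n).choose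

/-- The set of blocks of level `k` together with its length parameter. -/
noncomputable def stage : ℕ → Set (List Bool) × ℕ
  | 0 => ({b | 1 ≤ b.length ∧ b.length ≤ 4}, 1)
  | k + 1 =>
    let B := (stage k).1
    let L := (stage k).2
    let M := marker B (4 * L + k)
    let L' := (M.length + 1) * 2 ^ (k + 10) * L
    ({w | ∃ z ∈ concats B, w = z ++ M ∧ L' ≤ w.length ∧ w.length ≤ 4 * L'}, L')

/-- Blocks of level `k`. -/
noncomputable def blocks (k : ℕ) : Set (List Bool) := (stage k).1

/-- The standard length of a block of level `k`. -/
noncomputable def blen (k : ℕ) : ℕ := (stage k).2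

/-- The marker terminating each block of level `k + 1`. -/
noncomputable def mark (k : ℕ) : List Bool := marker (blocks k) (4 * blen k + k)

/-- Number of level `k` blocks overwritten at the end of a block of level `k + 1`. -/
noncomputable def tailNum (k : ℕ) : ℕ := (mark k).length + 1

lemma blen_zero : blen 0 = 1 := rfl

lemma blen_succ (k : ℕ) : blen (k + 1) = tailNum k * 2 ^ (k + 10) * blen k := rfl

lemma mem_blocks_succ {k : ℕ} {w : List Bool} : w ∈ blocks (k + 1) ↔
    ∃ z ∈ concats (blocks k), w = z ++ mark k ∧ blen (k + 1) ≤ w.length ∧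
      w.length ≤ 4 * blen (k + 1) := Iff.rfl

lemma mark_mem (k : ℕ) : mark k ∈ concats (blocks k) :=
  (exists_marker (blocks k) (4 * blen k + k)).choose_spec.1

lemma infix_mark {k : ℕ} {w : List Bool} (hw : w ∈ factors (blocks k))
    (h : w.length ≤ 4 * blen k + k) : w <:+: mark k :=
  (exists_marker (blocks k) (4 * blen k + k)).choose_spec.2 w hw h

lemma tailNum_pos (k : ℕ) : 0 < tailNum k := Nat.succ_pos _

lemma blen_pos (k : ℕ) : 0 < blen k := by
  induction k with
  | zero => simp [blen_zero]
  | succ k ih => rw [blen_succ]; have := tailNum_pos k; positivity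

lemma length_of_mem_blocks {k : ℕ} {b : List Bool} (h : b ∈ blocks k) :
    blen k ≤ b.length ∧ b.length ≤ 4 * blen k := by
  cases k with
  | zero => exact h
  | succ k => exact (mem_blocks_succ.1 h).choose_spec.2.2

lemma mark_length_add_le (k : ℕ) : (mark k).length + blen k ≤ tailNum k * blen k := by
  have := blen_pos k
  unfold tailNum
  nlinarith

lemma tail_lt (k : ℕ) : tailNum k * blen k * 1024 ≤ blen (k + 1) := by
  have h : (1024 : ℕ) ≤ 2 ^ (k + 10) := by
    calc (1024 : ℕ) = 2 ^ 10 := by norm_num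
      _ ≤ 2 ^ (k + 10) := Nat.pow_le_pow_right (by norm_num) (by omega)
  rw [blen_succ]
  calc tailNum k * blen k * 1024 ≤ tailNum k * blen k * 2 ^ (k + 10) := by gcongr
    _ = _ := by ring

lemma exists_concats_of_exists_blocks {k : ℕ}
    (h : ∀ n, blen k ≤ n → n ≤ 4 * blen k → ∃ b ∈ blocks k, b.length = n) (n : ℕ)
    (hn : blen k ≤ n) : ∃ z ∈ concats (blocks k), z.length = n := by
  induction n using Nat.strong_induction_on with
  | _ n ih =>
    by_cases h4 : n ≤ 4 * blen k
    · obtain ⟨b, hb, hbn⟩ := h n hn h4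
      exact ⟨b, mem_concats_of_mem hb, hbn⟩
    · have hp := blen_pos k
      obtain ⟨z, hz, hzn⟩ := ih (n - blen k) (by omega) (by omega)
      obtain ⟨b, hb, hbn⟩ := h (blen k) le_rfl (by omega)
      exact ⟨b ++ z, append_mem_concats (mem_concats_of_mem hb) hz, by simp; omega⟩

lemma exists_mem_blocks (k : ℕ) :
    ∀ n, blen k ≤ n → n ≤ 4 * blen k → ∃ b ∈ blocks k, b.length = n := by
  induction k with
  | zero =>
    intro n h1 h2
    exact ⟨List.replicate n false, ⟨by simpa [blen_zero] using h1, by simpa [blen_zero] using h2⟩,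
      by simp⟩
  | succ k ih =>
    intro n h1 h2
    have h3 := mark_length_add_le k
    have h4 := tail_lt k
    have h5 : (mark k).length + blen k ≤ n := by omega
    obtain ⟨z, hz, hzn⟩ := exists_concats_of_exists_blocks ih (n - (mark k).length) (by omega)
    have h6 : (z ++ mark k).length = n := by simp; omega
    exact ⟨z ++ mark k, mem_blocks_succ.2 ⟨z, hz, rfl, by omega, by omega⟩, h6⟩

lemma exists_mem_concats (k n : ℕ) (hn : blen k ≤ n) :
    ∃ z ∈ concats (blocks k), z.length = n :=
  exists_concats_of_exists_blocks (exists_mem_blocks k) n hn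

lemma concats_blocks_succ (k : ℕ) : concats (blocks (k + 1)) ⊆ concats (blocks k) := by
  apply concats_subset
  intro w hw
  obtain ⟨z, hz, rfl, -⟩ := mem_blocks_succ.1 hw
  exact append_mem_concats hz (mark_mem k)

lemma concats_blocks_anti : Antitone fun k => concats (blocks k) :=
  antitone_nat_of_succ_le concats_blocks_succ

lemma factors_blocks_anti {j k : ℕ} (h : j ≤ k) : factors (blocks k) ⊆ factors (blocks j) := by
  rintro w ⟨z, hz, hwz⟩
  exact ⟨z, concats_blocks_anti h hz, hwz⟩

lemma factors_split {k : ℕ} {w : List Bool} (hw : w ∈ factors (blocks k)) :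
    ∃ (a : List Bool) (cs : List (List Bool)) (e : List Bool), (∀ b ∈ cs, b ∈ blocks k) ∧
      w = a ++ (cs.flatten ++ e) ∧ a.length ≤ 4 * blen k ∧ e.length ≤ 4 * blen k := by
  obtain ⟨z, ⟨bs, hbs, rfl⟩, hz⟩ := hw
  exact flatten_split_of_isInfix (fun b hb => (length_of_mem_blocks hb).2) bs hbs w hz

lemma exists_block_containing {k : ℕ} {w : List Bool} (hw : w ∈ factors (blocks k))
    (h : 8 * blen k < w.length) : ∃ b ∈ blocks k, b <:+: w := by
  obtain ⟨a, cs, e, h1, rfl, h3, h4⟩ := factors_split hw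
  cases cs with
  | nil => simp at h; omega
  | cons b cs => exact ⟨b, h1 b (by simp), a, cs.flatten ++ e, by simp⟩

lemma mark_infix_of_length {k : ℕ} {w : List Bool} (hw : w ∈ factors (blocks (k + 1)))
    (h : 8 * blen (k + 1) < w.length) : mark k <:+: w := by
  obtain ⟨b, hb, hbw⟩ := exists_block_containing hw h
  obtain ⟨z, _, rfl, -⟩ := mem_blocks_succ.1 hb
  exact (List.infix_append_of_infix_right (List.infix_refl _)).trans hbw

/-- The word overwriting the end of each block of level `k + 1`. -/
lemma exists_tail (k : ℕ) : ∃ t : List Bool, t.length = tailNum k * blen k ∧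
    ∃ z ∈ concats (blocks k), t = z ++ mark k := by
  have h := mark_length_add_le k
  obtain ⟨z, hz, hzn⟩ := exists_mem_concats k (tailNum k * blen k - (mark k).length) (by omega)
  exact ⟨z ++ mark k, by simp; omega, z, hz, rfl⟩

/-- A factor of standard length can be corrected into a block by changing few letters. -/
lemma exists_block_near (k : ℕ) (w : List Bool) (hw : w ∈ factors (blocks k))
    (hlen : w.length = blen (k + 1)) :
    ∃ v ∈ blocks (k + 1), v.length = blen (k + 1) ∧ ∃ p q, p + q ≤ 10 * tailNum k * blen k ∧
      p + q ≤ blen (k + 1) ∧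
      ∀ i, p ≤ i → i + q < blen (k + 1) → v[i]? = w[i]? := by
  have h1 := mark_length_add_le k
  have h2 := tail_lt k
  have h3 := blen_pos k
  set s := tailNum k * blen k with hs
  set L := blen k
  have hsL : L ≤ s := by omega
  obtain ⟨w1, w2, w3, rfl, hw1, hw3⟩ :
      ∃ w1 w2 w3 : List Bool, w = w1 ++ (w2 ++ w3) ∧ w1.length = L ∧ w3.length = s := by
    refine ⟨w.take L, (w.drop L).take (w.length - L - s), (w.drop L).drop (w.length - L - s),
      by simp, by simp; omega, by simp; omega⟩
  obtain ⟨a, cs, e, hcs, rfl, ha, he⟩ := factors_split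
    (factors_of_isInfix hw ⟨w1, w3, by simp⟩ : w2 ∈ factors (blocks k))
  obtain ⟨A, hA, hAl⟩ := exists_mem_concats k (L + a.length) (by omega)
  obtain ⟨T, hT, hTl⟩ := exists_mem_concats k (e.length + s - (mark k).length) (by omega)
  have hl : (A ++ cs.flatten ++ T ++ mark k).length = blen (k + 1) := by
    rw [← hlen]
    simp
    omega
  refine ⟨A ++ cs.flatten ++ T ++ mark k, ?_, hl, L + a.length, e.length + s, ?_, ?_, ?_⟩
  · exact mem_blocks_succ.2 ⟨_, append_mem_concats (append_mem_concats hA ⟨cs, hcs, rfl⟩) hT,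
      rfl, by omega, by omega⟩
  · have : 10 * tailNum k * L = 10 * s := by rw [hs]; ring
    omega
  · simp at hlen
    omega
  · intro i hi hi'
    simp only [List.length_append] at hlen
    have e1 : A ++ cs.flatten ++ T ++ mark k = A ++ (cs.flatten ++ (T ++ mark k)) := by simp
    have e2 : w1 ++ (a ++ (cs.flatten ++ e) ++ w3) = (w1 ++ a) ++ (cs.flatten ++ (e ++ w3)) := by
      simp
    have e3 : i - A.length = i - (w1 ++ a).length := by
      rw [List.length_append]
      omega
    rw [e1, e2, List.getElem?_append_right (l₁ := A) (by omega),
      List.getElem?_append_right (l₁ := w1 ++ a) (by rw [List.length_append]; omega), ← e3,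
      List.getElem?_append_left (l₁ := cs.flatten) (l₂ := T ++ mark k) (by omega),
      List.getElem?_append_left (l₁ := cs.flatten) (l₂ := e ++ w3) (by omega)]

/-! ### Overwriting the ends of blocks -/

/-- The word written at the end of each block of level `k + 1` by `overwrite`. -/
noncomputable def tailWord (k : ℕ) : List Bool := (exists_tail k).choose

/-- The length of the part of a block of level `k + 1` that is not overwritten. -/
noncomputable def headLen (k : ℕ) : ℕ := blen (k + 1) - tailNum k * blen k

/-- Overwrite the end of each block of level `k + 1` with `tailWord k`. -/
noncomputable def overwrite (k : ℕ) (y : ℕ → Bool) : ℕ → Bool := fun i =>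
  if i % blen (k + 1) < headLen k then y i
  else (tailWord k).getD (i % blen (k + 1) - headLen k) false

/-- Apply `overwrite` at the levels `k, …, k + t - 1`. -/
noncomputable def overwrites (k : ℕ) : ℕ → (ℕ → Bool) → ℕ → Bool
  | 0, y => y
  | t + 1, y => overwrite (k + t) (overwrites k t y)

/-- Apply `overwrite` at all levels from `k` on. -/
noncomputable def shadow (k : ℕ) (y : ℕ → Bool) : ℕ → Bool := fun i => overwrites k i y i

/-- Positions affected by `overwrite` at some level from `k` on. -/
def overwritten (k : ℕ) : Set ℕ := {i | ∃ j, k ≤ j ∧ headLen j ≤ i % blen (j + 1)}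

/-- Sequences that are concatenations of blocks of level `k` of standard length. -/
def aligned (k : ℕ) : Set (ℕ → Bool) :=
  {y | ∀ g, wordAt y (g * blen k) (blen k) ∈ blocks k}

/-- The shift space of all sequences whose factors are factors of concatenations of blocks of
each level. -/
def hierShift : Set (ℕ → Bool) := {x | ∀ k i n, wordAt x i n ∈ factors (blocks k)}

lemma length_tailWord (k : ℕ) : (tailWord k).length = tailNum k * blen k :=
  (exists_tail k).choose_spec.1

lemma exists_tailWord_eq (k : ℕ) : ∃ z ∈ concats (blocks k), tailWord k = z ++ mark k :=
  (exists_tail k).choose_spec.2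

lemma headLen_eq (k : ℕ) : headLen k = tailNum k * blen k * (2 ^ (k + 10) - 1) := by
  rw [headLen, blen_succ, Nat.mul_sub]
  congr 1
  · ring
  · ring

lemma blen_succ_eq_add (k : ℕ) : blen (k + 1) = headLen k + tailNum k * blen k := by
  have := tail_lt k
  unfold headLen
  omega

lemma lt_headLen (k : ℕ) : k + 1 < headLen k := by
  have h1 : 0 < tailNum k * blen k := Nat.mul_pos (tailNum_pos k) (blen_pos k)
  have h2 : k + 10 < 2 ^ (k + 10) := Nat.lt_two_pow_self
  rw [headLen_eq]
  have h3 : 1 * (2 ^ (k + 10) - 1) ≤ tailNum k * blen k * (2 ^ (k + 10) - 1) :=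
    Nat.mul_le_mul_right _ h1
  omega

lemma wordAt_mul_mem_concats {k : ℕ} {y : ℕ → Bool} (hy : y ∈ aligned k) (g q : ℕ) :
    wordAt y (g * blen k) (q * blen k) ∈ concats (blocks k) := by
  induction q with
  | zero => simpa [wordAt] using nil_mem_concats _
  | succ q ih =>
    rw [Nat.succ_mul, wordAt_add, ← Nat.add_mul]
    exact append_mem_concats ih (mem_concats_of_mem (hy _))

lemma wordAt_mem_factors {k : ℕ} {y : ℕ → Bool} (hy : y ∈ aligned k) (i n : ℕ) :
    wordAt y i n ∈ factors (blocks k) := by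
  refine ⟨_, wordAt_mul_mem_concats hy 0 (i + n), ?_⟩
  rw [Nat.zero_mul]
  exact wordAt_isInfix y (Nat.le_mul_of_pos_right _ (blen_pos k))

lemma overwrite_of_lt {k i : ℕ} (y : ℕ → Bool) (h : i % blen (k + 1) < headLen k) :
    overwrite k y i = y i := if_pos h

lemma overwrite_mem {k : ℕ} {y : ℕ → Bool} (hy : y ∈ aligned k) :
    overwrite k y ∈ aligned (k + 1) := by
  intro g
  obtain ⟨z, hz, hzt⟩ := exists_tailWord_eq k
  have hL := blen_succ_eq_add k
  have hmod : ∀ i, i < blen (k + 1) → (g * blen (k + 1) + i) % blen (k + 1) = i := by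
    intro i hi
    rw [Nat.mul_add_mod_self_right, Nat.mod_eq_of_lt hi]
  have h1 : wordAt (overwrite k y) (g * blen (k + 1)) (headLen k) =
      wordAt y ((g * (tailNum k * 2 ^ (k + 10))) * blen k)
        ((tailNum k * (2 ^ (k + 10) - 1)) * blen k) := by
    have e1 : g * (tailNum k * 2 ^ (k + 10)) * blen k = g * blen (k + 1) := by
      rw [blen_succ]; ring
    have e2 : tailNum k * (2 ^ (k + 10) - 1) * blen k = headLen k := by
      rw [headLen_eq]; ring
    rw [e1, e2]
    apply wordAt_congr
    intro i hi
    exact overwrite_of_lt y (by rw [hmod i (by omega)]; exact hi)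
  have h2 : wordAt (overwrite k y) (g * blen (k + 1) + headLen k) (tailNum k * blen k) =
      tailWord k := by
    apply List.ext_getElem
    · rw [length_wordAt, length_tailWord]
    · intro i hi hi'
      rw [length_wordAt] at hi
      simp only [wordAt, List.getElem_ofFn, overwrite]
      rw [add_assoc, hmod _ (by omega), if_neg (by omega), Nat.add_sub_cancel_left]
      simp [hi']
  have h3 : wordAt (overwrite k y) (g * blen (k + 1)) (blen (k + 1)) =
      wordAt y ((g * (tailNum k * 2 ^ (k + 10))) * blen k)
        ((tailNum k * (2 ^ (k + 10) - 1)) * blen k) ++ z ++ mark k := by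
    conv_lhs => rw [hL, wordAt_add, ← hL, h1, h2, hzt]
    rw [List.append_assoc]
  refine mem_blocks_succ.2 ⟨_, append_mem_concats (wordAt_mul_mem_concats hy _ _) hz, h3, ?_, ?_⟩
  · rw [length_wordAt]
  · rw [length_wordAt]; omega

lemma overwrites_mem {k : ℕ} {y : ℕ → Bool} (hy : y ∈ aligned k) (t : ℕ) :
    overwrites k t y ∈ aligned (k + t) := by
  induction t with
  | zero => exact hy
  | succ t ih => exact overwrite_mem ih

lemma overwrites_eq {k t u i : ℕ} (y : ℕ → Bool) (htu : t ≤ u) (hi : i ∉ overwritten (k + t)) :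
    overwrites k u y i = overwrites k t y i := by
  induction u, htu using Nat.le_induction with
  | base => rfl
  | succ u hu ih =>
    rw [← ih]
    refine overwrite_of_lt _ ?_
    by_contra h
    exact hi ⟨k + u, by omega, not_lt.1 h⟩

lemma le_of_mem_overwritten {k i : ℕ} (h : i ∈ overwritten k) : k + 1 < i := by
  obtain ⟨j, hj, hi⟩ := h
  have h1 := lt_headLen j
  have h2 := Nat.mod_le i (blen (j + 1))
  omega

lemma shadow_eq_of_le {k t i : ℕ} (y : ℕ → Bool) (h : i ≤ t) :
    shadow k y i = overwrites k t y i := by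
  refine (overwrites_eq y h ?_).symm
  intro hi
  have := le_of_mem_overwritten hi
  omega

lemma shadow_eq {k t i : ℕ} (y : ℕ → Bool) (h : i ∉ overwritten (k + t)) :
    shadow k y i = overwrites k t y i := by
  rw [shadow_eq_of_le (t := i + t) y (by omega)]
  exact overwrites_eq y (by omega) h

lemma overwrites_congr {k t i : ℕ} {y y' : ℕ → Bool} (h : y i = y' i) :
    overwrites k t y i = overwrites k t y' i := by
  induction t with
  | zero => exact h
  | succ t ih =>
    simp only [overwrites, overwrite, ih]

lemma shadow_congr {k i : ℕ} {y y' : ℕ → Bool} (h : y i = y' i) :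
    shadow k y i = shadow k y' i := overwrites_congr h

lemma overwrites_const {k t i : ℕ} (h : ∃ j, k ≤ j ∧ j < k + t ∧ headLen j ≤ i % blen (j + 1))
    (y y' : ℕ → Bool) : overwrites k t y i = overwrites k t y' i := by
  induction t with
  | zero => obtain ⟨j, h1, h2, -⟩ := h; omega
  | succ t ih =>
    by_cases h' : headLen (k + t) ≤ i % blen (k + t + 1)
    · simp [overwrites, overwrite, not_lt.2 h']
    · have := ih (by
        obtain ⟨j, h1, h2, h3⟩ := h
        refine ⟨j, h1, ?_, h3⟩
        rcases Nat.lt_or_ge j (k + t) with h4 | h4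
        · exact h4
        · exact absurd (by rwa [show j = k + t by omega] at h3) h')
      simp [overwrites, overwrite, this]

lemma shadow_const {k i : ℕ} (h : i ∈ overwritten k) (y y' : ℕ → Bool) :
    shadow k y i = shadow k y' i := by
  obtain ⟨j, h1, h2⟩ := h
  rw [shadow_eq_of_le (t := i + j + 1) y (by omega), shadow_eq_of_le (t := i + j + 1) y' (by omega)]
  exact overwrites_const ⟨j, h1, by omega, h2⟩ y y'

lemma blen_dvd {j k : ℕ} (h : j ≤ k) : blen j ∣ blen k := by
  induction k, h using Nat.le_induction with
  | base => exact dvd_rfl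
  | succ k _ ih => exact ih.trans ⟨_, by rw [blen_succ, mul_comm]⟩

lemma overwrites_shift (k t g : ℕ) (y : ℕ → Bool) (i : ℕ) :
    overwrites k t (fun j => y (g * blen (k + t) + j)) i =
      overwrites k t y (g * blen (k + t) + i) := by
  suffices H : ∀ u ≤ t, overwrites k u (fun j => y (g * blen (k + t) + j)) i =
      overwrites k u y (g * blen (k + t) + i) from H t le_rfl
  intro u hu
  induction u with
  | zero => rfl
  | succ u ih =>
    have hd : (g * blen (k + t) + i) % blen (k + u + 1) = i % blen (k + u + 1) := by
      obtain ⟨c, hc⟩ := blen_dvd (show k + u + 1 ≤ k + t by omega)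
      rw [hc, show g * (blen (k + u + 1) * c) = (g * c) * blen (k + u + 1) by ring,
        Nat.mul_add_mod_self_right]
    simp only [overwrites, overwrite, hd, ih (by omega)]

lemma shadow_mem {k : ℕ} {y : ℕ → Bool} (hy : y ∈ aligned k) : shadow k y ∈ hierShift := by
  intro l i n
  have h : wordAt (shadow k y) i n = wordAt (overwrites k (i + n + l) y) i n :=
    wordAt_congr fun m hm => shadow_eq_of_le y (by omega)
  rw [h]
  exact factors_blocks_anti (by omega) (wordAt_mem_factors (overwrites_mem hy (i + n + l)) i n)

lemma aligned_zero (y : ℕ → Bool) : y ∈ aligned 0 := by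
  intro g
  refine ⟨?_, ?_⟩ <;> simp [blen_zero]

lemma count_residue_mul_le (s K : ℕ) (hs : 0 < s) (hK : 0 < K) (n : ℕ) :
    Nat.count (fun i => s * (K - 1) ≤ i % (s * K)) n * (K - 1) ≤ n := by
  have hsK : 0 < s * K := Nat.mul_pos hs hK
  have hsK' : s * K = s * (K - 1) + s := by
    obtain ⟨m, rfl⟩ := Nat.exists_eq_succ_of_ne_zero hK.ne'
    simp [Nat.mul_succ]
  have base : ∀ n ≤ s * K,
      Nat.count (fun i => s * (K - 1) ≤ i % (s * K)) n * (K - 1) ≤ n := by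
    intro n hn
    have hc : Nat.count (fun i => s * (K - 1) ≤ i % (s * K)) n ≤ n - s * (K - 1) := by
      rw [Nat.count_eq_card_filter_range]
      calc _ ≤ (Finset.Ico (s * (K - 1)) n).card := by
            apply Finset.card_le_card
            intro i hi
            simp only [Finset.mem_filter, Finset.mem_range] at hi
            rw [Nat.mod_eq_of_lt (by omega)] at hi
            exact Finset.mem_Ico.2 ⟨hi.2, hi.1⟩
        _ = _ := by simp
    rcases Nat.lt_or_ge n (s * (K - 1)) with h | h
    · rw [Nat.sub_eq_zero_of_le h.le] at hc
      simp [Nat.le_zero.1 hc]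
    · calc _ ≤ (n - s * (K - 1)) * (K - 1) := Nat.mul_le_mul_right _ hc
        _ ≤ s * (K - 1) := Nat.mul_le_mul_right _ (by omega)
        _ ≤ n := h
  induction n using Nat.strong_induction_on with
  | _ n ih =>
    rcases Nat.le_or_ge n (s * K) with h | h
    · exact base n h
    · obtain ⟨m, rfl⟩ := Nat.exists_eq_add_of_le h
      rw [Nat.count_add, add_mul]
      have h1 := base (s * K) le_rfl
      have h2 := ih m (by omega)
      simp only [Nat.add_mod_left]
      omega

open scoped Classical in
lemma card_overwritten_le (k n : ℕ) :
    (((Finset.range n).filter (fun i => i ∈ overwritten k)).card : ℝ) ≤ n / 2 ^ (k + 8) := by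
  have h1 : (Finset.range n).filter (fun i => i ∈ overwritten k) ⊆
      (Finset.range n).biUnion fun j =>
        (Finset.range n).filter fun i => headLen (k + j) ≤ i % blen (k + j + 1) := by
    intro i hi
    simp only [Finset.mem_filter, Finset.mem_range] at hi
    obtain ⟨hin, j, hj, hji⟩ := hi
    obtain ⟨d, rfl⟩ := Nat.exists_eq_add_of_le hj
    have h2 := lt_headLen (k + d)
    have h3 := Nat.mod_le i (blen (k + d + 1))
    simp only [Finset.mem_biUnion, Finset.mem_filter, Finset.mem_range]
    exact ⟨d, by omega, hin, hji⟩
  have h2 : ∀ j, (((Finset.range n).filter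
      fun i => headLen (k + j) ≤ i % blen (k + j + 1)).card : ℝ) ≤
      n / 2 ^ (k + 9) * (1 / 2) ^ j := by
    intro j
    have h := count_residue_mul_le (tailNum (k + j) * blen (k + j)) (2 ^ (k + j + 10))
      (Nat.mul_pos (tailNum_pos _) (blen_pos _)) (by positivity) n
    rw [Nat.count_eq_card_filter_range] at h
    have e1 : tailNum (k + j) * blen (k + j) * (2 ^ (k + j + 10) - 1) = headLen (k + j) :=
      (headLen_eq _).symm
    have e2 : tailNum (k + j) * blen (k + j) * 2 ^ (k + j + 10) = blen (k + j + 1) := by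
      rw [blen_succ]; ring
    rw [e1, e2] at h
    have h3 : 2 ^ (k + j + 9) ≤ 2 ^ (k + j + 10) - 1 := by
      have : 2 ^ (k + j + 10) = 2 ^ (k + j + 9) * 2 := by ring
      have : 0 < 2 ^ (k + j + 9) := by positivity
      omega
    have h4 : _ * 2 ^ (k + j + 9) ≤ n := (Nat.mul_le_mul_left _ h3).trans h
    have h5 : (n : ℝ) / 2 ^ (k + 9) * (1 / 2) ^ j = n / 2 ^ (k + j + 9) := by
      rw [one_div, inv_pow]
      field_simp
      ring
    rw [h5, le_div_iff₀ (by positivity)]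
    exact_mod_cast h4
  calc (((Finset.range n).filter (fun i => i ∈ overwritten k)).card : ℝ)
      ≤ ∑ j ∈ Finset.range n, (((Finset.range n).filter
        fun i => headLen (k + j) ≤ i % blen (k + j + 1)).card : ℝ) := by
        exact_mod_cast (Finset.card_le_card h1).trans Finset.card_biUnion_le
    _ ≤ ∑ j ∈ Finset.range n, n / 2 ^ (k + 9) * (1 / 2 : ℝ) ^ j :=
        Finset.sum_le_sum fun j _ => h2 j
    _ = n / 2 ^ (k + 9) * ∑ j ∈ Finset.range n, (1 / 2 : ℝ) ^ j := by rw [Finset.mul_sum]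
    _ ≤ n / 2 ^ (k + 9) * 2 := by
        gcongr
        exact sum_geometric_two_le n
    _ = n / 2 ^ (k + 8) := by
        rw [show k + 9 = (k + 8) + 1 by ring, pow_succ]
        field_simp

/-! ### Topological dynamics of the shift space -/

lemma blen_strictMono : StrictMono blen := by
  refine strictMono_nat_of_lt_succ fun k => ?_
  have h := tail_lt k
  have h1 := tailNum_pos k
  have h2 := blen_pos k
  nlinarith

lemma mem_factors_of_mem_lang {w : List Bool} (hw : w ∈ lang hierShift) (k : ℕ) :
    w ∈ factors (blocks k) := by
  obtain ⟨x, hx, i, hi⟩ := hw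
  change w = wordAt x i w.length at hi
  rw [hi]
  exact hx k i _

lemma isClosed_hierShift : IsClosed hierShift := by
  have h : hierShift = ⋂ (k : ℕ) (i : ℕ) (n : ℕ),
      (fun (x : ℕ → Bool) (j : Fin n) => x (i + j)) ⁻¹'
        {v | List.ofFn v ∈ factors (blocks k)} := by
    ext x
    simp [hierShift, wordAt]
  rw [h]
  refine isClosed_iInter fun k => isClosed_iInter fun i => isClosed_iInter fun n => ?_
  exact (isClosed_discrete _).preimage (continuous_pi fun j => continuous_apply _)

lemma shift_iterate (x : ℕ → Bool) (i j : ℕ) : shift^[i] x j = x (i + j) := by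
  induction i generalizing x with
  | zero => simp
  | succ i ih =>
    rw [Function.iterate_succ_apply, ih]
    simp only [shift]
    congr 1
    ring

lemma shift_mem_hierShift {x : ℕ → Bool} (hx : x ∈ hierShift) : shift x ∈ hierShift := by
  intro k i n
  rw [wordAt_congr (y := x) (j := i + 1) (fun m _ => by simp only [shift]; congr 1; ring)]
  exact hx k (i + 1) n

lemma shiftSpace_hierShift : ShiftSpace hierShift :=
  ⟨⟨_, shadow_mem (aligned_zero fun _ => false)⟩, isClosed_hierShift,
    fun _ hx => shift_mem_hierShift hx⟩

lemma mark_occursIn {x : ℕ → Bool} (hx : x ∈ hierShift) (k : ℕ) : occursIn (mark k) x := by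
  have h := mark_infix_of_length (hx (k + 1) 0 (8 * blen (k + 1) + 1)) (by simp)
  exact exists_wordAt_of_isInfix h

lemma occursIn_of_infix_mark {x : ℕ → Bool} (hx : x ∈ hierShift) {k : ℕ} {w : List Bool}
    (hw : w <:+: mark k) : occursIn w x := by
  obtain ⟨i, hi⟩ := mark_occursIn hx k
  change mark k = wordAt x i (mark k).length at hi
  rw [hi] at hw
  exact exists_wordAt_of_isInfix hw

lemma mem_lang_of_infix_mark {k : ℕ} {w : List Bool} (hw : w <:+: mark k) :
    w ∈ lang hierShift := by
  obtain ⟨x, hx⟩ := shiftSpace_hierShift.1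
  exact ⟨x, hx, occursIn_of_infix_mark hx hw⟩

lemma infix_mark_of_mem_lang {w : List Bool} (hw : w ∈ lang hierShift) {k : ℕ}
    (hk : w.length ≤ k) : w <:+: mark k :=
  infix_mark (mem_factors_of_mem_lang hw k) (by omega)

lemma minimalShift_hierShift : MinimalShift hierShift := by
  refine ⟨shiftSpace_hierShift, fun Y hY hYX => hYX.antisymm fun x hx => ?_⟩
  obtain ⟨⟨y, hy⟩, hcl, hinv⟩ := hY
  have hit : ∀ i, shift^[i] y ∈ Y := by
    intro i
    induction i with
    | zero => exact hy
    | succ i ih => rw [Function.iterate_succ_apply']; exact hinv _ ih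
  have hocc : ∀ n, ∃ i, ∀ k < n, x k = y (i + k) := by
    intro n
    have h1 : wordAt x 0 n ∈ lang hierShift := ⟨x, hx, 0, by
      change wordAt x 0 n = wordAt x 0 _; simp⟩
    obtain ⟨i, hi⟩ := occursIn_of_infix_mark (hYX hy) (infix_mark_of_mem_lang h1 le_rfl)
    change wordAt x 0 n = wordAt y i _ at hi
    rw [length_wordAt] at hi
    exact ⟨i, fun k hk => by simpa using wordAt_inj hi k hk⟩
  choose i hi using hocc
  refine hcl.mem_of_tendsto (f := fun n => shift^[i n] y) (b := atTop) ?_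
    (Eventually.of_forall fun n => hit _)
  rw [tendsto_pi_nhds]
  intro k
  refine tendsto_const_nhds.congr' ?_
  filter_upwards [eventually_gt_atTop k] with n hn
  rw [shift_iterate]
  exact hi n k hn

lemma mark_suffix_succ (k : ℕ) : mark k <:+ mark (k + 1) := by
  obtain ⟨bs, hbs, hm⟩ := mark_mem (k + 1)
  have hne : bs ≠ [] := by
    rintro rfl
    obtain ⟨b, hb, hbn⟩ := exists_mem_blocks (k + 1) (blen (k + 1)) le_rfl (by omega)
    have h := (infix_mark ⟨b, mem_concats_of_mem hb, List.infix_refl b⟩ (by omega)).length_le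
    have := blen_pos (k + 1)
    rw [hm] at h
    simp only [List.flatten_nil, List.length_nil] at h
    omega
  have hl := List.dropLast_append_getLast hne
  obtain ⟨z, -, hz, -⟩ := mem_blocks_succ.1 (hbs _ (List.getLast_mem hne))
  rw [hm, ← hl, List.flatten_append]
  exact ⟨bs.dropLast.flatten ++ z, by simp [hz]⟩

lemma mark_suffix {j k : ℕ} (h : j ≤ k) : mark j <:+ mark k := by
  induction k, h using Nat.le_induction with
  | base => exact List.suffix_refl _
  | succ k _ ih => exact ih.trans (mark_suffix_succ k)

lemma exists_block_starting {j k : ℕ} (h : j ≤ k) {b : List Bool} (hb : b ∈ blocks j) :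
    ∃ b' ∈ blocks k, b <+: b' := by
  induction k, h using Nat.le_induction with
  | base => exact ⟨b, hb, List.prefix_refl _⟩
  | succ k _ ih =>
    obtain ⟨b', hb', hbb⟩ := ih
    obtain ⟨z, hz, hzn⟩ := exists_mem_concats k (blen (k + 1)) (blen_strictMono (Nat.lt_succ_self k)).le
    have h1 := (length_of_mem_blocks hb').2
    have h2 := mark_length_add_le k
    have h3 := tail_lt k
    refine ⟨b' ++ z ++ mark k, mem_blocks_succ.2 ⟨_, append_mem_concats (mem_concats_of_mem hb') hz,
      rfl, ?_, ?_⟩, hbb.trans ⟨z ++ mark k, by simp⟩⟩ <;> simp only [List.length_append] <;> omega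

lemma exists_blen_bracket {j n : ℕ} (h : blen j ≤ n) :
    ∃ k, j ≤ k ∧ blen k ≤ n ∧ n < blen (k + 1) := by
  have hex : ∃ k, n < blen (k + 1) := ⟨n, (blen_strictMono.id_le n).trans_lt
    (blen_strictMono (Nat.lt_succ_self n))⟩
  classical
  refine ⟨Nat.find hex, ?_, ?_, Nat.find_spec hex⟩
  · have := blen_strictMono.lt_iff_lt.1 (h.trans_lt (Nat.find_spec hex))
    omega
  · rcases Nat.eq_zero_or_pos (Nat.find hex) with h0 | h0
    · rw [h0]
      exact (blen_strictMono.monotone (Nat.zero_le j)).trans h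
    · have := Nat.find_min hex (m := Nat.find hex - 1) (by omega)
      rw [Nat.sub_add_cancel h0] at this
      omega

lemma mixingShift_hierShift : MixingShift hierShift := by
  intro u hu w hw
  set j := max u.length w.length with hj
  obtain ⟨c, d, hd⟩ := infix_mark_of_mem_lang hu (le_max_left u.length w.length)
  have hwm := infix_mark_of_mem_lang hw (le_max_right u.length w.length)
  obtain ⟨b0, hb0, -⟩ := exists_mem_blocks (j + 1) (blen (j + 1)) le_rfl (by omega)
  have hwb : w <:+: b0 := by
    obtain ⟨z, -, rfl, -⟩ := mem_blocks_succ.1 hb0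
    exact List.infix_append_of_infix_right hwm
  obtain ⟨p, r, hp⟩ := hwb
  refine ⟨d.length + p.length + blen (j + 1), fun m hm => ?_⟩
  obtain ⟨k, hk1, hk2, hk3⟩ := exists_blen_bracket (j := j + 1) (n := m - d.length - p.length)
    (by omega)
  obtain ⟨b, hb, s, hs⟩ := exists_block_starting hk1 hb0
  obtain ⟨e, he⟩ := mark_suffix (show j ≤ k by omega)
  obtain ⟨T, hT, hTn⟩ := exists_mem_concats k _ hk2
  obtain ⟨T0, hT0, hT0n⟩ := exists_mem_concats k (blen (k + 1))
    (blen_strictMono (Nat.lt_succ_self k)).le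
  have h1 := (length_of_mem_blocks hb).2
  have h2 := mark_length_add_le k
  have h3 := tail_lt k
  have hblock : T0 ++ mark k ++ T ++ b ++ mark k ∈ blocks (k + 1) := by
    refine mem_blocks_succ.2 ⟨_, append_mem_concats (append_mem_concats (append_mem_concats hT0
      (mark_mem k)) hT) (mem_concats_of_mem hb), rfl, ?_, ?_⟩ <;>
      simp only [List.length_append] <;> omega
  refine ⟨d ++ T ++ p, by simp only [List.length_append]; omega, ?_⟩
  have hin := infix_mark (k := k + 1) ⟨_, mem_concats_of_mem hblock, List.infix_refl _⟩
    (by have := (length_of_mem_blocks hblock).2; omega)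
  refine mem_lang_of_infix_mark (k := k + 1) (List.IsInfix.trans ?_ hin)
  refine ⟨T0 ++ e ++ c, r ++ s ++ mark k, ?_⟩
  rw [← hs, ← hp]
  nth_rewrite 2 [← he]
  rw [← hd]
  simp

lemma finite_langN (n : ℕ) (X : Set (ℕ → Bool)) : (langN n X).Finite :=
  (List.finite_length_eq Bool n).subset fun _ hw => hw.2

lemma card_langN_le (n : ℕ) (X : Set (ℕ → Bool)) : Nat.card (langN n X) ≤ 2 ^ n := by
  let f : langN n X → List.Vector Bool n := fun w => ⟨w.1, w.2.2⟩
  have hf : Function.Injective f := fun a b hab =>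
    Subtype.ext (congrArg List.Vector.toList hab)
  have := Nat.card_le_card_of_injective f hf
  rwa [Nat.card_eq_fintype_card (α := List.Vector Bool n), card_vector,
    Fintype.card_bool] at this

open scoped Classical in
lemma two_pow_le_card_langN (n : ℕ) :
    2 ^ ((Finset.range n).filter (fun i => i ∉ overwritten 0)).card ≤
      Nat.card (langN n hierShift) := by
  set S := (Finset.range n).filter (fun i => i ∉ overwritten 0) with hS
  have hfin : Finite (langN n hierShift) := finite_langN n hierShift
  let ext : (S → Bool) → ℕ → Bool := fun f i => if h : i ∈ S then f ⟨i, h⟩ else false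
  let F : (S → Bool) → langN n hierShift := fun f =>
    ⟨wordAt (shadow 0 (ext f)) 0 n, ⟨_, shadow_mem (aligned_zero (ext f)), 0, by
      change wordAt _ 0 n = wordAt _ 0 _; simp⟩, by simp⟩
  have hF : Function.Injective F := by
    intro f g hfg
    funext ⟨i, hi⟩
    have hi' := hi
    rw [hS, Finset.mem_filter, Finset.mem_range] at hi'
    have h := wordAt_inj (congrArg Subtype.val hfg) i hi'.1
    have e : ∀ y, shadow 0 y i = y i := fun y => shadow_eq (k := 0) (t := 0) y hi'.2
    rw [Nat.zero_add, e, e] at h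
    simpa [ext, hi] using h
  have := Nat.card_le_card_of_injective F hF
  simpa using this

open scoped Classical in
lemma half_le_card (n : ℕ) :
    (n : ℝ) / 2 ≤ ((Finset.range n).filter (fun i => i ∉ overwritten 0)).card := by
  have h1 := card_overwritten_le 0 n
  have h2 : ((Finset.range n).filter (fun i => i ∈ overwritten 0)).card +
      ((Finset.range n).filter (fun i => i ∉ overwritten 0)).card = n := by
    rw [Finset.card_filter_add_card_filter_not, Finset.card_range]
  have h3 : (((Finset.range n).filter (fun i => i ∈ overwritten 0)).card : ℝ) +
      ((Finset.range n).filter (fun i => i ∉ overwritten 0)).card = n := by exact_mod_cast h2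
  have h4 : (0 : ℝ) ≤ n := Nat.cast_nonneg n
  norm_num at h1
  linarith

lemma topEntropy_hierShift_pos : 0 < topEntropy hierShift := by
  have hlog : 0 < Real.log 2 := Real.log_pos one_lt_two
  have hcard : ∀ n, 0 < Nat.card (langN n hierShift) := fun n =>
    lt_of_lt_of_le (by positivity) (two_pow_le_card_langN n)
  have hle : ∀ n : ℕ, Real.log (Nat.card (langN n hierShift)) / (n : ℝ) ≤ Real.log 2 := by
    intro n
    refine div_le_of_le_mul₀ (Nat.cast_nonneg n) hlog.le ?_
    have h : (Nat.card (langN n hierShift) : ℝ) ≤ 2 ^ n := by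
      exact_mod_cast card_langN_le n hierShift
    calc Real.log (Nat.card (langN n hierShift)) ≤ Real.log (2 ^ n) :=
          Real.log_le_log (by exact_mod_cast hcard n) h
      _ = Real.log 2 * n := by rw [Real.log_pow]; ring
  have hge : ∀ n : ℕ, 0 < n →
      Real.log 2 / 2 ≤ Real.log (Nat.card (langN n hierShift)) / (n : ℝ) := by
    intro n hn
    classical
    have hn' : (0 : ℝ) < n := by exact_mod_cast hn
    rw [le_div_iff₀ hn']
    have h : (2 : ℝ) ^ ((Finset.range n).filter (fun i => i ∉ overwritten 0)).card ≤
        Nat.card (langN n hierShift) := by exact_mod_cast two_pow_le_card_langN n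
    have h1 := Real.log_le_log (by positivity) h
    rw [Real.log_pow] at h1
    have h2 := half_le_card n
    nlinarith
  have : Real.log 2 / 2 ≤ topEntropy hierShift := by
    refine le_limsup_of_frequently_le ?_ (isBoundedUnder_of ⟨Real.log 2, hle⟩)
    refine (Eventually.frequently ?_)
    filter_upwards [eventually_gt_atTop 0] with n hn using hge n hn
  linarith

/-! ### The shadowing property -/

instance neZero_blen (k : ℕ) : NeZero (blen k) := ⟨(blen_pos k).ne'⟩

/-- The concatenation of a sequence of words of length `n`. -/
def unblock (n : ℕ) [NeZero n] {α : Type*} (ω : ℕ → Fin n → α) : ℕ → α :=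
  fun i => ω (i / n) (Fin.ofNat n i)

lemma unblock_mul_add {n : ℕ} [NeZero n] {α : Type*} (ω : ℕ → Fin n → α) (g : ℕ) (j : Fin n) :
    unblock n ω (g * n + j) = ω g j := by
  have hn : 0 < n := Nat.pos_of_ne_zero (NeZero.ne n)
  have h1 : (g * n + j) / n = g := by
    rw [mul_comm, Nat.mul_add_div hn, Nat.div_eq_of_lt j.2, add_zero]
  have h2 : Fin.ofNat n (g * n + j) = j := by
    ext
    simp [Fin.ofNat, Nat.mod_eq_of_lt j.2]
  rw [unblock, h1, h2]

lemma unblock_mem_aligned {k : ℕ} {ω : ℕ → Fin (blen k) → Bool}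
    (h : ∀ g, List.ofFn (ω g) ∈ blocks k) : unblock (blen k) ω ∈ aligned k := by
  intro g
  have e : wordAt (unblock (blen k) ω) (g * blen k) (blen k) = List.ofFn (ω g) := by
    unfold wordAt
    congr 1
    funext j
    exact unblock_mul_add ω g j
  rw [e]
  exact h g

lemma exists_blockCode (k : ℕ) :
    ∃ ψ : (Fin (blen (k + 1)) → Bool) → Fin (blen (k + 1)) → Bool,
      (∀ v, List.ofFn (ψ v) ∈ blocks (k + 1)) ∧
      ∀ v, List.ofFn v ∈ lang hierShift →
        ((Finset.univ.filter fun i => v i ≠ ψ v i).card : ℝ) ≤ blen (k + 1) / 2 ^ (k + 6) := by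
  suffices H : ∀ v : Fin (blen (k + 1)) → Bool, ∃ u : Fin (blen (k + 1)) → Bool,
      List.ofFn u ∈ blocks (k + 1) ∧ (List.ofFn v ∈ lang hierShift →
        ((Finset.univ.filter fun i => v i ≠ u i).card : ℝ) ≤ blen (k + 1) / 2 ^ (k + 6)) by
    choose ψ h1 h2 using H
    exact ⟨ψ, h1, h2⟩
  intro v
  have hlist : ∀ b : List Bool, b.length = blen (k + 1) →
      ∃ u : Fin (blen (k + 1)) → Bool, List.ofFn u = b := by
    intro b hb
    refine ⟨fun i => b.get (i.cast hb.symm), ?_⟩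
    apply List.ext_getElem (by simp [hb])
    intro i h1 h2
    simp
  by_cases hv : List.ofFn v ∈ lang hierShift
  · obtain ⟨b, hb, hbn, p, q, hpq, hpq', hi⟩ :=
      exists_block_near k _ (mem_factors_of_mem_lang hv k) (by simp)
    obtain ⟨u, rfl⟩ := hlist b hbn
    refine ⟨u, hb, fun _ => ?_⟩
    have hsub : ((Finset.univ.filter fun i => v i ≠ u i).map Fin.valEmbedding) ⊆
        Finset.range p ∪ Finset.Ico (blen (k + 1) - q) (blen (k + 1)) := by
      intro i hi'
      simp only [Finset.mem_map, Finset.mem_filter, Finset.mem_univ, true_and,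
        Fin.valEmbedding_apply] at hi'
      obtain ⟨i, hne, rfl⟩ := hi'
      simp only [Finset.mem_union, Finset.mem_range, Finset.mem_Ico]
      by_contra hcon
      have h := hi i (by omega) (by omega)
      simp at h
      exact hne h.symm
    have hc := Finset.card_le_card hsub
    rw [Finset.card_map] at hc
    have hc2 := hc.trans (Finset.card_union_le _ _)
    rw [Finset.card_range, Nat.card_Ico] at hc2
    have hc3 : (Finset.univ.filter fun i => v i ≠ u i).card ≤ 10 * tailNum k * blen k := by omega
    rw [le_div_iff₀ (by positivity)]
    have e : blen (k + 1) = 16 * 2 ^ (k + 6) * (tailNum k * blen k) := by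
      rw [blen_succ]; ring
    have hc4 : (Finset.univ.filter fun i => v i ≠ u i).card * 2 ^ (k + 6) ≤ blen (k + 1) := by
      calc _ ≤ (10 * tailNum k * blen k) * 2 ^ (k + 6) := Nat.mul_le_mul_right _ hc3
        _ = 10 * (2 ^ (k + 6) * (tailNum k * blen k)) := by ring
        _ ≤ 16 * (2 ^ (k + 6) * (tailNum k * blen k)) := by gcongr; norm_num
        _ = _ := by rw [e]; ring
    exact_mod_cast hc4
  · obtain ⟨b, hb, hbn⟩ := exists_mem_blocks (k + 1) (blen (k + 1)) le_rfl (by omega)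
    obtain ⟨u, rfl⟩ := hlist b hbn
    exact ⟨u, hb, fun h => absurd h hv⟩

lemma flatten_ofFn_getD (w : ℕ → List Bool) (M j i : ℕ) (hj : j < M) (hi : i < (w j).length) :
    (List.ofFn (fun i : Fin M => w (i : ℕ))).flatten.length = ∑ l ∈ Finset.range M, (w l).length ∧
    (List.ofFn (fun i : Fin M => w (i : ℕ))).flatten.getD
      (∑ l ∈ Finset.range j, (w l).length + i) default = (w j).getD i default := by
  have hlen : ∀ M, (List.ofFn (fun i : Fin M => w (i : ℕ))).flatten.length =
      ∑ l ∈ Finset.range M, (w l).length := by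
    intro M
    rw [List.length_flatten, List.map_ofFn, List.sum_ofFn, Finset.sum_range]
    rfl
  refine ⟨hlen M, ?_⟩
  induction M, hj using Nat.le_induction with
  | base =>
    rw [List.ofFn_succ', List.concat_eq_append, List.flatten_append, List.getD_append_right]
    · simp only [Fin.val_castSucc, hlen, List.flatten_singleton, Fin.val_last]
      rw [Nat.add_sub_cancel_left]
    · simp [hlen]
  | succ M hM ih =>
    rw [List.ofFn_succ', List.concat_eq_append, List.flatten_append, List.getD_append]
    · exact ih
    · simp only [Fin.val_castSucc, hlen]
      have : ∑ l ∈ Finset.range (j + 1), (w l).length ≤ ∑ l ∈ Finset.range M, (w l).length :=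
        Finset.sum_le_sum_of_subset (Finset.range_subset_range.2 hM)
      rw [Finset.sum_range_succ] at this
      omega

lemma concatSeq_apply (w : ℕ → List Bool) (hw : ∀ j, 0 < (w j).length) (j i : ℕ)
    (hi : i < (w j).length) :
    concatSeq w (∑ l ∈ Finset.range j, (w l).length + i) = (w j).getD i default := by
  refine (flatten_ofFn_getD w _ j i ?_ hi).2
  have : ∑ l ∈ Finset.range j, 1 ≤ ∑ l ∈ Finset.range j, (w l).length :=
    Finset.sum_le_sum fun l _ => hw l
  simp at this
  omega

lemma wordAt_concatSeq_isInfix (w : ℕ → List Bool) (hw : ∀ j, 0 < (w j).length) (j i n : ℕ)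
    (hi : i + n ≤ (w j).length) :
    wordAt (concatSeq w) (∑ l ∈ Finset.range j, (w l).length + i) n <:+: w j := by
  have h : wordAt (concatSeq w) (∑ l ∈ Finset.range j, (w l).length + i) n =
      ((w j).drop i).take n := by
    apply List.ext_getElem
    · simp; omega
    · intro m h1 h2
      simp only [length_wordAt] at h1
      have h3 : i + m < (w j).length := by omega
      simp only [wordAt, List.getElem_ofFn, List.getElem_take, List.getElem_drop]
      rw [add_assoc, concatSeq_apply w hw j (i + m) h3, List.getD_eq_getElem _ _ h3]
  rw [h]
  exact (List.take_prefix _ _).isInfix.trans (List.drop_suffix _ _).isInfix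

open scoped Classical in
lemma card_bad_le (w : ℕ → List Bool) (hw : ∀ j, w j ∈ lang hierShift) (n K : ℕ) (hn : 0 < n)
    (hK : 0 < K) (hN : ∀ j, n * K ≤ (w j).length) (G : ℕ) :
    ((Finset.range G).filter fun g => wordAt (concatSeq w) (g * n) n ∉ lang hierShift).card ≤
      G / K + 1 := by
  set P : ℕ → ℕ := fun j => ∑ l ∈ Finset.range j, (w l).length with hP
  have hpos : ∀ j, 0 < (w j).length := fun j => (Nat.mul_pos hn hK).trans_le (hN j)
  have hPs : ∀ j, P (j + 1) = P j + (w j).length := fun j => Finset.sum_range_succ _ _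
  have hPmono : StrictMono P := strictMono_nat_of_lt_succ fun j => by
    rw [hPs]; have := hpos j; omega
  have hPge : ∀ j, j * (n * K) ≤ P j := by
    intro j
    induction j with
    | zero => simp
    | succ j ih => rw [hPs, Nat.succ_mul]; have := hN j; omega
  have hbad : ∀ g, wordAt (concatSeq w) (g * n) n ∉ lang hierShift →
      ∃ j, g * n < P j ∧ P j < g * n + n := by
    intro g hg
    have hex : ∃ j, g * n < P j := ⟨g * n + 1, hPmono.id_le (g * n + 1)⟩
    refine ⟨Nat.find hex, Nat.find_spec hex, ?_⟩
    by_contra hcon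
    have h0 : Nat.find hex ≠ 0 := by
      intro h0
      have := Nat.find_spec hex
      rw [h0] at this
      simp [hP] at this
    obtain ⟨j, hj⟩ := Nat.exists_eq_succ_of_ne_zero h0
    have h1 : P j ≤ g * n := by
      have := Nat.find_min hex (m := j) (by omega)
      omega
    rw [hj, Nat.succ_eq_add_one, hPs] at hcon
    apply hg
    refine mem_lang_of_isInfix (hw j) ?_
    have := wordAt_concatSeq_isInfix w hpos j (g * n - P j) n (by omega)
    rwa [show ∑ l ∈ Finset.range j, (w l).length = P j from rfl, Nat.add_sub_cancel' h1] at this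
  choose! J hJ1 hJ2 using hbad
  have hcard : ((Finset.range G).filter fun g =>
      wordAt (concatSeq w) (g * n) n ∉ lang hierShift).card ≤ (Finset.range (G / K + 1)).card := by
    refine Finset.card_le_card_of_injOn J ?_ ?_
    · intro g hg
      simp only [Finset.coe_filter, Finset.mem_range, Set.mem_ofPred_eq] at hg
      have h1 := hJ2 g hg.2
      have h2 := hPge (J g)
      have h3 : J g * K * n < G * n := by
        calc J g * K * n = J g * (n * K) := by ring
          _ < (g + 1) * n := by rw [Nat.succ_mul]; omega
          _ ≤ G * n := Nat.mul_le_mul_right _ hg.1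
      have h4 := Nat.lt_of_mul_lt_mul_right h3
      simp only [Finset.coe_range, Set.mem_Iio]
      exact Nat.lt_succ_of_le ((Nat.le_div_iff_mul_le hK).2 h4.le)
    · intro g hg g' hg' hgg
      simp only [Finset.coe_filter, Finset.mem_range, Set.mem_ofPred_eq] at hg hg'
      have a1 := hJ1 g hg.2
      have a2 := hJ2 g hg.2
      have b1 := hJ1 g' hg'.2
      have b2 := hJ2 g' hg'.2
      rw [hgg] at a1 a2
      by_contra hne
      rcases Nat.lt_or_gt_of_ne hne with h | h
      · have := Nat.mul_le_mul_right n h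
        rw [Nat.succ_mul] at this
        omega
      · have := Nat.mul_le_mul_right n h
        rw [Nat.succ_mul] at this
        omega
  simpa using hcard

lemma card_filter_range_mul (n G : ℕ) (p : ℕ → Prop) [DecidablePred p] :
    ((Finset.range (G * n)).filter p).card =
      ∑ g ∈ Finset.range G, (Finset.univ.filter fun j : Fin n => p (g * n + j)).card := by
  induction G with
  | zero => simp
  | succ G ih =>
    rw [Finset.sum_range_succ, ← ih, Nat.succ_mul]
    simp only [Finset.card_filter]
    rw [Finset.sum_range_add, Finset.sum_range fun x => if p (G * n + x) then 1 else 0]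

lemma dbarShadowing_hierShift : DbarShadowing hierShift := by
  classical
  intro ε hε
  obtain ⟨k, hk⟩ : ∃ k : ℕ, 5 / (2 : ℝ) ^ (k + 6) < ε := by
    obtain ⟨k, hk⟩ := exists_pow_lt_of_lt_one (show 0 < ε / 5 by positivity)
      (show (1 / 2 : ℝ) < 1 by norm_num)
    refine ⟨k, ?_⟩
    have h1 : (1 : ℝ) / 2 ^ (k + 6) ≤ (1 / 2) ^ k := by
      rw [one_div_pow]
      exact one_div_le_one_div_of_le (by positivity)
        (pow_le_pow_right₀ (by norm_num) (by omega))
    have h2 : (5 : ℝ) / 2 ^ (k + 6) = 5 * (1 / 2 ^ (k + 6)) := by ring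
    rw [h2]
    linarith
  set n := blen (k + 1) with hn
  have hn0 : 0 < n := blen_pos _
  set K := 2 ^ (k + 6) with hK
  have hK0 : 0 < K := by positivity
  refine ⟨n * K, Nat.mul_pos hn0 hK0, fun w hw hN => ?_⟩
  obtain ⟨ψ, hψ1, hψ2⟩ := exists_blockCode k
  set x := concatSeq w with hx
  set ω : ℕ → Fin (blen (k + 1)) → Bool := fun g => ψ fun j => x (g * blen (k + 1) + j) with hω
  set y := unblock (blen (k + 1)) ω with hy
  have hyal : y ∈ aligned (k + 1) := unblock_mem_aligned fun g => hψ1 _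
  refine ⟨shadow (k + 1) y, shadow_mem hyal, lt_of_le_of_lt ?_ hk⟩
  have hnR : (0 : ℝ) < n := by exact_mod_cast hn0
  have hKR : (0 : ℝ) < K := by exact_mod_cast hK0
  have hblock : ∀ G : ℕ, (((Finset.range (G * n)).filter fun i => x i ≠ y i).card : ℝ) ≤
      2 * G * n / K + n := by
    intro G
    rw [card_filter_range_mul]
    have hterm : ∀ g, ((Finset.univ.filter fun j : Fin n => x (g * n + j) ≠ y (g * n + j)).card : ℝ)
        ≤ n / K + n * (if wordAt x (g * n) n ∉ lang hierShift then 1 else 0) := by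
      intro g
      have e : ∀ j : Fin n, y (g * n + j) = ψ (fun j => x (g * n + j)) j :=
        fun j => unblock_mul_add ω g j
      simp only [e]
      split_ifs with hb
      · have h1 := hψ2 (fun j => x (g * n + j)) hb
        simpa [hK] using h1
      · have h1 : ((Finset.univ.filter fun j : Fin n =>
            x (g * n + j) ≠ ψ (fun j => x (g * n + j)) j).card : ℝ) ≤ n := by
          exact_mod_cast (Finset.card_filter_le _ _).trans (by simp)
        have : 0 ≤ (n : ℝ) / K := by positivity
        linarith
    push_cast
    refine (Finset.sum_le_sum fun g _ => hterm g).trans ?_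
    rw [Finset.sum_add_distrib, ← Finset.mul_sum, Finset.sum_boole]
    have hc : ((((Finset.range G).filter fun g => wordAt x (g * n) n ∉ lang hierShift).card : ℕ) : ℝ)
        ≤ G / K + 1 := by
      have h1 := card_bad_le w hw n K hn0 hK0 hN G
      have h2 : ((G / K : ℕ) : ℝ) ≤ (G : ℝ) / K := Nat.cast_div_le
      have h3 : ((((Finset.range G).filter fun g => wordAt x (g * n) n ∉ lang hierShift).card : ℕ) : ℝ)
        ≤ ((G / K : ℕ) : ℝ) + 1 := by exact_mod_cast h1
      linarith
    have := mul_le_mul_of_nonneg_left hc hnR.le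
    simp only [Finset.sum_const, Finset.card_range, nsmul_eq_mul]
    calc _ ≤ (G : ℝ) * (n / K) + n * (G / K + 1) := by gcongr
      _ = _ := by ring
  have hcount : ∀ m : ℕ, (((Finset.range m).filter fun j => x j ≠ shadow (k + 1) y j).card : ℝ) ≤
      2 * (m + n) / K + n + m / K := by
    intro m
    have hsub : ((Finset.range m).filter fun j => x j ≠ shadow (k + 1) y j) ⊆
        ((Finset.range ((m / n + 1) * n)).filter fun i => x i ≠ y i) ∪
        (Finset.range m).filter fun i => i ∈ overwritten (k + 1) := by
      intro i hi
      simp only [Finset.mem_filter, Finset.mem_range, Finset.mem_union] at hi ⊢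
      by_cases ho : i ∈ overwritten (k + 1)
      · exact Or.inr ⟨hi.1, ho⟩
      · refine Or.inl ⟨?_, ?_⟩
        · have := Nat.lt_div_mul_add (a := m) hn0
          rw [Nat.succ_mul]
          omega
        · have := shadow_eq (k := k + 1) (t := 0) y ho
          rw [this] at hi
          exact hi.2
    have h1 := hblock (m / n + 1)
    have h2 := card_overwritten_le (k + 1) m
    have h3 : (((Finset.range m).filter fun j => x j ≠ shadow (k + 1) y j).card : ℝ) ≤
        (((Finset.range ((m / n + 1) * n)).filter fun i => x i ≠ y i).card : ℝ) +
        ((Finset.range m).filter fun i => i ∈ overwritten (k + 1)).card := by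
      exact_mod_cast (Finset.card_le_card hsub).trans (Finset.card_union_le _ _)
    have h4 : (m : ℝ) / 2 ^ (k + 1 + 8) ≤ m / K := by
      rw [hK]
      push_cast
      gcongr
      · norm_num
      · norm_num
      · norm_num
    have h5 : ((m / n + 1 : ℕ) : ℝ) * n ≤ m + n := by
      have : (m / n + 1) * n ≤ m + n := by
        rw [Nat.succ_mul]; have := Nat.div_mul_le_self m n; omega
      exact_mod_cast this
    have h6 : 2 * ((m / n + 1 : ℕ) : ℝ) * n / K ≤ 2 * (m + n) / K := by
      rw [mul_assoc]
      gcongr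
    linarith
  have hev : ∀ᶠ m : ℕ in atTop, (((Finset.range m).filter
      fun j => x j ≠ shadow (k + 1) y j).card : ℝ) / m ≤ 5 / 2 ^ (k + 6) := by
    filter_upwards [eventually_ge_atTop (2 * n * K)] with m hm
    have hm' : 2 * (n : ℝ) * K ≤ m := by exact_mod_cast hm
    have hK1 : (1 : ℝ) ≤ K := by exact_mod_cast hK0
    have hm0 : (0 : ℝ) < m := lt_of_lt_of_le (by positivity) hm'
    rw [div_le_iff₀ hm0]
    refine (hcount m).trans ?_
    have e : (5 : ℝ) / 2 ^ (k + 6) * m = 5 * m / K := by rw [hK]; push_cast; ring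
    rw [e, div_add' _ _ _ hKR.ne', ← add_div]
    gcongr
    nlinarith
  refine limsup_le_of_le ?_ hev
  exact isCoboundedUnder_le_of_le (x := 0) atTop fun m => by positivity

/-! ### Measures on the full shift -/

/-- The first `m` coordinates of a sequence. -/
def restr (m : ℕ) (x : ℕ → Bool) : Fin m → Bool := fun k => x k

lemma continuous_restr (m : ℕ) : Continuous (restr m) :=
  continuous_pi fun k => continuous_apply (k : ℕ)

lemma measurable_restr (m : ℕ) : Measurable (restr m) :=
  measurable_pi_lambda _ fun k => measurable_pi_apply (k : ℕ)

lemma continuous_comp_restr {m : ℕ} (φ : (Fin m → Bool) → ℝ) :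
    Continuous fun x => φ (restr m x) :=
  continuous_of_discreteTopology.comp (continuous_restr m)

lemma continuous_shift : Continuous (shift : (ℕ → Bool) → ℕ → Bool) :=
  continuous_pi fun k => continuous_apply (k + 1)

lemma measurable_shift : Measurable (shift : (ℕ → Bool) → ℕ → Bool) :=
  measurable_pi_lambda _ fun k => measurable_pi_apply (k + 1)

lemma integrable_of_continuous (μ : Measure (ℕ → Bool)) [IsFiniteMeasure μ]
    {f : (ℕ → Bool) → ℝ} (hf : Continuous f) : Integrable f μ :=
  hf.integrable_of_hasCompactSupport (HasCompactSupport.of_compactSpace f)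

lemma exists_eq_restr_preimage {t : Set (ℕ → Bool)}
    (ht : t ∈ measurableCylinders fun _ : ℕ => Bool) :
    ∃ m, ∃ T : Set (Fin m → Bool), t = restr m ⁻¹' T := by
  obtain ⟨s, S, -, rfl⟩ := (mem_measurableCylinders t).1 ht
  obtain ⟨m, hm⟩ := s.exists_nat_subset_range
  have hlt : ∀ i ∈ s, i < m := fun i hi => Finset.mem_range.1 (hm hi)
  refine ⟨m, {v | (fun i : s => v ⟨i, hlt i i.2⟩) ∈ S}, ?_⟩
  ext x
  simp only [mem_cylinder, Set.mem_preimage, Set.mem_ofPred_eq]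
  rfl

lemma measure_ext_of_restr {μ ν : Measure (ℕ → Bool)} [IsFiniteMeasure μ]
    (h : ∀ m (T : Set (Fin m → Bool)), μ (restr m ⁻¹' T) = ν (restr m ⁻¹' T)) : μ = ν := by
  refine ext_of_generate_finite _ generateFrom_measurableCylinders.symm
    isPiSystem_measurableCylinders (fun t ht => ?_) ?_
  · obtain ⟨m, T, rfl⟩ := exists_eq_restr_preimage ht
    exact h m T
  · simpa using h 0 Set.univ

lemma measureReal_restr_preimage (μ : Measure (ℕ → Bool)) {m : ℕ}
    (T : Set (Fin m → Bool)) :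
    μ.real (restr m ⁻¹' T) = ∫ x, T.indicator (fun _ => (1 : ℝ)) (restr m x) ∂μ := by
  have h : MeasurableSet (restr m ⁻¹' T) := measurable_restr m (MeasurableSet.of_discrete)
  rw [← integral_indicator_one h]
  rfl

/-- Ergodic averages. -/
noncomputable def average (f : (ℕ → Bool) → ℝ) (L : ℕ) (x : ℕ → Bool) : ℝ :=
  (∑ j ∈ Finset.range L, f (shift^[j] x)) / L

lemma continuous_average {f : (ℕ → Bool) → ℝ} (hf : Continuous f) (L : ℕ) :
    Continuous (average f L) :=
  (continuous_finsetSum _ fun j _ => hf.comp (continuous_shift.iterate j)).div_const _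

lemma setIntegral_average {μ : Measure (ℕ → Bool)} [IsProbabilityMeasure μ]
    (hμ : MeasurePreserving shift μ μ) {B : Set (ℕ → Bool)} (hB : MeasurableSet B)
    (hBs : shift ⁻¹' B = B) {f : (ℕ → Bool) → ℝ} (hf : Continuous f) {L : ℕ} (hL : 0 < L) :
    ∫ x in B, average f L x ∂μ = ∫ x in B, f x ∂μ := by
  have hj : ∀ j, ∫ x in B, f (shift^[j] x) ∂μ = ∫ x in B, f x ∂μ := by
    intro j
    have hp := hμ.iterate j
    have hBj : shift^[j] ⁻¹' B = B := by
      induction j with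
      | zero => rfl
      | succ j ih =>
        rw [Function.iterate_succ, Set.preimage_comp, ih (hμ.iterate j), hBs]
    have hr : MeasurePreserving shift^[j] (μ.restrict B) (μ.restrict B) := by
      have := hp.restrict_preimage hB
      rwa [hBj] at this
    conv_rhs => rw [← hr.map_eq]
    rw [integral_map hr.measurable.aemeasurable hf.aestronglyMeasurable]
  simp only [average]
  rw [integral_div, integral_finsetSum]
  · simp only [hj, Finset.sum_const, Finset.card_range, nsmul_eq_mul]
    have : (L : ℝ) ≠ 0 := by exact_mod_cast hL.ne'
    field_simp
  · exact fun j _ => (integrable_of_continuous _ (hf.comp (continuous_shift.iterate j)))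

lemma ergodic_of_average {μ : Measure (ℕ → Bool)} [IsProbabilityMeasure μ]
    (hμ : MeasurePreserving shift μ μ)
    (h : ∀ m (φ : (Fin m → Bool) → ℝ), (∀ v, |φ v| ≤ 1) → ∀ ε : ℝ, 0 < ε → ∃ L : ℕ, 0 < L ∧ ∃ c,
      ∫ x, |average (fun x => φ (restr m x)) L x - c| ∂μ ≤ ε) :
    Ergodic shift μ := by
  refine ⟨hμ, ⟨fun B hB hBs => ?_⟩⟩
  have key : ∀ m (T : Set (Fin m → Bool)),
      μ.real (B ∩ restr m ⁻¹' T) = μ.real B * μ.real (restr m ⁻¹' T) := by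
    intro m T
    have hT : MeasurableSet (restr m ⁻¹' T) := measurable_restr m (MeasurableSet.of_discrete)
    set φ : (Fin m → Bool) → ℝ := T.indicator fun _ => 1 with hφ
    have hφ1 : ∀ v, |φ v| ≤ 1 := by
      intro v
      by_cases hv : v ∈ T <;> simp [hφ, hv]
    set f : (ℕ → Bool) → ℝ := fun x => φ (restr m x) with hf
    have hfc : Continuous f := continuous_comp_restr φ
    have e1 : ∫ x in B, f x ∂μ = μ.real (B ∩ restr m ⁻¹' T) := by
      have := measureReal_restr_preimage (μ.restrict B) T
      rw [← this, measureReal_restrict_apply hT, Set.inter_comm]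
    have e2 : ∫ x, f x ∂μ = μ.real (restr m ⁻¹' T) := (measureReal_restr_preimage μ T).symm
    refine eq_of_abs_sub_le_all fun ε hε => ?_
    obtain ⟨L, hL, c, hc⟩ := h m φ hφ1 (ε / 2) (by positivity)
    have hac : Continuous (average f L) := continuous_average hfc L
    have hfi : Integrable (fun x => average f L x - c) μ :=
      integrable_of_continuous μ (hac.sub continuous_const)
    have b1 : |μ.real (B ∩ restr m ⁻¹' T) - μ.real B * c| ≤ ε / 2 := by
      rw [← e1, ← setIntegral_average hμ hB hBs hfc hL]
      have : ∫ x in B, (average f L x - c) ∂μ = ∫ x in B, average f L x ∂μ - μ.real B * c := by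
        rw [integral_sub (integrable_of_continuous _ hac) (integrable_const _)]
        simp
      rw [← this]
      calc |∫ x in B, (average f L x - c) ∂μ| ≤ ∫ x in B, |average f L x - c| ∂μ :=
            abs_integral_le_integral_abs
        _ ≤ ∫ x, |average f L x - c| ∂μ :=
            setIntegral_le_integral hfi.abs (Eventually.of_forall fun x => abs_nonneg _)
        _ ≤ ε / 2 := hc
    have b2 : |μ.real (restr m ⁻¹' T) - c| ≤ ε / 2 := by
      have h0 := setIntegral_average hμ MeasurableSet.univ Set.preimage_univ hfc hL
      rw [setIntegral_univ, setIntegral_univ] at h0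
      rw [← e2, ← h0]
      have : ∫ x, (average f L x - c) ∂μ = ∫ x, average f L x ∂μ - c := by
        rw [integral_sub (integrable_of_continuous _ hac) (integrable_const _)]
        simp
      rw [← this]
      exact abs_integral_le_integral_abs.trans hc
    have hB1 : μ.real B ≤ 1 := measureReal_le_one
    have hB0 : 0 ≤ μ.real B := measureReal_nonneg
    calc |μ.real (B ∩ restr m ⁻¹' T) - μ.real B * μ.real (restr m ⁻¹' T)|
        = |(μ.real (B ∩ restr m ⁻¹' T) - μ.real B * c) -
            μ.real B * (μ.real (restr m ⁻¹' T) - c)| := by ring_nf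
      _ ≤ |μ.real (B ∩ restr m ⁻¹' T) - μ.real B * c| +
            |μ.real B * (μ.real (restr m ⁻¹' T) - c)| := abs_sub _ _
      _ ≤ ε / 2 + 1 * (ε / 2) := by
          rw [abs_mul, abs_of_nonneg hB0]
          gcongr
      _ = ε := by ring
  have hmeas : μ.restrict B = μ B • μ := by
    refine measure_ext_of_restr fun m T => ?_
    have hT : MeasurableSet (restr m ⁻¹' T) := measurable_restr m (MeasurableSet.of_discrete)
    rw [Measure.restrict_apply hT, Measure.smul_apply, smul_eq_mul, Set.inter_comm]
    have := key m T
    simp only [measureReal_def, ← ENNReal.toReal_mul] at this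
    exact (ENNReal.toReal_eq_toReal_iff' (measure_ne_top _ _)
      (ENNReal.mul_ne_top (measure_ne_top _ _) (measure_ne_top _ _))).1 this
  have hsq : μ.real B = μ.real B * μ.real B := by
    have := congrArg (fun ν => ν B) hmeas
    simp only [Measure.restrict_apply hB, Set.inter_self, Measure.smul_apply, smul_eq_mul] at this
    simp only [measureReal_def, ← ENNReal.toReal_mul, ← this]
  rw [eventuallyConst_set']
  have : μ.real B = 0 ∨ μ.real B = 1 := by
    rcases eq_or_ne (μ.real B) 0 with h0 | h0
    · exact Or.inl h0
    · right
      field_simp at hsq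
      exact hsq.symm
  rcases this with h0 | h1
  · left
    rw [measureReal_eq_zero_iff] at h0
    exact (ae_eq_empty.2 h0)
  · right
    have h1' : μ B = 1 := by
      rw [measureReal_def] at h1
      rw [← ENNReal.ofReal_toReal (measure_ne_top μ B), h1, ENNReal.ofReal_one]
    exact eventuallyEq_univ.2 ((prob_compl_eq_zero_iff hB).2 h1')

/-! ### Limits of averaged laws of a random sequence -/

section Limit

variable {Ω : Type*} [MeasurableSpace Ω]

/-- `μ` is the limit along the hyperfilter of the averaged laws of the shifts of `V`. -/
def IsAverageLimit (P : Measure Ω) (V : Ω → ℕ → Bool) (μ : ProbabilityMeasure (ℕ → Bool)) :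
    Prop :=
  ∀ f : (ℕ → Bool) → ℝ, Continuous f →
    Tendsto (fun S : ℕ => ∫ ω, average f S (V ω) ∂P) (hyperfilter ℕ : Filter ℕ)
      (𝓝 (∫ x, f x ∂(μ : Measure (ℕ → Bool))))

lemma measurable_shift_iterate (j : ℕ) : Measurable (shift^[j] : (ℕ → Bool) → ℕ → Bool) :=
  measurable_shift.iterate j

lemma abs_le_of_continuous {f : (ℕ → Bool) → ℝ} (hf : Continuous f) : ∃ C, ∀ x, |f x| ≤ C := by
  obtain ⟨C, hC⟩ := isCompact_univ.exists_bound_of_continuousOn hf.continuousOn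
  exact ⟨C, fun x => hC x trivial⟩

lemma integrable_comp_of_continuous {P : Measure Ω} [IsFiniteMeasure P] {V : Ω → ℕ → Bool}
    (hV : Measurable V) {f : (ℕ → Bool) → ℝ} (hf : Continuous f) :
    Integrable (fun ω => f (V ω)) P := by
  have := integrable_of_continuous (P.map V) hf
  exact this.comp_measurable hV

lemma exists_isAverageLimit (P : Measure Ω) [IsProbabilityMeasure P] {V : Ω → ℕ → Bool}
    (hV : Measurable V) : ∃ μ, IsAverageLimit P V μ := by
  have hm : ∀ j, Measurable fun ω => shift^[j] (V ω) := fun j =>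
    (measurable_shift_iterate j).comp hV
  set Q : ℕ → Measure (ℕ → Bool) := fun S =>
    (S : ENNReal)⁻¹ • ∑ j ∈ Finset.range S, P.map fun ω => shift^[j] (V ω) with hQ
  have hQp : ∀ S : ℕ, 0 < S → IsProbabilityMeasure (Q S) := by
    intro S hS
    constructor
    have : ∀ j, (P.map fun ω => shift^[j] (V ω)) Set.univ = 1 := fun j => by
      rw [Measure.map_apply (hm j) MeasurableSet.univ]
      simp
    simp only [hQ, Measure.smul_apply, Measure.finsetSum_apply, this, Finset.sum_const,
      Finset.card_range, smul_eq_mul, nsmul_eq_mul, mul_one]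
    exact ENNReal.inv_mul_cancel (by simpa using hS.ne') (ENNReal.natCast_ne_top S)
  have hQi : ∀ S : ℕ, ∀ f : (ℕ → Bool) → ℝ, Continuous f →
      ∫ x, f x ∂(Q S) = ∫ ω, average f S (V ω) ∂P := by
    intro S f hf
    have e : ∀ j, ∫ x, f x ∂(P.map fun ω => shift^[j] (V ω)) = ∫ ω, f (shift^[j] (V ω)) ∂P :=
      fun j => integral_map (hm j).aemeasurable hf.aestronglyMeasurable
    simp only [hQ, average]
    rw [integral_smul_measure, integral_finsetSum_measure, integral_div, integral_finsetSum]
    · simp only [e]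
      simp [div_eq_inv_mul]
    · exact fun j _ => integrable_comp_of_continuous (hm j) hf
    · intro j _
      have := Measure.isProbabilityMeasure_map (μ := P) (hm j).aemeasurable
      exact integrable_of_continuous _ hf
  classical
  let Q' : ℕ → ProbabilityMeasure (ℕ → Bool) := fun S =>
    ⟨Q (S + 1), hQp _ S.succ_pos⟩
  let R : ℕ → ProbabilityMeasure (ℕ → Bool) := fun S => Q' (S - 1)
  obtain ⟨μ, -, hμ⟩ := (isCompact_univ (X := ProbabilityMeasure (ℕ → Bool))).ultrafilter_le_nhds
    ((hyperfilter ℕ).map R) (by simp)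
  have hμ' : Tendsto R (hyperfilter ℕ : Filter ℕ) (𝓝 μ) := hμ
  rw [ProbabilityMeasure.tendsto_iff_forall_integral_tendsto] at hμ'
  refine ⟨μ, fun f hf => ?_⟩
  have := hμ' (BoundedContinuousFunction.mkOfCompact ⟨f, hf⟩)
  refine this.congr' ?_
  have h1 : ∀ᶠ S in (hyperfilter ℕ : Filter ℕ), 0 < S :=
    Nat.hyperfilter_le_atTop (eventually_gt_atTop 0)
  filter_upwards [h1] with S hS
  have : ((R S : ProbabilityMeasure (ℕ → Bool)) : Measure (ℕ → Bool)) = Q S := by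
    simp only [R, Q']
    obtain ⟨T, rfl⟩ := Nat.exists_eq_succ_of_ne_zero hS.ne'
    rfl
  rw [this]
  exact hQi S f hf

variable {P : Measure Ω} [IsProbabilityMeasure P] {V : Ω → ℕ → Bool}
  {μ : ProbabilityMeasure (ℕ → Bool)}

lemma IsAverageLimit.integral_le {P : Measure Ω} (h : IsAverageLimit P V μ) {f : (ℕ → Bool) → ℝ}
    (hf : Continuous f) {a : ℝ} (ha : ∀ᶠ S : ℕ in atTop, ∫ ω, average f S (V ω) ∂P ≤ a) :
    ∫ x, f x ∂(μ : Measure (ℕ → Bool)) ≤ a :=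
  le_of_tendsto (h f hf) (Nat.hyperfilter_le_atTop ha)

lemma IsAverageLimit.le_integral {P : Measure Ω} (h : IsAverageLimit P V μ) {f : (ℕ → Bool) → ℝ}
    (hf : Continuous f) {a : ℝ} (ha : ∀ᶠ S : ℕ in atTop, a ≤ ∫ ω, average f S (V ω) ∂P) :
    a ≤ ∫ x, f x ∂(μ : Measure (ℕ → Bool)) :=
  ge_of_tendsto (h f hf) (Nat.hyperfilter_le_atTop ha)

lemma average_comp_shift_sub (f : (ℕ → Bool) → ℝ) (S : ℕ) (x : ℕ → Bool) :
    average (fun y => f (shift y)) S x - average f S x = (f (shift^[S] x) - f x) / S := by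
  simp only [average, ← sub_div, ← Finset.sum_sub_distrib]
  congr 1
  have : ∀ j, f (shift (shift^[j] x)) = f (shift^[j + 1] x) := fun j => by
    rw [Function.iterate_succ_apply']
  simp only [this]
  exact Finset.sum_range_sub (fun j => f (shift^[j] x)) S

lemma IsAverageLimit.invariant (h : IsAverageLimit P V μ) (hV : Measurable V) :
    invariantPM μ := by
  have : IsProbabilityMeasure ((μ : Measure (ℕ → Bool)).map shift) :=
    Measure.isProbabilityMeasure_map measurable_shift.aemeasurable
  refine ext_of_forall_integral_eq_of_IsFiniteMeasure fun f => ?_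
  rw [integral_map measurable_shift.aemeasurable f.continuous.aestronglyMeasurable]
  have hf := f.continuous
  have hfs : Continuous fun x => f (shift x) := hf.comp continuous_shift
  obtain ⟨C, hC⟩ := abs_le_of_continuous hf
  have h1 := (h _ hfs).sub (h _ hf)
  have h2 : Tendsto (fun S : ℕ => ∫ ω, average (fun x => f (shift x)) S (V ω) ∂P -
      ∫ ω, average f S (V ω) ∂P) atTop (𝓝 0) := by
    refine squeeze_zero_norm (a := fun S : ℕ => 2 * C / S) (fun S => ?_)
      (tendsto_const_div_atTop_nhds_zero_nat (2 * C))
    rw [← integral_sub (integrable_comp_of_continuous hV (continuous_average hfs S))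
      (integrable_comp_of_continuous hV (continuous_average hf S))]
    have := norm_integral_le_of_norm_le_const (μ := P) (C := 2 * C / S)
      (f := fun ω => average (fun x => f (shift x)) S (V ω) - average f S (V ω))
      (Eventually.of_forall fun ω => by
        rw [average_comp_shift_sub, Real.norm_eq_abs, abs_div, Nat.abs_cast]
        gcongr
        have a1 := hC (shift^[S] (V ω))
        have a2 := hC (V ω)
        rw [abs_le] at *
        constructor <;> linarith)
    simpa using this
  exact sub_eq_zero.1 (tendsto_nhds_unique h1 (h2.mono_left Nat.hyperfilter_le_atTop))

lemma mem_of_forall_restr {X : Set (ℕ → Bool)} (hX : IsClosed X) {x : ℕ → Bool}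
    (h : ∀ n, restr n x ∈ restr n '' X) : x ∈ X := by
  choose y hy hyx using h
  refine hX.mem_of_tendsto (b := atTop) (f := y) ?_ (Eventually.of_forall hy)
  refine tendsto_pi_nhds.2 fun i => ?_
  refine tendsto_const_nhds.congr' ?_
  filter_upwards [eventually_gt_atTop i] with n hn
  exact (congrFun (hyx n) ⟨i, hn⟩).symm

lemma measure_eq_one_of_restr (μ : ProbabilityMeasure (ℕ → Bool)) {X : Set (ℕ → Bool)}
    (hX : IsClosed X)
    (h : ∀ n, 1 ≤ ∫ x, (restr n '' X).indicator (fun _ => (1 : ℝ)) (restr n x)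
      ∂(μ : Measure (ℕ → Bool))) : μ X = 1 := by
  have h1 : ∀ n, ∀ᵐ x ∂(μ : Measure (ℕ → Bool)), restr n x ∈ restr n '' X := by
    intro n
    have hT : MeasurableSet (restr n ⁻¹' (restr n '' X)) :=
      measurable_restr n MeasurableSet.of_discrete
    have := h n
    rw [← measureReal_restr_preimage] at this
    have h2 : (μ : Measure (ℕ → Bool)).real (restr n ⁻¹' (restr n '' X)) = 1 :=
      le_antisymm measureReal_le_one this
    refine (mem_ae_iff_prob_eq_one hT).2 ?_
    rw [measureReal_def] at h2
    exact (ENNReal.toReal_eq_one_iff _).1 h2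
  have h3 : ∀ᵐ x ∂(μ : Measure (ℕ → Bool)), x ∈ X := by
    filter_upwards [ae_all_iff.2 h1] with x hx using mem_of_forall_restr hX hx
  have := (mem_ae_iff_prob_eq_one hX.measurableSet).1 h3
  rw [← ProbabilityMeasure.ennreal_coeFn_eq_coeFn_toMeasure] at this
  exact_mod_cast this

lemma average_eq_of_forall {f : (ℕ → Bool) → ℝ} {S : ℕ} (hS : 0 < S) {x : ℕ → Bool} {c : ℝ}
    (h : ∀ j, f (shift^[j] x) = c) : average f S x = c := by
  have : (S : ℝ) ≠ 0 := by exact_mod_cast hS.ne'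
  simp only [average, h, Finset.sum_const, Finset.card_range, nsmul_eq_mul]
  field_simp

lemma IsAverageLimit.mem_Msigma (h : IsAverageLimit P V μ) (hV : Measurable V)
    {X : Set (ℕ → Bool)} (hX : ShiftSpace X) (hVX : ∀ ω, V ω ∈ X) : μ ∈ Msigma X := by
  refine ⟨h.invariant hV, measure_eq_one_of_restr μ hX.2.1 fun n => ?_⟩
  refine h.le_integral (continuous_comp_restr _) ?_
  filter_upwards [eventually_gt_atTop 0] with S hS
  have hmem : ∀ ω j, shift^[j] (V ω) ∈ X := by
    intro ω j
    induction j with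
    | zero => exact hVX ω
    | succ j ih =>
      rw [Function.iterate_succ_apply']
      exact hX.2.2 _ ih
  have : ∀ ω, average (fun x => (restr n '' X).indicator (fun _ => (1 : ℝ)) (restr n x)) S (V ω)
      = 1 := fun ω => average_eq_of_forall hS fun j =>
    Set.indicator_of_mem (Set.mem_image_of_mem _ (hmem ω j)) _
  simp [this]

end Limit

/-! ### Averages along nearby sequences -/

/-- The number of disagreements of two sequences before `n`. -/
def diffs (x y : ℕ → Bool) (n : ℕ) : ℕ := ((Finset.range n).filter fun i => x i ≠ y i).card

lemma diffs_eq_sum (x y : ℕ → Bool) (n : ℕ) :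
    (diffs x y n : ℝ) = ∑ i ∈ Finset.range n, if x i ≠ y i then (1 : ℝ) else 0 := by
  rw [diffs, Finset.sum_boole]

lemma sum_range_add_le {d : ℕ → ℝ} (hd : ∀ i, 0 ≤ d i) {i T U : ℕ} (h : T + i ≤ U) :
    ∑ t ∈ Finset.range T, d (t + i) ≤ ∑ t ∈ Finset.range U, d t := by
  have := Finset.sum_Ico_eq_sum_range d i (i + T)
  rw [Nat.add_sub_cancel_left] at this
  simp only [Nat.add_comm i] at this
  rw [← this]
  refine Finset.sum_le_sum_of_subset_of_nonneg (fun j hj => ?_) fun j _ _ => hd j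
  simp only [Finset.mem_Ico, Finset.mem_range] at *
  omega

lemma restr_shift_iterate (m t : ℕ) (x : ℕ → Bool) (i : Fin m) :
    restr m (shift^[t] x) i = x (t + i) := shift_iterate x t i

lemma sum_abs_sub_le {m : ℕ} {φ : (Fin m → Bool) → ℝ} (hφ : ∀ v, |φ v| ≤ 1)
    (x y : ℕ → Bool) (T : ℕ) :
    ∑ t ∈ Finset.range T, |φ (restr m (shift^[t] x)) - φ (restr m (shift^[t] y))|
      ≤ 2 * m * diffs x y (T + m) := by
  set d : ℕ → ℝ := fun i => if x i ≠ y i then (1 : ℝ) else 0 with hd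
  have hd0 : ∀ i, 0 ≤ d i := fun i => by simp only [hd]; split_ifs <;> norm_num
  have h1 : ∀ t, |φ (restr m (shift^[t] x)) - φ (restr m (shift^[t] y))|
      ≤ 2 * ∑ i ∈ Finset.range m, d (t + i) := by
    intro t
    by_cases h : restr m (shift^[t] x) = restr m (shift^[t] y)
    · rw [h, sub_self, abs_zero]
      exact mul_nonneg zero_le_two (Finset.sum_nonneg fun i _ => hd0 _)
    · obtain ⟨i, hi⟩ := Function.ne_iff.1 h
      rw [restr_shift_iterate, restr_shift_iterate] at hi
      have h2 : d (t + i) ≤ ∑ i ∈ Finset.range m, d (t + i) :=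
        Finset.single_le_sum (f := fun i => d (t + i)) (fun i _ => hd0 _)
          (Finset.mem_range.2 i.2)
      have h3 : d (t + i) = 1 := if_pos hi
      have a1 := hφ (restr m (shift^[t] x))
      have a2 := hφ (restr m (shift^[t] y))
      rw [abs_le] at *
      constructor <;> linarith
  calc _ ≤ ∑ t ∈ Finset.range T, 2 * ∑ i ∈ Finset.range m, d (t + i) :=
        Finset.sum_le_sum fun t _ => h1 t
    _ = 2 * ∑ i ∈ Finset.range m, ∑ t ∈ Finset.range T, d (t + i) := by
        rw [← Finset.mul_sum, Finset.sum_comm]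
    _ ≤ 2 * ∑ i ∈ Finset.range m, (diffs x y (T + m) : ℝ) := by
        gcongr with i hi
        rw [diffs_eq_sum]
        exact sum_range_add_le hd0 (by have := Finset.mem_range.1 hi; omega)
    _ = _ := by simp; ring

lemma abs_average_sub_le (f : (ℕ → Bool) → ℝ) (S : ℕ) (x y : ℕ → Bool) :
    |average f S x - average f S y|
      ≤ (∑ t ∈ Finset.range S, |f (shift^[t] x) - f (shift^[t] y)|) / S := by
  simp only [average, ← sub_div, ← Finset.sum_sub_distrib, abs_div, Nat.abs_cast]
  gcongr
  exact Finset.abs_sum_le_sum_abs _ _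

lemma abs_average_sub_average_le {m : ℕ} {φ : (Fin m → Bool) → ℝ} (hφ : ∀ v, |φ v| ≤ 1)
    (x y : ℕ → Bool) (S : ℕ) :
    |average (fun x => φ (restr m x)) S x - average (fun x => φ (restr m x)) S y|
      ≤ 2 * m * diffs x y (S + m) / S := by
  refine (abs_average_sub_le _ S x y).trans ?_
  gcongr
  exact sum_abs_sub_le hφ x y S

lemma abs_average_dev_sub_le {m : ℕ} {φ : (Fin m → Bool) → ℝ} (hφ : ∀ v, |φ v| ≤ 1)
    (x y : ℕ → Bool) (S : ℕ) {L : ℕ} (hL : 0 < L) (c : ℝ) :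
    |average (fun z => |average (fun x => φ (restr m x)) L z - c|) S x -
      average (fun z => |average (fun x => φ (restr m x)) L z - c|) S y|
      ≤ 2 * m * diffs x y (S + L + m) / S := by
  refine (abs_average_sub_le _ S x y).trans ?_
  gcongr
  set D : ℕ → ℝ := fun t => |φ (restr m (shift^[t] x)) - φ (restr m (shift^[t] y))| with hD
  have hL' : (0 : ℝ) < L := by exact_mod_cast hL
  have h1 : ∀ t, abs (abs (average (fun x => φ (restr m x)) L (shift^[t] x) - c) -
      abs (average (fun x => φ (restr m x)) L (shift^[t] y) - c))
      ≤ (∑ j ∈ Finset.range L, D (t + j)) / L := by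
    intro t
    refine (abs_abs_sub_abs_le _ _).trans ?_
    rw [sub_sub_sub_cancel_right]
    refine (abs_average_sub_le _ L _ _).trans (le_of_eq ?_)
    congr 1
    refine Finset.sum_congr rfl fun j _ => ?_
    simp only [hD, ← Function.iterate_add_apply, Nat.add_comm t]
  calc _ ≤ ∑ t ∈ Finset.range S, (∑ j ∈ Finset.range L, D (t + j)) / L :=
        Finset.sum_le_sum fun t _ => h1 t
    _ = (∑ j ∈ Finset.range L, ∑ t ∈ Finset.range S, D (t + j)) / L := by
        rw [← Finset.sum_div, Finset.sum_comm]
    _ ≤ (∑ j ∈ Finset.range L, 2 * m * (diffs x y (S + L + m) : ℝ)) / L := by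
        gcongr with j hj
        exact (sum_range_add_le (fun i => abs_nonneg _)
          (by have := Finset.mem_range.1 hj; omega)).trans (sum_abs_sub_le hφ x y (S + L))
    _ = _ := by
        simp only [Finset.sum_const, Finset.card_range, nsmul_eq_mul]
        field_simp

lemma average_mul (f : (ℕ → Bool) → ℝ) (G N : ℕ) (x : ℕ → Bool) :
    average f (G * N) x =
      (∑ g ∈ Finset.range G, average f N (shift^[g * N] x)) / G := by
  have : ∀ G, ∑ j ∈ Finset.range (G * N), f (shift^[j] x) =
      ∑ g ∈ Finset.range G, ∑ j ∈ Finset.range N, f (shift^[j] (shift^[g * N] x)) := by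
    intro G
    induction G with
    | zero => simp
    | succ G ih =>
      rw [Nat.succ_mul, Finset.sum_range_add, ih, Finset.sum_range_succ]
      simp only [← Function.iterate_add_apply, Nat.add_comm (G * N)]
  simp only [average, this, ← Finset.sum_div, Nat.cast_mul]
  rw [div_div, mul_comm (N : ℝ)]

lemma abs_average_shift_sub_le {f : (ℕ → Bool) → ℝ} (hf : ∀ x, |f x| ≤ 1) (L r : ℕ)
    (x : ℕ → Bool) : |average f L (shift^[r] x) - average f L x| ≤ 2 * r / L := by
  have : average f L (shift^[r] x) - average f L x =
      (∑ j ∈ Finset.range r, (f (shift^[L + j] x) - f (shift^[j] x))) / L := by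
    simp only [average, ← sub_div, ← Function.iterate_add_apply]
    congr 1
    have h1 := Finset.sum_range_add (fun j => f (shift^[j] x)) L r
    have h2 := Finset.sum_range_add (fun j => f (shift^[j] x)) r L
    rw [Nat.add_comm r L] at h2
    simp only [Nat.add_comm r] at h2
    rw [Finset.sum_sub_distrib]
    linarith
  rw [this, abs_div, Nat.abs_cast]
  gcongr
  refine (Finset.abs_sum_le_sum_abs _ _).trans ?_
  calc _ ≤ ∑ _j ∈ Finset.range r, (2 : ℝ) := Finset.sum_le_sum fun j _ => by
        have a1 := hf (shift^[L + j] x)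
        have a2 := hf (shift^[j] x)
        rw [abs_le] at *
        constructor <;> linarith
    _ = _ := by simp [mul_comm]

/-- Extension of a finite word by `false`. -/
def extend {N : ℕ} (v : Fin N → Bool) : ℕ → Bool := fun i => if h : i < N then v ⟨i, h⟩ else false

lemma diffs_extend_le (x : ℕ → Bool) (N m : ℕ) : diffs x (extend (restr N x)) (N + m) ≤ m := by
  have : (Finset.range (N + m)).filter (fun i => x i ≠ extend (restr N x) i)
      ⊆ Finset.Ico N (N + m) := by
    intro i hi
    simp only [Finset.mem_filter, Finset.mem_range, Finset.mem_Ico] at *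
    refine ⟨?_, hi.1⟩
    by_contra h
    push Not at h
    exact hi.2 (by simp [extend, h, restr])
  simpa [diffs] using Finset.card_le_card this

lemma abs_average_extend_le {m : ℕ} {φ : (Fin m → Bool) → ℝ} (hφ : ∀ v, |φ v| ≤ 1)
    (x : ℕ → Bool) (N : ℕ) :
    |average (fun x => φ (restr m x)) N x - average (fun x => φ (restr m x)) N
      (extend (restr N x))| ≤ 2 * m ^ 2 / N := by
  refine (abs_average_sub_average_le hφ _ _ _).trans ?_
  have : (diffs x (extend (restr N x)) (N + m) : ℝ) ≤ m := by exact_mod_cast diffs_extend_le x N m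
  refine div_le_div_of_nonneg_right ?_ (Nat.cast_nonneg N)
  nlinarith [(Nat.cast_nonneg m : (0 : ℝ) ≤ m)]

/-! ### Ergodicity of limits -/

section Ergodicity

variable {Ω : Type*} [MeasurableSpace Ω] {P : Measure Ω} [IsProbabilityMeasure P]

lemma iterate_comm_shift {Ω : Type*} {N : ℕ} {Y : Ω → ℕ → Bool} {τ : Ω → Ω}
    (hτY : ∀ ω, Y (τ ω) = shift^[N] (Y ω)) (q : ℕ) (ω : Ω) :
    Y (τ^[q] ω) = shift^[q * N] (Y ω) := by
  induction q generalizing ω with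
  | zero => simp
  | succ q ih =>
    rw [Function.iterate_succ_apply, ih, hτY, ← Function.iterate_add_apply, Nat.succ_mul]

lemma eventually_integral_blockAverage_le {N : ℕ} {Y : Ω → ℕ → Bool} {τ : Ω → Ω}
    (hY : Measurable Y) (hτ : MeasurePreserving τ P P)
    (hτY : ∀ ω, Y (τ ω) = shift^[N] (Y ω))
    (hind : Pairwise (Function.onFun (fun X Z => ProbabilityTheory.IndepFun X Z P)
      fun (g : ℕ) ω => restr N (shift^[g * N] (Y ω))))
    (h : (Fin N → Bool) → ℝ) {ε : ℝ} (hε : 0 < ε) :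
    ∀ᶠ G : ℕ in atTop, ∫ ω, |(∑ g ∈ Finset.range G, h (restr N (shift^[g * N] (Y ω)))) / G -
      ∫ ω, h (restr N (Y ω)) ∂P| ∂P ≤ ε := by
  have hm : ∀ g, Measurable fun ω => restr N (shift^[g * N] (Y ω)) := fun g =>
    (measurable_restr N).comp ((measurable_shift_iterate _).comp hY)
  have hh : Measurable h := measurable_of_finite h
  set X : ℕ → Ω → ℝ := fun g ω => h (restr N (shift^[g * N] (Y ω))) with hX
  have hXm : ∀ g, Measurable (X g) := fun g => hh.comp (hm g)
  obtain ⟨C, hC⟩ := (Set.finite_range fun v => |h v|).bddAbove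
  have hXb : ∀ g ω, ‖X g ω‖ ≤ C := fun g ω => hC ⟨_, rfl⟩
  have hlaw : ∀ g, ProbabilityTheory.IdentDistrib (X g) (X 0) P P := by
    intro g
    have e : X g = X 0 ∘ τ^[g] := by
      ext ω
      simp only [hX, Function.comp_apply, iterate_comm_shift hτY, zero_mul, Function.iterate_zero,
        id]
    refine ⟨(hXm g).aemeasurable, (hXm 0).aemeasurable, ?_⟩
    rw [e, ← Measure.map_map (hXm 0) (hτ.iterate g).measurable, (hτ.iterate g).map_eq]
  have hpair : Pairwise (Function.onFun (fun X Z => ProbabilityTheory.IndepFun X Z P) X) :=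
    fun i j hij => (hind hij).comp hh hh
  have hslln := ProbabilityTheory.strong_law_Lp (μ := P) (p := 1) le_rfl ENNReal.one_ne_top X
    (MemLp.of_bound (hXm 0).aestronglyMeasurable C (Eventually.of_forall (hXb 0))) hpair hlaw
  have hev := hslln.eventually (ge_mem_nhds (show (0 : ENNReal) < ENNReal.ofReal ε by simpa))
  filter_upwards [hev] with G hG
  rw [eLpNorm_one_eq_lintegral_enorm] at hG
  have hmeas : Measurable fun ω => (∑ g ∈ Finset.range G, X g ω) / G - ∫ ω, X 0 ω ∂P :=
    ((Finset.measurable_fun_sum _ fun g _ => hXm g).div_const _).sub_const _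
  have e0 : ∫ ω, h (restr N (Y ω)) ∂P = ∫ ω, X 0 ω ∂P := by simp [hX]
  rw [e0, integral_eq_lintegral_of_nonneg_ae (Eventually.of_forall fun ω => abs_nonneg _)
    (hmeas.abs.aestronglyMeasurable)]
  refine ENNReal.toReal_le_of_le_ofReal hε.le (le_trans (le_of_eq ?_) hG)
  refine lintegral_congr fun ω => ?_
  rw [← Real.enorm_eq_ofReal_abs, smul_eq_mul, div_eq_inv_mul]

lemma integral_average_le {Y : Ω → ℕ → Bool} (hY : Measurable Y) {F : (ℕ → Bool) → ℝ}
    (hF : Continuous F) {a : ℝ} (ha : 0 ≤ a) (h : ∀ s, ∫ ω, F (shift^[s] (Y ω)) ∂P ≤ a) (S : ℕ) :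
    ∫ ω, average F S (Y ω) ∂P ≤ a := by
  simp only [average]
  rw [integral_div, integral_finsetSum]
  · refine div_le_of_le_mul₀ (Nat.cast_nonneg S) ha ?_
    calc _ ≤ ∑ _s ∈ Finset.range S, a := Finset.sum_le_sum fun s _ => h s
      _ = _ := by simp [mul_comm]
  · exact fun s _ => integrable_comp_of_continuous ((measurable_shift_iterate s).comp hY) hF

lemma IsAverageLimit.ergodic {V : Ω → ℕ → Bool} {μ : ProbabilityMeasure (ℕ → Bool)}
    (h : IsAverageLimit P V μ) (hV : Measurable V)
    (H : ∀ δ : ℝ, 0 < δ → ∃ N : ℕ, 0 < N ∧ 1 / (N : ℝ) ≤ δ ∧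
      ∃ (Y : Ω → ℕ → Bool) (τ : Ω → Ω), Measurable Y ∧ MeasurePreserving τ P P ∧
      (∀ ω, Y (τ ω) = shift^[N] (Y ω)) ∧
      Pairwise (Function.onFun (fun X Z => ProbabilityTheory.IndepFun X Z P)
        fun (g : ℕ) ω => restr N (shift^[g * N] (Y ω))) ∧
      ∀ ω S, (diffs (V ω) (Y ω) S : ℝ) ≤ S * δ) :
    ErgodicPM μ := by
  refine ergodic_of_average ⟨measurable_shift, h.invariant hV⟩ fun m φ hφ ε hε => ?_
  set f : (ℕ → Bool) → ℝ := fun x => φ (restr m x) with hf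
  have hfc : Continuous f := continuous_comp_restr φ
  have hm0 : (0 : ℝ) ≤ m := Nat.cast_nonneg m
  set δ : ℝ := ε / (16 * (m + 1) ^ 2) with hδ
  have hδ0 : 0 < δ := by positivity
  have hδ1 : 16 * (m + 1) ^ 2 * δ = ε := by rw [hδ]; field_simp
  obtain ⟨N, hN, hN1, Y, τ, hY, hτ, hτY, hind, hdiff⟩ := H δ hδ0
  have hN0 : (0 : ℝ) < N := by exact_mod_cast hN
  set g : (Fin N → Bool) → ℝ := fun v => average f N (extend v) with hg
  obtain ⟨G, hG1, hG2, hG0⟩ := ((eventually_integral_blockAverage_le hY hτ hτY hind g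
    (show (0 : ℝ) < ε / 8 by positivity)).and
    ((tendsto_natCast_atTop_atTop.eventually_ge_atTop (16 / ε)).and
      (eventually_gt_atTop 0))).exists
  have hG0' : (0 : ℝ) < G := by exact_mod_cast hG0
  set c := ∫ ω, g (restr N (Y ω)) ∂P with hc
  set L := G * N with hL
  have hL0 : 0 < L := Nat.mul_pos hG0 hN
  refine ⟨L, hL0, c, ?_⟩
  set F : (ℕ → Bool) → ℝ := fun x => |average f L x - c| with hF
  have hFc : Continuous F := ((continuous_average hfc L).sub continuous_const).abs
  have hYs : ∀ s, Measurable fun ω => shift^[s] (Y ω) := fun s =>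
    (measurable_shift_iterate s).comp hY
  have step0 : ∫ ω, F (Y ω) ∂P ≤ 2 * m ^ 2 / N + ε / 8 := by
    have hpt : ∀ ω, F (Y ω) ≤ 2 * m ^ 2 / N +
        |(∑ q ∈ Finset.range G, g (restr N (shift^[q * N] (Y ω)))) / G - c| := by
      intro ω
      have e : |average f L (Y ω) - (∑ q ∈ Finset.range G, g (restr N (shift^[q * N] (Y ω)))) / G|
          ≤ 2 * m ^ 2 / N := by
        rw [hL, average_mul, ← sub_div, ← Finset.sum_sub_distrib, abs_div, Nat.abs_cast]
        refine div_le_of_le_mul₀ hG0'.le (by positivity) ?_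
        refine (Finset.abs_sum_le_sum_abs _ _).trans ?_
        calc _ ≤ ∑ _q ∈ Finset.range G, 2 * (m : ℝ) ^ 2 / N :=
              Finset.sum_le_sum fun q _ => abs_average_extend_le hφ _ N
          _ = _ := by simp [mul_comm]
      calc F (Y ω) ≤ _ := abs_sub_le _
            ((∑ q ∈ Finset.range G, g (restr N (shift^[q * N] (Y ω)))) / G) _
        _ ≤ _ := by gcongr
    have hfi : Integrable (fun ω =>
        |(∑ q ∈ Finset.range G, g (restr N (shift^[q * N] (Y ω)))) / G - c|) P := by
      have : Continuous fun x : ℕ → Bool =>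
          |(∑ q ∈ Finset.range G, g (restr N (shift^[q * N] x))) / G - c| := by
        refine (((continuous_finsetSum _ fun q _ => ?_).div_const _).sub continuous_const).abs
        exact (continuous_comp_restr g).comp (continuous_shift.iterate _)
      exact integrable_comp_of_continuous hY this
    calc ∫ ω, F (Y ω) ∂P ≤ ∫ ω, (2 * (m : ℝ) ^ 2 / N +
        |(∑ q ∈ Finset.range G, g (restr N (shift^[q * N] (Y ω)))) / G - c|) ∂P :=
          integral_mono (integrable_comp_of_continuous hY hFc)
            ((integrable_const _).add hfi) hpt
      _ = 2 * (m : ℝ) ^ 2 / N +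
          ∫ ω, |(∑ q ∈ Finset.range G, g (restr N (shift^[q * N] (Y ω)))) / G - c| ∂P := by
          rw [integral_add (integrable_const _) hfi]
          simp
      _ ≤ _ := by gcongr
  have step1 : ∀ s, ∫ ω, F (shift^[s] (Y ω)) ∂P ≤ 2 / G + (2 * m ^ 2 / N + ε / 8) := by
    intro s
    set q := s / N
    set r := s % N
    have hs : s = r + q * N := by
      rw [mul_comm]; exact (Nat.mod_add_div s N).symm
    have hr : (r : ℝ) ≤ N := by exact_mod_cast (Nat.mod_lt s hN).le
    have hpt : ∀ ω, F (shift^[s] (Y ω)) ≤ 2 / G + F (Y (τ^[q] ω)) := by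
      intro ω
      rw [iterate_comm_shift hτY, hs, Function.iterate_add_apply]
      set x := shift^[q * N] (Y ω)
      have e : |average f L (shift^[r] x) - average f L x| ≤ 2 / G := by
        refine (abs_average_shift_sub_le (fun x => hφ _) L r x).trans ?_
        rw [hL, Nat.cast_mul, div_le_div_iff₀ (by positivity) hG0']
        nlinarith
      exact (abs_sub_le _ (average f L x) c).trans (by gcongr)
    have hτq := hτ.iterate q
    calc ∫ ω, F (shift^[s] (Y ω)) ∂P ≤ ∫ ω, (2 / G + F (Y (τ^[q] ω))) ∂P :=
          integral_mono (integrable_comp_of_continuous (hYs s) hFc)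
            ((integrable_const _).add
              (integrable_comp_of_continuous (hY.comp hτq.measurable) hFc)) hpt
      _ = 2 / G + ∫ ω, F (Y (τ^[q] ω)) ∂P := by
          have hi : Integrable (fun ω => F (Y (τ^[q] ω))) P :=
            integrable_comp_of_continuous (hY.comp hτq.measurable) hFc
          rw [integral_add (integrable_const _) hi]
          simp
      _ = 2 / G + ∫ ω, F (Y ω) ∂P := by
          congr 1
          have hi := integral_map (μ := P) hτq.measurable.aemeasurable (f := fun ω => F (Y ω))
            (hFc.measurable.comp hY).aestronglyMeasurable
          rw [hτq.map_eq] at hi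
          exact hi.symm
      _ ≤ _ := by gcongr
  refine h.integral_le hFc ?_
  filter_upwards [eventually_ge_atTop (L + m), eventually_gt_atTop 0] with S hS hS0
  have hS0' : (0 : ℝ) < S := by exact_mod_cast hS0
  have hpt : ∀ ω, average F S (V ω) ≤ 4 * m * δ + average F S (Y ω) := by
    intro ω
    have e := abs_average_dev_sub_le hφ (V ω) (Y ω) S hL0 c
    have e2 : 2 * (m : ℝ) * diffs (V ω) (Y ω) (S + L + m) / S ≤ 4 * m * δ := by
      rw [div_le_iff₀ hS0']
      have h1 := hdiff ω (S + L + m)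
      have h2 : ((S + L + m : ℕ) : ℝ) ≤ 2 * S := by
        have : S + L + m ≤ 2 * S := by omega
        exact_mod_cast this
      calc 2 * (m : ℝ) * diffs (V ω) (Y ω) (S + L + m) ≤ 2 * m * (2 * S * δ) := by
            gcongr
            exact h1.trans (by gcongr)
        _ = _ := by ring
    have e3 := (abs_le.1 e).2
    linarith
  have hb := integral_average_le hY hFc (a := 2 / G + (2 * (m : ℝ) ^ 2 / N + ε / 8))
    (by positivity) step1 S
  have hFS := continuous_average hFc S
  have hG3 : 2 / (G : ℝ) ≤ ε / 8 := by
    rw [div_le_iff₀ hG0']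
    rw [div_le_iff₀ hε] at hG2
    linarith
  have hN3 : 2 * (m : ℝ) ^ 2 / N ≤ ε / 8 := by
    have : 2 * (m : ℝ) ^ 2 / N = 2 * m ^ 2 * (1 / N) := by ring
    rw [this]
    calc 2 * (m : ℝ) ^ 2 * (1 / N) ≤ 2 * m ^ 2 * δ := by gcongr
      _ ≤ ε / 8 := by nlinarith
  have hδ3 : 4 * (m : ℝ) * δ ≤ ε / 4 := by nlinarith
  calc ∫ ω, average F S (V ω) ∂P ≤ ∫ ω, (4 * m * δ + average F S (Y ω)) ∂P :=
        integral_mono (integrable_comp_of_continuous hV hFS)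
          ((integrable_const _).add (integrable_comp_of_continuous hY hFS)) hpt
    _ = 4 * m * δ + ∫ ω, average F S (Y ω) ∂P := by
        rw [integral_add (integrable_const _) (integrable_comp_of_continuous hY hFS)]
        simp
    _ ≤ ε := by linarith

end Ergodicity

/-! ### Random points of the hierarchical shift -/

section Product

variable {F : Type*} [Finite F] [Nonempty F] [MeasurableSpace F] [MeasurableSingletonClass F]
  (p : Measure F) [IsProbabilityMeasure p]

/-- The law of a sequence of independent letters with law `p`. -/
noncomputable abbrev iidLaw : Measure (ℕ → F) := Measure.infinitePi fun _ => p

lemma measurePreserving_coord_shift {F : Type*} [MeasurableSpace F] (p : Measure F)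
    [IsProbabilityMeasure p] (T : ℕ) :
    MeasurePreserving (fun (ω : ℕ → F) g => ω (g + T)) (iidLaw p) (iidLaw p) := by
  have hm : Measurable fun (ω : ℕ → F) g => ω (g + T) :=
    measurable_pi_lambda _ fun g => measurable_pi_apply (g + T)
  refine ⟨hm, Measure.eq_infinitePi _ fun s t ht => ?_⟩
  rw [Measure.map_apply hm (MeasurableSet.pi s.countable_toSet fun i _ => ht i)]
  have e : (fun (ω : ℕ → F) g => ω (g + T)) ⁻¹' ((s : Set ℕ).pi t) =
      ((s.map (addRightEmbedding T) : Finset ℕ) : Set ℕ).pi fun i => t (i - T) := by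
    ext ω
    simp [Set.mem_pi]
  rw [e, Measure.infinitePi_pi _ fun i _ => ht _, Finset.prod_map]
  simp

lemma _root_.DependsOn.exists_measurable_comp {γ : Type*} [MeasurableSpace γ]
    {q : (ℕ → F) → γ} {R : Finset ℕ} (hq : DependsOn q R) :
    ∃ Φ : (R → F) → γ, Measurable Φ ∧ q = Φ ∘ fun ω (i : R) => ω i := by
  classical
  refine ⟨fun u => q fun i => if hi : i ∈ R then u ⟨i, hi⟩ else Classical.arbitrary F,
    measurable_of_finite _, ?_⟩
  ext ω
  exact hq fun i hi => by simp [Finset.mem_coe.1 hi]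

lemma indepFun_of_dependsOn {α β : Type*} [MeasurableSpace α] [MeasurableSpace β]
    {f : (ℕ → F) → α} {g : (ℕ → F) → β} {S T : Finset ℕ} (hST : Disjoint S T)
    (hf : DependsOn f S) (hg : DependsOn g T) :
    ProbabilityTheory.IndepFun f g (iidLaw p) := by
  have h := (ProbabilityTheory.iIndepFun_infinitePi (P := fun _ : ℕ => p)
    (X := fun _ x => x) fun _ => measurable_id).indepFun_finset S T hST
    fun i => measurable_pi_apply i
  obtain ⟨Φ, hΦ, rfl⟩ := hf.exists_measurable_comp
  obtain ⟨Ψ, hΨ, rfl⟩ := hg.exists_measurable_comp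
  exact h.comp hΦ hΨ

end Product

variable {k : ℕ}

/-- The sequence of coded blocks. -/
noncomputable def blockSeq (ψ : (Fin (blen k) → Bool) → Fin (blen k) → Bool)
    (ω : ℕ → Fin (blen k) → Bool) : ℕ → Bool :=
  unblock (blen k) fun g => ψ (ω g)

/-- The point of the hierarchical shift built from coded blocks. -/
noncomputable def hierPoint (ψ : (Fin (blen k) → Bool) → Fin (blen k) → Bool)
    (ω : ℕ → Fin (blen k) → Bool) : ℕ → Bool :=
  shadow k (blockSeq ψ ω)

variable (ψ : (Fin (blen k) → Bool) → Fin (blen k) → Bool)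

lemma measurable_blockSeq : Measurable (blockSeq ψ) := by
  refine measurable_pi_lambda _ fun i => ?_
  have h : Measurable fun v : Fin (blen k) → Bool => ψ v (Fin.ofNat (blen k) i) :=
    measurable_of_finite _
  exact h.comp (measurable_pi_apply (i / blen k))

lemma measurable_overwrites_blockSeq (t : ℕ) :
    Measurable fun ω => overwrites k t (blockSeq ψ ω) := by
  refine measurable_pi_lambda _ fun i => ?_
  have h : Measurable fun b : Bool => overwrites k t (fun _ => b) i := measurable_of_finite _
  have e : (fun ω => overwrites k t (blockSeq ψ ω) i) =
      fun ω => (fun b : Bool => overwrites k t (fun _ => b) i) (blockSeq ψ ω i) := by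
    ext ω
    exact overwrites_congr rfl
  rw [e]
  exact h.comp ((measurable_pi_apply i).comp (measurable_blockSeq ψ))

lemma measurable_hierPoint : Measurable (hierPoint ψ) := by
  refine measurable_pi_lambda _ fun i => ?_
  have h : Measurable fun b : Bool => shadow k (fun _ => b) i := measurable_of_finite _
  have e : (fun ω => hierPoint ψ ω i) =
      fun ω => (fun b : Bool => shadow k (fun _ => b) i) (blockSeq ψ ω i) := by
    ext ω
    exact shadow_congr rfl
  rw [e]
  exact h.comp ((measurable_pi_apply i).comp (measurable_blockSeq ψ))

variable {ψ}

lemma hierPoint_mem (hψ : ∀ v, List.ofFn (ψ v) ∈ blocks k) (ω : ℕ → Fin (blen k) → Bool) :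
    hierPoint ψ ω ∈ hierShift :=
  shadow_mem (unblock_mem_aligned fun _ => hψ _)

lemma diffs_shadow_le (y : ℕ → Bool) (t S : ℕ) :
    (diffs (shadow k y) (overwrites k t y) S : ℝ) ≤ S / 2 ^ (k + t + 8) := by
  classical
  refine le_trans ?_ (card_overwritten_le (k + t) S)
  rw [diffs]
  refine Nat.cast_le.2 (Finset.card_le_card fun i hi => ?_)
  simp only [Finset.mem_filter] at *
  refine ⟨hi.1, ?_⟩
  by_contra h
  exact hi.2 (shadow_eq _ h)

lemma blockSeq_shift (T : ℕ) (ω : ℕ → Fin (blen k) → Bool) (i : ℕ) :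
    blockSeq ψ (fun g => ω (g + T)) i = blockSeq ψ ω (T * blen k + i) := by
  have h1 : (T * blen k + i) / blen k = i / blen k + T := by
    rw [Nat.add_comm, Nat.add_mul_div_right _ _ (blen_pos k)]
  have h2 : Fin.ofNat (blen k) (T * blen k + i) = Fin.ofNat (blen k) i := by
    ext
    simp [Fin.ofNat, Nat.add_mod]
  simp only [blockSeq, unblock, h1, h2]

lemma exists_ergodic_isAverageLimit (p : Measure (Fin (blen k) → Bool)) [IsProbabilityMeasure p]
    (hψ : ∀ v, List.ofFn (ψ v) ∈ blocks k) :
    ∃ μ ∈ Msigma hierShift, ErgodicPM μ ∧ IsAverageLimit (iidLaw p) (hierPoint ψ) μ := by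
  obtain ⟨μ, hμ⟩ := exists_isAverageLimit (iidLaw p) (measurable_hierPoint ψ)
  refine ⟨μ, hμ.mem_Msigma (measurable_hierPoint ψ) shiftSpace_hierShift (hierPoint_mem hψ),
    hμ.ergodic (measurable_hierPoint ψ) fun δ hδ => ?_, hμ⟩
  obtain ⟨t, ht⟩ := exists_nat_gt (1 / δ)
  have ht0 : (0 : ℝ) < t := lt_trans (by positivity) ht
  have htδ : 1 / (t : ℝ) ≤ δ := by
    rw [div_lt_iff₀ hδ] at ht
    rw [div_le_iff₀ ht0]
    linarith
  set N := blen (k + t) with hN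
  set T := N / blen k with hT
  have hNT : N = T * blen k := (Nat.div_mul_cancel (blen_dvd (Nat.le_add_right k t))).symm
  have htN : t ≤ N := (Nat.le_add_left t k).trans (blen_strictMono.le_apply)
  refine ⟨N, blen_pos _, ?_, fun ω => overwrites k t (blockSeq ψ ω), fun ω g => ω (g + T),
    measurable_overwrites_blockSeq ψ t, measurePreserving_coord_shift p T, fun ω => ?_,
    fun g g' hgg => ?_, fun ω S => ?_⟩
  · refine le_trans ?_ htδ
    gcongr
  · ext i
    rw [shift_iterate]
    have e : blockSeq ψ (fun g => ω (g + T)) =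
        fun j => blockSeq ψ ω (1 * blen (k + t) + j) := by
      ext j
      rw [blockSeq_shift, one_mul, ← hN, hNT]
    change overwrites k t (blockSeq ψ fun g => ω (g + T)) i = _
    rw [e, overwrites_shift, one_mul]
  · have hdep : ∀ g, DependsOn
        (fun ω => restr N (shift^[g * N] (overwrites k t (blockSeq ψ ω))))
        (Finset.Ico (g * T) ((g + 1) * T) : Finset ℕ) := by
      intro g ω ω' h
      ext j
      change restr N _ j = restr N _ j
      rw [restr_shift_iterate, restr_shift_iterate]
      refine overwrites_congr ?_
      have hmem : (g * N + j) / blen k ∈ (Finset.Ico (g * T) ((g + 1) * T) : Finset ℕ) := by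
        rw [Finset.mem_Ico, Nat.le_div_iff_mul_le (blen_pos k), Nat.div_lt_iff_lt_mul (blen_pos k)]
        have hj := j.2
        constructor
        · rw [mul_assoc, ← hNT]; omega
        · rw [mul_assoc, ← hNT, Nat.succ_mul]; omega
      simp only [blockSeq, unblock]
      rw [h _ (Finset.mem_coe.2 hmem)]
    refine indepFun_of_dependsOn p ?_ (hdep g) (hdep g')
    rw [Finset.disjoint_left]
    intro i hi hi'
    rw [Finset.mem_Ico] at hi hi'
    rcases lt_or_gt_of_ne hgg with hlt | hlt
    · have : (g + 1) * T ≤ g' * T := Nat.mul_le_mul_right _ hlt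
      omega
    · have : (g' + 1) * T ≤ g * T := Nat.mul_le_mul_right _ hlt
      omega
  · refine (diffs_shadow_le _ t S).trans ?_
    rw [div_eq_mul_one_div]
    gcongr
    refine le_trans ?_ htδ
    gcongr
    have h1 : t < 2 ^ t := Nat.lt_two_pow_self
    have h2 : 2 ^ t ≤ 2 ^ (k + t + 8) := Nat.pow_le_pow_right (by norm_num) (by omega)
    exact_mod_cast h1.le.trans h2

/-! ### Uncountably many ergodic measures -/

/-- The law of a constant word whose letter is `true` with probability `θ`. -/
noncomputable def coinLaw (n : ℕ) (θ : ℝ) : Measure (Fin n → Bool) :=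
  ENNReal.ofReal θ • Measure.dirac (fun _ => true) +
    ENNReal.ofReal (1 - θ) • Measure.dirac (fun _ => false)

lemma isProbabilityMeasure_coinLaw {n : ℕ} {θ : ℝ} (h0 : 0 ≤ θ) (h1 : θ ≤ 1) :
    IsProbabilityMeasure (coinLaw n θ) := by
  constructor
  simp only [coinLaw, Measure.add_apply, Measure.smul_apply, measure_univ, smul_eq_mul, mul_one]
  rw [← ENNReal.ofReal_add h0 (by linarith)]
  simp

lemma integral_coinLaw {n : ℕ} {θ : ℝ} (h0 : 0 ≤ θ) (h1 : θ ≤ 1) (f : (Fin n → Bool) → ℝ) :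
    ∫ v, f v ∂(coinLaw n θ) = θ * f (fun _ => true) + (1 - θ) * f (fun _ => false) := by
  have hf : Measurable f := measurable_of_finite f
  have hi : ∀ a : Fin n → Bool, Integrable f (Measure.dirac a) := fun a =>
    integrable_dirac (by simp)
  rw [coinLaw, integral_add_measure ((hi _).smul_measure ENNReal.ofReal_ne_top)
    ((hi _).smul_measure ENNReal.ofReal_ne_top), integral_smul_measure, integral_smul_measure,
    integral_dirac, integral_dirac, ENNReal.toReal_ofReal h0, ENNReal.toReal_ofReal (by linarith)]
  rfl

/-- The indicator of the letter `true`. -/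
def letter (b : Bool) : ℝ := if b then 1 else 0

lemma integral_letter_hierPoint {θ : ℝ} (h0 : 0 ≤ θ) (h1 : θ ≤ 1) (j : ℕ) :
    haveI := isProbabilityMeasure_coinLaw (n := blen 0) h0 h1
    ∫ ω, letter (hierPoint (k := 0) id ω j) ∂(iidLaw (coinLaw (blen 0) θ)) =
      open scoped Classical in
      if j ∈ overwritten 0 then letter (shadow 0 (fun _ => false) j) else θ := by
  have := isProbabilityMeasure_coinLaw (n := blen 0) h0 h1
  split_ifs with hj
  · have : ∀ ω, letter (hierPoint (k := 0) id ω j) = letter (shadow 0 (fun _ => false) j) :=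
      fun ω => by rw [hierPoint, shadow_const hj _ fun _ => false]
    simp [this]
  · have : ∀ ω, letter (hierPoint (k := 0) id ω j) =
        (fun v : Fin (blen 0) → Bool => letter (v (Fin.ofNat (blen 0) j))) (ω (j / blen 0)) :=
      fun ω => by
        have := shadow_eq (k := 0) (t := 0) (blockSeq (k := 0) id ω) hj
        rw [hierPoint, this]
        rfl
    simp only [this]
    have hm := measurePreserving_eval_infinitePi (fun _ : ℕ => coinLaw (blen 0) θ) (j / blen 0)
    have hi := integral_map (μ := iidLaw (coinLaw (blen 0) θ)) hm.measurable.aemeasurable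
      (f := fun v : Fin (blen 0) → Bool => letter (v (Fin.ofNat (blen 0) j)))
      (measurable_of_finite _).aestronglyMeasurable
    rw [hm.map_eq, integral_coinLaw h0 h1] at hi
    refine hi.symm.trans ?_
    simp [letter]

lemma not_countable_ergodic :
    ¬ ({μ : ProbabilityMeasure (ℕ → Bool) | μ ∈ Msigma hierShift ∧ ErgodicPM μ}).Countable := by
  classical
  intro hcount
  have hb : ∀ v : Fin (blen 0) → Bool, List.ofFn (id v) ∈ blocks 0 := by
    intro v
    have : (List.ofFn v).length = 1 := List.length_ofFn
    exact ⟨this.ge, this.le.trans (by norm_num)⟩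
  have hex : ∀ θ : Set.Icc (0 : ℝ) 1, ∃ μ : ProbabilityMeasure (ℕ → Bool),
      (μ ∈ Msigma hierShift ∧ ErgodicPM μ) ∧
      IsAverageLimit (Measure.infinitePi fun _ : ℕ => coinLaw (blen 0) θ)
        (hierPoint (k := 0) id) μ := by
    intro θ
    have := isProbabilityMeasure_coinLaw (n := blen 0) θ.2.1 θ.2.2
    obtain ⟨μ, h1, h2, h3⟩ := exists_ergodic_isAverageLimit (coinLaw (blen 0) θ) hb
    exact ⟨μ, ⟨h1, h2⟩, h3⟩
  choose μ hμ hlim using hex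
  set f : (ℕ → Bool) → ℝ := fun x => letter (x 0) with hf
  have hfc : Continuous f := (continuous_of_discreteTopology (f := letter)).comp (continuous_apply 0)
  have hav : ∀ (θ : Set.Icc (0 : ℝ) 1) (S : ℕ),
      ∫ ω, average f S (hierPoint (k := 0) id ω)
        ∂(Measure.infinitePi fun _ : ℕ => coinLaw (blen 0) θ) =
      (∑ j ∈ Finset.range S,
        if j ∈ overwritten 0 then letter (shadow 0 (fun _ => false) j) else (θ : ℝ)) / S := by
    intro θ S
    have := isProbabilityMeasure_coinLaw (n := blen 0) θ.2.1 θ.2.2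
    simp only [average]
    rw [integral_div, integral_finsetSum]
    · congr 1
      refine Finset.sum_congr rfl fun j _ => ?_
      rw [← integral_letter_hierPoint θ.2.1 θ.2.2 j]
      simp [hf, shift_iterate]
    · exact fun j _ => integrable_comp_of_continuous
        ((measurable_shift_iterate j).comp (measurable_hierPoint _)) hfc
  have hlt : ∀ θ θ' : Set.Icc (0 : ℝ) 1, θ < θ' →
      ∫ x, f x ∂(μ θ : Measure (ℕ → Bool)) < ∫ x, f x ∂(μ θ' : Measure (ℕ → Bool)) := by
    intro θ θ' hθ
    have hθ' : (θ : ℝ) < θ' := hθ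
    have hl := (hlim θ' f hfc).sub (hlim θ f hfc)
    have hge : ∀ᶠ S : ℕ in atTop, ((θ' : ℝ) - θ) / 2 ≤
        ∫ ω, average f S (hierPoint (k := 0) id ω)
          ∂(Measure.infinitePi fun _ : ℕ => coinLaw (blen 0) θ') -
        ∫ ω, average f S (hierPoint (k := 0) id ω)
          ∂(Measure.infinitePi fun _ : ℕ => coinLaw (blen 0) θ) := by
      filter_upwards [eventually_gt_atTop 0] with S hS
      have hS' : (0 : ℝ) < S := by exact_mod_cast hS
      rw [hav, hav, ← sub_div, ← Finset.sum_sub_distrib, le_div_iff₀ hS']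
      have e : ∀ j, ((if j ∈ overwritten 0 then letter (shadow 0 (fun _ => false) j)
          else (θ' : ℝ)) - if j ∈ overwritten 0 then letter (shadow 0 (fun _ => false) j)
          else (θ : ℝ)) = ((θ' : ℝ) - θ) * (1 - if j ∈ overwritten 0 then 1 else 0) := by
        intro j
        split_ifs <;> ring
      simp only [e]
      rw [← Finset.mul_sum, Finset.sum_sub_distrib, Finset.sum_boole]
      have hc := card_overwritten_le 0 S
      have : (S : ℝ) / 2 ^ (0 + 8) ≤ S / 2 := by
        gcongr
        norm_num
      simp only [Finset.sum_const, Finset.card_range, nsmul_eq_mul, mul_one]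
      nlinarith
    have := ge_of_tendsto hl (Nat.hyperfilter_le_atTop hge)
    linarith
  have hinj : Function.Injective μ := by
    intro θ θ' h
    by_contra hne
    rcases lt_or_gt_of_ne hne with hl | hl
    · exact absurd (hlt _ _ hl) (by rw [h]; exact lt_irrefl _)
    · exact absurd (hlt _ _ hl) (by rw [h]; exact lt_irrefl _)
  have h1 : (Set.range μ).Countable := hcount.mono (by rintro _ ⟨θ, rfl⟩; exact hμ θ)
  have h2 : Countable (Set.Icc (0 : ℝ) 1) := by
    have := h1.to_subtype
    exact (Equiv.ofInjective μ hinj).injective.countable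
  have h3 := Cardinal.mk_Icc_real (show (0 : ℝ) < 1 by norm_num)
  have h4 := (Cardinal.mk_le_aleph0_iff (α := Set.Icc (0 : ℝ) 1)).2 h2
  rw [h3] at h4
  exact absurd h4 (not_le.2 Cardinal.aleph0_lt_continuum)

/-! ### Approximation of an invariant measure by limits -/

lemma abs_average_truncate_le {f : (ℕ → Bool) → ℝ} (hf : ∀ x, |f x| ≤ 1) {n : ℕ} (hn : 0 < n)
    {S : ℕ} (hS : 0 < S) (x : ℕ → Bool) :
    |average f S x - average f (S / n * n) x| ≤ 2 * n / S := by
  set T := S / n * n with hT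
  set r := S % n with hr
  have hS' : (0 : ℝ) < S := by exact_mod_cast hS
  have hST : S = T + r := (Nat.div_add_mod' S n).symm
  have hrn : (r : ℝ) ≤ n := by exact_mod_cast (Nat.mod_lt S hn).le
  have hsum := Finset.sum_range_add (fun j => f (shift^[j] x)) T r
  rw [← hST] at hsum
  have hA : (T : ℝ) * average f T x = ∑ j ∈ Finset.range T, f (shift^[j] x) := by
    rcases Nat.eq_zero_or_pos T with h0 | h0
    · simp [h0]
    · have : (T : ℝ) ≠ 0 := by exact_mod_cast h0.ne'
      rw [average]
      field_simp
  have hT1 : |average f T x| ≤ 1 := by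
    rw [average, abs_div, Nat.abs_cast]
    refine div_le_of_le_mul₀ (Nat.cast_nonneg _) zero_le_one ?_
    refine (Finset.abs_sum_le_sum_abs _ _).trans ?_
    calc _ ≤ ∑ _j ∈ Finset.range T, (1 : ℝ) := Finset.sum_le_sum fun j _ => hf _
      _ = _ := by simp
  have hR : |∑ j ∈ Finset.range r, f (shift^[T + j] x)| ≤ r := by
    refine (Finset.abs_sum_le_sum_abs _ _).trans ?_
    calc _ ≤ ∑ _j ∈ Finset.range r, (1 : ℝ) := Finset.sum_le_sum fun j _ => hf _
      _ = _ := by simp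
  have hSr : (S : ℝ) = T + r := by exact_mod_cast hST
  have e : average f S x - average f T x =
      (∑ j ∈ Finset.range r, f (shift^[T + j] x) - r * average f T x) / S := by
    rw [eq_div_iff hS'.ne', sub_mul, average, hsum, div_mul_cancel₀ _ hS'.ne', hSr, ← hA]
    ring
  rw [e, abs_div, Nat.abs_cast]
  gcongr
  calc _ ≤ |∑ j ∈ Finset.range r, f (shift^[T + j] x)| + |r * average f T x| := abs_sub _ _
    _ ≤ r + r * 1 := by
        rw [abs_mul, Nat.abs_cast]
        gcongr
    _ ≤ 2 * n := by linarith

lemma tendsto_of_integral_restr {ν : ℕ → ProbabilityMeasure (ℕ → Bool)}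
    {μ : ProbabilityMeasure (ℕ → Bool)}
    (h : ∀ m (φ : (Fin m → Bool) → ℝ), (∀ v, |φ v| ≤ 1) →
      Tendsto (fun k => ∫ x, φ (restr m x) ∂(ν k : Measure (ℕ → Bool))) atTop
        (𝓝 (∫ x, φ (restr m x) ∂(μ : Measure (ℕ → Bool))))) :
    Tendsto ν atTop (𝓝 μ) := by
  rw [tendsto_iff_ultrafilter]
  intro g hg
  obtain ⟨ν', -, hν'⟩ := (isCompact_univ (X := ProbabilityMeasure (ℕ → Bool))).ultrafilter_le_nhds
    (g.map ν) (by simp)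
  have hν : Tendsto ν g (𝓝 ν') := hν'
  suffices (ν' : Measure (ℕ → Bool)) = μ by rwa [Subtype.ext this] at hν
  refine measure_ext_of_restr fun m T => ?_
  have h1 := ProbabilityMeasure.tendsto_iff_forall_integral_tendsto.1 hν
    (BoundedContinuousFunction.mkOfCompact
      ⟨_, continuous_comp_restr (T.indicator fun _ => (1 : ℝ))⟩)
  have h2 := (h m (T.indicator fun _ => (1 : ℝ)) fun v => by
    by_cases hv : v ∈ T <;> simp [hv]).mono_left hg
  have h3 := tendsto_nhds_unique h1 h2
  have h4 : (ν' : Measure (ℕ → Bool)).real (restr m ⁻¹' T) =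
      (μ : Measure (ℕ → Bool)).real (restr m ⁻¹' T) := by
    rw [measureReal_restr_preimage, measureReal_restr_preimage]
    exact h3
  exact (measureReal_eq_measureReal_iff (measure_ne_top _ _) (measure_ne_top _ _)).1 h4

/-- The law of the first `n` letters. -/
noncomputable abbrev wordLaw (μ : ProbabilityMeasure (ℕ → Bool)) (n : ℕ) :
    Measure (Fin n → Bool) := (μ : Measure (ℕ → Bool)).map (restr n)

instance (μ : ProbabilityMeasure (ℕ → Bool)) (n : ℕ) : IsProbabilityMeasure (wordLaw μ n) :=
  Measure.isProbabilityMeasure_map (measurable_restr n).aemeasurable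

lemma ae_ofFn_mem_lang {X : Set (ℕ → Bool)} {μ : ProbabilityMeasure (ℕ → Bool)}
    (hX : IsClosed X) (hμ : μ ∈ Msigma X) (n : ℕ) : ∀ᵐ v ∂(wordLaw μ n), List.ofFn v ∈ lang X := by
  rw [ae_map_iff (measurable_restr n).aemeasurable MeasurableSet.of_discrete]
  have h1 : (μ : Measure (ℕ → Bool)) X = 1 := by
    rw [← ProbabilityMeasure.ennreal_coeFn_eq_coeFn_toMeasure, hμ.2]
    rfl
  have h2 : ∀ᵐ x ∂(μ : Measure (ℕ → Bool)), x ∈ X :=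
    (mem_ae_iff_prob_eq_one hX.measurableSet).2 h1
  filter_upwards [h2] with x hx
  refine ⟨x, hx, 0, ?_⟩
  refine List.ext_getElem (by simp) fun i h _ => ?_
  simp [restr]

lemma ae_iidLaw_of_ae {F : Type*} [MeasurableSpace F] (p : Measure F) [IsProbabilityMeasure p]
    {Q : F → Prop} (h : ∀ᵐ v ∂p, Q v) : ∀ᵐ ω ∂(iidLaw p), ∀ g, Q (ω g) :=
  ae_all_iff.2 fun g =>
    (measurePreserving_eval_infinitePi (fun _ : ℕ => p) g).quasiMeasurePreserving.ae h

lemma integral_comp_eval {F : Type*} [Finite F] [MeasurableSpace F] [MeasurableSingletonClass F]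
    (p : Measure F) [IsProbabilityMeasure p] (h : F → ℝ) (g : ℕ) :
    ∫ ω, h (ω g) ∂(iidLaw p) = ∫ v, h v ∂p := by
  have hm := measurePreserving_eval_infinitePi (fun _ : ℕ => p) g
  have hi := integral_map (μ := iidLaw p) hm.measurable.aemeasurable (f := h)
    (measurable_of_finite _).aestronglyMeasurable
  rw [hm.map_eq] at hi
  exact hi.symm

lemma restr_shift_unblock {n : ℕ} [NeZero n] (ω : ℕ → Fin n → Bool) (g : ℕ) :
    restr n (shift^[g * n] (unblock n ω)) = ω g := by
  ext j
  rw [restr_shift_iterate, unblock_mul_add]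

lemma abs_integral_average_unblock_sub_le {μ : ProbabilityMeasure (ℕ → Bool)}
    (hμ : invariantPM μ) {n : ℕ} [NeZero n] {m : ℕ} {φ : (Fin m → Bool) → ℝ}
    (hφ : ∀ v, |φ v| ≤ 1) {G : ℕ} (hG : 0 < G)
    (hm : Measurable (unblock n : (ℕ → Fin n → Bool) → ℕ → Bool)) :
    |∫ ω, average (fun x => φ (restr m x)) (G * n) (unblock n ω) ∂(iidLaw (wordLaw μ n)) -
      ∫ x, φ (restr m x) ∂(μ : Measure (ℕ → Bool))| ≤ 4 * m ^ 2 / n := by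
  have hn : 0 < n := Nat.pos_of_ne_zero (NeZero.ne n)
  have hG' : (0 : ℝ) < G := by exact_mod_cast hG
  set f : (ℕ → Bool) → ℝ := fun x => φ (restr m x) with hf
  have hfc : Continuous f := continuous_comp_restr φ
  set h : (Fin n → Bool) → ℝ := fun v => average f n (extend v) with hh
  set c := ∫ v, h v ∂(wordLaw μ n) with hc
  have hpt : ∀ x, |average f n x - h (restr n x)| ≤ 2 * m ^ 2 / n := fun x =>
    abs_average_extend_le hφ x n
  have hmain : ∀ {Ω : Type} [MeasurableSpace Ω] (P : Measure Ω) [IsProbabilityMeasure P]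
      (Y : Ω → ℕ → Bool), Measurable Y → |∫ ω, average f n (Y ω) ∂P -
        ∫ ω, h (restr n (Y ω)) ∂P| ≤ 2 * m ^ 2 / n := by
    intro Ω _ P _ Y hY
    rw [← integral_sub (integrable_comp_of_continuous hY (continuous_average hfc n))
      (integrable_comp_of_continuous hY (continuous_comp_restr h))]
    have := norm_integral_le_of_norm_le_const (μ := P) (C := 2 * (m : ℝ) ^ 2 / n)
      (f := fun ω => average f n (Y ω) - h (restr n (Y ω)))
      (Eventually.of_forall fun ω => hpt (Y ω))
    simpa using this
  have b1 : |∫ x, f x ∂(μ : Measure (ℕ → Bool)) - c| ≤ 2 * m ^ 2 / n := by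
    have h0 := setIntegral_average ⟨measurable_shift, hμ⟩ MeasurableSet.univ Set.preimage_univ
      hfc hn
    rw [setIntegral_univ, setIntegral_univ] at h0
    have h1 : c = ∫ x, h (restr n x) ∂(μ : Measure (ℕ → Bool)) :=
      integral_map (measurable_restr n).aemeasurable
        (measurable_of_finite h).aestronglyMeasurable
    rw [← h0, h1]
    exact hmain _ id measurable_id
  have b2 : |∫ ω, average f (G * n) (unblock n ω) ∂(iidLaw (wordLaw μ n)) - c|
      ≤ 2 * m ^ 2 / n := by
    have hY : ∀ g, Measurable fun ω : ℕ → Fin n → Bool => shift^[g * n] (unblock n ω) :=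
      fun g => (measurable_shift_iterate _).comp hm
    have h1 : ∀ g, |∫ ω, average f n (shift^[g * n] (unblock n ω)) ∂(iidLaw (wordLaw μ n)) - c|
        ≤ 2 * m ^ 2 / n := by
      intro g
      have := hmain (iidLaw (wordLaw μ n)) _ (hY g)
      simp only [restr_shift_unblock] at this
      rwa [integral_comp_eval] at this
    simp only [average_mul]
    rw [integral_div, integral_finsetSum]
    · have : (∑ g ∈ Finset.range G,
          ∫ ω, average f n (shift^[g * n] (unblock n ω)) ∂(iidLaw (wordLaw μ n))) / G - c =
          (∑ g ∈ Finset.range G,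
          (∫ ω, average f n (shift^[g * n] (unblock n ω)) ∂(iidLaw (wordLaw μ n)) - c)) / G := by
        rw [Finset.sum_sub_distrib]
        simp only [Finset.sum_const, Finset.card_range, nsmul_eq_mul]
        field_simp
      rw [this, abs_div, Nat.abs_cast]
      refine div_le_of_le_mul₀ hG'.le (by positivity) ?_
      refine (Finset.abs_sum_le_sum_abs _ _).trans ?_
      calc _ ≤ ∑ _g ∈ Finset.range G, 2 * (m : ℝ) ^ 2 / n := Finset.sum_le_sum fun g _ => h1 g
        _ = _ := by simp [mul_comm]
    · exact fun g _ => integrable_comp_of_continuous (hY g) (continuous_average hfc n)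
  have := abs_sub_le (∫ ω, average f (G * n) (unblock n ω) ∂(iidLaw (wordLaw μ n))) c
    (∫ x, f x ∂(μ : Measure (ℕ → Bool)))
  rw [abs_sub_comm c] at this
  calc _ ≤ _ := this
    _ ≤ 2 * m ^ 2 / n + 2 * m ^ 2 / n := add_le_add b2 b1
    _ = _ := by ring

lemma diffs_mono (x y : ℕ → Bool) {S T : ℕ} (h : S ≤ T) : diffs x y S ≤ diffs x y T :=
  Finset.card_le_card (Finset.filter_subset_filter _ (Finset.range_mono h))

lemma diffs_comm (x y : ℕ → Bool) (S : ℕ) : diffs x y S = diffs y x S := by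
  simp only [diffs, ne_comm]

lemma ae_diffs_blockSeq_le {μ : ProbabilityMeasure (ℕ → Bool)} (hμ : μ ∈ Msigma hierShift)
    {k : ℕ} {ψ : (Fin (blen (k + 1)) → Bool) → Fin (blen (k + 1)) → Bool}
    (hψ : ∀ v, List.ofFn v ∈ lang hierShift →
      ((Finset.univ.filter fun i => v i ≠ ψ v i).card : ℝ) ≤ blen (k + 1) / 2 ^ (k + 6)) :
    ∀ᵐ ω ∂(iidLaw (wordLaw μ (blen (k + 1)))), ∀ S,
      (diffs (blockSeq ψ ω) (unblock (blen (k + 1)) ω) S : ℝ) ≤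
        (S + blen (k + 1)) / 2 ^ (k + 6) := by
  have hn0 : 0 < blen (k + 1) := blen_pos _
  filter_upwards [ae_iidLaw_of_ae _ (ae_ofFn_mem_lang isClosed_hierShift hμ (blen (k + 1)))]
    with ω hω S
  have h1 : S ≤ (S / (blen (k + 1)) + 1) * (blen (k + 1)) := by
    have := Nat.div_add_mod' S (blen (k + 1))
    have := Nat.mod_lt S hn0
    rw [Nat.succ_mul]
    omega
  have h2 : (diffs (blockSeq ψ ω) (unblock (blen (k + 1)) ω) S : ℝ) ≤
      diffs (blockSeq ψ ω) (unblock (blen (k + 1)) ω) ((S / (blen (k + 1)) + 1) * (blen (k + 1))) := by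
    exact_mod_cast diffs_mono _ _ h1
  refine h2.trans ?_
  rw [diffs, card_filter_range_mul]
  push_cast
  calc _ ≤ ∑ _g ∈ Finset.range (S / (blen (k + 1)) + 1), (blen (k + 1) : ℝ) / 2 ^ (k + 6) := by
        refine Finset.sum_le_sum fun g _ => ?_
        refine le_trans (le_of_eq ?_) (hψ (ω g) (hω g))
        congr 2
        ext j
        rw [Finset.mem_filter, Finset.mem_filter, blockSeq, unblock_mul_add, unblock_mul_add,
          ne_comm]
    _ = ((S / (blen (k + 1)) : ℕ) * (blen (k + 1)) + (blen (k + 1))) / 2 ^ (k + 6) := by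
        simp only [Finset.sum_const, Finset.card_range, nsmul_eq_mul]
        push_cast
        ring
    _ ≤ _ := by
        gcongr
        exact_mod_cast Nat.div_mul_le_self S (blen (k + 1))

lemma abs_integral_limit_sub_le {μ ν : ProbabilityMeasure (ℕ → Bool)} (hμ : μ ∈ Msigma hierShift)
    {k : ℕ} {ψ : (Fin (blen (k + 1)) → Bool) → Fin (blen (k + 1)) → Bool}
    (hψ : ∀ v, List.ofFn v ∈ lang hierShift →
      ((Finset.univ.filter fun i => v i ≠ ψ v i).card : ℝ) ≤ blen (k + 1) / 2 ^ (k + 6))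
    (hν : IsAverageLimit (iidLaw (wordLaw μ (blen (k + 1)))) (hierPoint ψ) ν)
    {m : ℕ} {φ : (Fin m → Bool) → ℝ} (hφ : ∀ v, |φ v| ≤ 1) :
    |∫ x, φ (restr m x) ∂(ν : Measure (ℕ → Bool)) -
      ∫ x, φ (restr m x) ∂(μ : Measure (ℕ → Bool))| ≤
      (8 * m + 4 * m ^ 2 + 1) / (k + 1 : ℝ) := by
  classical
  have hn0 : 0 < (blen (k + 1)) := blen_pos _
  have hn0' : (0 : ℝ) < (blen (k + 1)) := by exact_mod_cast hn0
  set p := wordLaw μ (blen (k + 1))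
  set f : (ℕ → Bool) → ℝ := fun x => φ (restr m x) with hf
  have hfc : Continuous f := continuous_comp_restr φ
  have hf1 : ∀ x, |f x| ≤ 1 := fun x => hφ _
  have hd := ae_diffs_blockSeq_le hμ hψ
  have hmU : Measurable (unblock (blen (k + 1)) : (ℕ → Fin (blen (k + 1)) → Bool) → ℕ → Bool) :=
    measurable_blockSeq (k := k + 1) id
  have hmV := measurable_hierPoint ψ
  have hkn : ((k : ℝ) + 1) ≤ (blen (k + 1)) := by exact_mod_cast blen_strictMono.le_apply
  have hk2 : ((k : ℝ) + 1) ≤ 2 ^ (k + 6) := by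
    have h1 : k + 6 < 2 ^ (k + 6) := Nat.lt_two_pow_self
    have h2 : k + 1 ≤ 2 ^ (k + 6) := by omega
    exact_mod_cast h2
  have hlim := ((hν f hfc).sub_const (∫ x, f x ∂(μ : Measure (ℕ → Bool)))).abs
  refine le_of_tendsto hlim (Nat.hyperfilter_le_atTop ?_)
  filter_upwards [eventually_ge_atTop (m + (blen (k + 1))), eventually_ge_atTop (2 * (blen (k + 1)) * (k + 1)),
    eventually_gt_atTop 0] with S hS1 hS2 hS0
  have hS0' : (0 : ℝ) < S := by exact_mod_cast hS0
  have hG : 0 < S / (blen (k + 1)) := Nat.div_pos (by omega) hn0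
  have hSmn : (S : ℝ) + m + (blen (k + 1)) ≤ 2 * S := by
    have : S + m + (blen (k + 1)) ≤ 2 * S := by omega
    exact_mod_cast this
  have hm0 : (0 : ℝ) ≤ m := Nat.cast_nonneg m
  have hpt : ∀ᵐ ω ∂(iidLaw p), ‖average f S (hierPoint ψ ω) -
      average f (S / (blen (k + 1)) * (blen (k + 1))) (unblock (blen (k + 1)) ω)‖ ≤ (8 * m + 1) / (k + 1 : ℝ) := by
    filter_upwards [hd] with ω hω
    have a1 : |average f S (hierPoint ψ ω) - average f S (blockSeq ψ ω)| ≤ 4 * m / (k + 1) := by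
      refine (abs_average_sub_average_le hφ _ _ _).trans ?_
      have h1 := diffs_shadow_le (k := k + 1) (blockSeq ψ ω) 0 (S + m)
      have h2 : ((S + m : ℕ) : ℝ) / 2 ^ (k + 1 + 0 + 8) ≤ 2 * S / (k + 1) := by
        push_cast
        gcongr ?_ / ?_
        · linarith
        · refine hk2.trans ?_
          exact pow_le_pow_right₀ (by norm_num) (by omega)
      rw [div_le_iff₀ hS0']
      calc 2 * (m : ℝ) * diffs (hierPoint ψ ω) (blockSeq ψ ω) (S + m)
          ≤ 2 * m * (2 * S / (k + 1)) := by
            gcongr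
            exact h1.trans h2
        _ = _ := by ring
    have a2 : |average f S (blockSeq ψ ω) - average f S (unblock (blen (k + 1)) ω)| ≤ 4 * m / (k + 1) := by
      refine (abs_average_sub_average_le hφ _ _ _).trans ?_
      have h1 := hω (S + m)
      have h2 : (((S + m : ℕ) : ℝ) + (blen (k + 1))) / 2 ^ (k + 6) ≤ 2 * S / (k + 1) := by
        push_cast
        gcongr
      rw [div_le_iff₀ hS0']
      calc 2 * (m : ℝ) * diffs (blockSeq ψ ω) (unblock (blen (k + 1)) ω) (S + m)
          ≤ 2 * m * (2 * S / (k + 1)) := by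
            gcongr
            exact h1.trans h2
        _ = _ := by ring
    have a3 : |average f S (unblock (blen (k + 1)) ω) - average f (S / (blen (k + 1)) * (blen (k + 1))) (unblock (blen (k + 1)) ω)|
        ≤ 1 / (k + 1) := by
      refine (abs_average_truncate_le hf1 hn0 hS0 _).trans ?_
      rw [div_le_div_iff₀ hS0' (by positivity), one_mul]
      exact_mod_cast hS2
    have a4 := abs_sub_le (average f S (hierPoint ψ ω)) (average f S (blockSeq ψ ω))
      (average f S (unblock (blen (k + 1)) ω))
    have a5 := abs_sub_le (average f S (hierPoint ψ ω)) (average f S (unblock (blen (k + 1)) ω))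
      (average f (S / (blen (k + 1)) * (blen (k + 1))) (unblock (blen (k + 1)) ω))
    rw [Real.norm_eq_abs]
    calc _ ≤ 4 * m / (k + 1) + 4 * m / (k + 1) + 1 / (k + 1 : ℝ) := by linarith
      _ = _ := by ring
  have c1 : |∫ ω, average f S (hierPoint ψ ω) ∂(iidLaw p) -
      ∫ ω, average f (S / (blen (k + 1)) * (blen (k + 1))) (unblock (blen (k + 1)) ω) ∂(iidLaw p)| ≤ (8 * m + 1) / (k + 1 : ℝ) := by
    rw [← integral_sub (integrable_comp_of_continuous hmV (continuous_average hfc S))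
      (integrable_comp_of_continuous hmU (continuous_average hfc _))]
    simpa using norm_integral_le_of_norm_le_const hpt
  have c2 := abs_integral_average_unblock_sub_le hμ.1 hφ hG hmU
  have c3 : 4 * (m : ℝ) ^ 2 / (blen (k + 1)) ≤ 4 * m ^ 2 / (k + 1) := by gcongr
  have c4 := abs_sub_le (∫ ω, average f S (hierPoint ψ ω) ∂(iidLaw p))
    (∫ ω, average f (S / (blen (k + 1)) * (blen (k + 1))) (unblock (blen (k + 1)) ω) ∂(iidLaw p)) (∫ x, f x ∂(μ : Measure (ℕ → Bool)))
  calc _ ≤ (8 * m + 1) / (k + 1 : ℝ) + 4 * m ^ 2 / (k + 1) := by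
        refine c4.trans (add_le_add c1 (c2.trans c3))
    _ = _ := by ring

/-! ### Shannon entropy of finite-valued random variables -/

section Shannon

variable {Ω F G : Type*} [MeasurableSpace Ω] (P : Measure Ω)
  [Fintype F] [MeasurableSpace F] [MeasurableSingletonClass F]
  [Fintype G] [MeasurableSpace G] [MeasurableSingletonClass G]

/-- The Shannon entropy of a finite-valued random variable. -/
noncomputable def ent {F : Type*} [Fintype F] (f : Ω → F) : ℝ :=
  ∑ a, Real.negMulLog (P.real (f ⁻¹' {a}))

lemma ent_nonneg {F : Type*} [Fintype F] [IsProbabilityMeasure P] (f : Ω → F) : 0 ≤ ent P f :=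
  Finset.sum_nonneg fun _ _ => Real.negMulLog_nonneg measureReal_nonneg measureReal_le_one

lemma measureReal_preimage_comp {G : Type*} [IsFiniteMeasure P] [DecidableEq G] {f : Ω → F}
    (hf : Measurable f) (h : F → G) (b : G) :
    P.real ((h ∘ f) ⁻¹' {b}) = ∑ a with h a = b, P.real (f ⁻¹' {a}) := by
  rw [← measureReal_biUnion_finset]
  · congr 1
    ext ω
    simp
  · intro a _ a' _ haa
    exact Disjoint.preimage _ (by simpa using haa)
  · exact fun a _ => hf (measurableSet_singleton a)

lemma sum_measureReal_preimage [IsProbabilityMeasure P] {f : Ω → F} (hf : Measurable f) :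
    ∑ a, P.real (f ⁻¹' {a}) = 1 := by
  have h := measureReal_preimage_comp P hf (fun _ => ()) ()
  simp only [Finset.filter_true] at h
  rw [← h]
  have : ((fun _ => ()) ∘ f) ⁻¹' {()} = Set.univ := by
    ext
    simp
  rw [this, probReal_univ]

lemma ent_comp_le {G : Type*} [Fintype G] [IsFiniteMeasure P] {f : Ω → F} (hf : Measurable f) (h : F → G) :
    ent P (h ∘ f) ≤ ent P f := by
  classical
  rw [ent, ent, ← Finset.sum_fiberwise Finset.univ h]
  refine Finset.sum_le_sum fun b _ => ?_
  set B := P.real ((h ∘ f) ⁻¹' {b}) with hB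
  have hs : B = ∑ a with h a = b, P.real (f ⁻¹' {a}) := measureReal_preimage_comp P hf h b
  have e : Real.negMulLog B = ∑ a with h a = b, -(P.real (f ⁻¹' {a})) * Real.log B := by
    rw [← Finset.sum_mul, Finset.sum_neg_distrib, ← hs, Real.negMulLog]
  rw [e]
  refine Finset.sum_le_sum fun a ha => ?_
  rw [Real.negMulLog]
  rcases (measureReal_nonneg (μ := P) (s := f ⁻¹' {a})).eq_or_lt with h0 | h0
  · simp [← h0]
  · have hle : P.real (f ⁻¹' {a}) ≤ B := by
      rw [hs]
      exact Finset.single_le_sum (f := fun a => P.real (f ⁻¹' {a}))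
        (fun _ _ => measureReal_nonneg) ha
    have := Real.log_le_log h0 hle
    rw [neg_mul, neg_mul, neg_le_neg_iff]
    gcongr

lemma sum_negMulLog_le_of_sum_eq {ι : Type*} (s : Finset ι) {r t : ι → ℝ}
    (hr : ∀ i ∈ s, 0 ≤ r i) (ht : ∀ i ∈ s, 0 ≤ t i) (hrt : ∀ i ∈ s, t i = 0 → r i = 0)
    (hsum : ∑ i ∈ s, t i ≤ ∑ i ∈ s, r i) :
    ∑ i ∈ s, Real.negMulLog (r i) ≤ ∑ i ∈ s, -(r i * Real.log (t i)) := by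
  have h : ∀ i ∈ s, Real.negMulLog (r i) ≤ -(r i * Real.log (t i)) + (t i - r i) := by
    intro i hi
    rcases (hr i hi).eq_or_lt with h0 | h0
    · simp [← h0, ht i hi]
    · have ht0 : 0 < t i := lt_of_le_of_ne (ht i hi) fun h => h0.ne' (hrt i hi h.symm)
      have h1 := Real.log_le_sub_one_of_pos (div_pos ht0 h0)
      rw [Real.log_div ht0.ne' h0.ne'] at h1
      have h2 := mul_le_mul_of_nonneg_left h1 h0.le
      have h3 : r i * (t i / r i - 1) = t i - r i := by field_simp
      rw [Real.negMulLog]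
      linarith
  have := Finset.sum_le_sum h
  rw [Finset.sum_add_distrib, Finset.sum_sub_distrib] at this
  linarith

lemma ent_prod_le [IsProbabilityMeasure P] {f : Ω → F} {g : Ω → G} (hf : Measurable f)
    (hg : Measurable g) : ent P (fun ω => (f ω, g ω)) ≤ ent P f + ent P g := by
  classical
  set r : F × G → ℝ := fun c => P.real ((fun ω => (f ω, g ω)) ⁻¹' {c}) with hr
  set a : F → ℝ := fun x => P.real (f ⁻¹' {x}) with ha
  set b : G → ℝ := fun y => P.real (g ⁻¹' {y}) with hb
  have hfg : Measurable fun ω => (f ω, g ω) := hf.prodMk hg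
  have ma : ∀ x, a x = ∑ y, r (x, y) := fun x => by
    have h := measureReal_preimage_comp P hfg Prod.fst x
    rw [Finset.sum_filter, Fintype.sum_prod_type, Finset.sum_eq_single x] at h
    · simp only [if_true] at h
      exact h
    · intro x' _ hx'
      simp [hx']
    · simp
  have mb : ∀ y, b y = ∑ x, r (x, y) := fun y => by
    have h := measureReal_preimage_comp P hfg Prod.snd y
    rw [Finset.sum_filter, Fintype.sum_prod_type_right, Finset.sum_eq_single y] at h
    · simp only [if_true] at h
      exact h
    · intro x' _ hx'
      simp [hx']
    · simp
  have hra : ∀ c, r c ≤ a c.1 := fun c => by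
    refine measureReal_mono fun ω hω => ?_
    simp only [Set.mem_preimage, Set.mem_singleton_iff] at *
    rw [← hω]
  have hrb : ∀ c, r c ≤ b c.2 := fun c => by
    refine measureReal_mono fun ω hω => ?_
    simp only [Set.mem_preimage, Set.mem_singleton_iff] at *
    rw [← hω]
  have hr0 : ∀ c, 0 ≤ r c := fun c => measureReal_nonneg
  have key := sum_negMulLog_le_of_sum_eq Finset.univ (r := r) (t := fun c => a c.1 * b c.2)
    (fun c _ => hr0 c) (fun c _ => mul_nonneg measureReal_nonneg measureReal_nonneg)
    (fun c _ h => by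
      rcases mul_eq_zero.1 h with h | h
      · exact le_antisymm (h ▸ hra c) (hr0 c)
      · exact le_antisymm (h ▸ hrb c) (hr0 c))
    (by
      rw [Fintype.sum_prod_type, ← Finset.sum_mul_sum, sum_measureReal_preimage P hf,
        sum_measureReal_preimage P hg, sum_measureReal_preimage P hfg, one_mul])
  refine key.trans (le_of_eq ?_)
  have h1 : ∀ c, -(r c * Real.log (a c.1 * b c.2)) =
      -(r c * Real.log (a c.1)) + -(r c * Real.log (b c.2)) := fun c => by
    rcases (hr0 c).eq_or_lt with h0 | h0
    · simp [← h0]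
    · rw [Real.log_mul (h0.trans_le (hra c)).ne' (h0.trans_le (hrb c)).ne']
      ring
  simp only [h1, Finset.sum_add_distrib]
  congr 1
  · rw [Fintype.sum_prod_type, ent]
    refine Finset.sum_congr rfl fun x _ => ?_
    change _ = Real.negMulLog (a x)
    rw [Finset.sum_neg_distrib, Real.negMulLog, neg_mul]
    nth_rw 1 [ma]
    rw [Finset.sum_mul]
  · rw [Fintype.sum_prod_type_right, ent]
    refine Finset.sum_congr rfl fun y _ => ?_
    change _ = Real.negMulLog (b y)
    rw [Finset.sum_neg_distrib, Real.negMulLog, neg_mul]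
    nth_rw 1 [mb]
    rw [Finset.sum_mul]

lemma ent_pi_le [IsProbabilityMeasure P] {n : ℕ} {f : Fin n → Ω → F}
    (hf : ∀ j, Measurable (f j)) : ent P (fun ω j => f j ω) ≤ ∑ j, ent P (f j) := by
  induction n with
  | zero =>
    have h : ent P (fun ω (j : Fin 0) => f j ω) = 0 := by
      have hm : Measurable fun ω (j : Fin 0) => f j ω := measurable_pi_lambda _ hf
      have := sum_measureReal_preimage P hm
      rw [Fintype.sum_unique] at this
      rw [ent, Fintype.sum_unique, this, Real.negMulLog_one]
    simp [h]
  | succ n ih =>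
    have hm : Measurable fun ω (j : Fin n) => f j.succ ω :=
      measurable_pi_lambda _ fun j => hf j.succ
    have e : (fun ω j => f j ω) = (fun c : F × (Fin n → F) => (Fin.cons c.1 c.2 : Fin (n + 1) → F))
        ∘ fun ω => (f 0 ω, fun j : Fin n => f j.succ ω) := by
      ext ω j
      refine Fin.cases ?_ (fun j => ?_) j <;> simp
    rw [e, Fin.sum_univ_succ]
    refine (ent_comp_le P ((hf 0).prodMk hm) _).trans ((ent_prod_le P (hf 0) hm).trans ?_)
    gcongr
    exact ih fun j => hf j.succ

lemma ent_bool [IsProbabilityMeasure P] {f : Ω → Bool} (hf : Measurable f) :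
    ent P f = Real.binEntropy (P.real (f ⁻¹' {true})) := by
  have h := sum_measureReal_preimage P hf
  rw [Fintype.sum_bool] at h
  rw [ent, Fintype.sum_bool, Real.binEntropy_eq_negMulLog_add_negMulLog_one_sub,
    ← eq_sub_of_add_eq' h]

lemma ent_le_add_sum_binEntropy [IsProbabilityMeasure P] {n : ℕ} {f g : Ω → Fin n → Bool}
    (hf : Measurable f) (hg : Measurable g) :
    ent P f ≤ ent P g + ∑ j, Real.binEntropy (P.real {ω | f ω j ≠ g ω j}) := by
  have hD : ∀ j, Measurable fun ω => xor (f ω j) (g ω j) := fun j =>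
    (measurable_of_finite fun c : (Fin n → Bool) × (Fin n → Bool) => xor (c.1 j) (c.2 j)).comp
      (hf.prodMk hg)
  have e : f = (fun c : (Fin n → Bool) × (Fin n → Bool) => fun j => xor (c.1 j) (c.2 j)) ∘
      fun ω => (g ω, fun j => xor (f ω j) (g ω j)) := by
    ext ω j
    simp only [Function.comp]
    cases f ω j <;> cases g ω j <;> rfl
  have hm : Measurable fun ω j => xor (f ω j) (g ω j) := measurable_pi_lambda _ hD
  calc ent P f ≤ ent P fun ω => (g ω, fun j => xor (f ω j) (g ω j)) := by
        conv_lhs => rw [e]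
        exact ent_comp_le P (hg.prodMk hm) _
    _ ≤ ent P g + ent P (fun ω j => xor (f ω j) (g ω j)) := ent_prod_le P hg hm
    _ ≤ ent P g + ∑ j, ent P (fun ω => xor (f ω j) (g ω j)) := by
        gcongr
        exact ent_pi_le P hD
    _ = _ := by
        congr 1
        refine Finset.sum_congr rfl fun j _ => ?_
        rw [ent_bool P (hD j)]
        congr 2
        ext ω
        simp only [Set.mem_preimage, Set.mem_singleton_iff, Set.mem_ofPred_eq]
        cases f ω j <;> cases g ω j <;> simp

lemma sum_negMulLog_prod {F : Type*} [Fintype F] {p : F → ℝ} (hp : ∑ a, p a = 1) (q : ℕ) :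
    ∑ w : Fin q → F, Real.negMulLog (∏ i, p (w i)) = q * ∑ a, Real.negMulLog (p a) := by
  classical
  have hprod : ∀ q : ℕ, ∑ w : Fin q → F, ∏ i, p (w i) = 1 := fun q => by
    rw [← Fintype.piFinset_univ, ← Finset.prod_univ_sum]
    simp [hp]
  induction q with
  | zero => simp
  | succ q ih =>
    rw [← (Fin.consEquiv fun _ => F).sum_comp, Fintype.sum_prod_type]
    simp only [Fin.consEquiv_apply, Fin.prod_univ_succ, Fin.cons_zero, Fin.cons_succ,
      Real.negMulLog_mul, Finset.sum_add_distrib]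
    simp only [← Finset.sum_mul, ← Finset.mul_sum, hprod, hp, ih]
    push_cast
    ring

lemma ent_iid (p : Measure F) [IsProbabilityMeasure p] (g q : ℕ) :
    ent (iidLaw p) (fun ω (i : Fin q) => ω (g + i)) = q * ent p id := by
  have hp := sum_measureReal_preimage p (f := id) measurable_id
  rw [ent, ent, ← sum_negMulLog_prod hp]
  refine Finset.sum_congr rfl fun w _ => ?_
  congr 1
  have e : (fun (ω : ℕ → F) (i : Fin q) => ω (g + i)) ⁻¹' {w} =
      (((Finset.univ : Finset (Fin q)).map
        (Fin.valEmbedding.trans (addLeftEmbedding g)) : Finset ℕ) : Set ℕ).pi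
        fun n => if h : n - g < q then {w ⟨n - g, h⟩} else ∅ := by
    ext ω
    simp [Set.mem_pi, funext_iff]
  rw [e, measureReal_def, Measure.infinitePi_pi, Finset.prod_map, ENNReal.toReal_prod]
  · refine Finset.prod_congr rfl fun i _ => ?_
    simp [measureReal_def]
  · intro n _
    split_ifs
    exacts [measurableSet_singleton _, MeasurableSet.empty]

end Shannon

/-! ### Entropy of shift-invariant measures -/

lemma blockEntropy_eq_ent (μ : ProbabilityMeasure (ℕ → Bool)) (n : ℕ) :
    blockEntropy μ n = ent (μ : Measure (ℕ → Bool)) (restr n) := by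
  rw [blockEntropy, ent, ← Finset.sum_neg_distrib]
  refine Finset.sum_congr rfl fun w _ => ?_
  have e : {x : ℕ → Bool | ∀ k : Fin n, x (k : ℕ) = w k} = restr n ⁻¹' {w} := by
    ext x
    exact funext_iff.symm
  rw [cylMeasure, e, Real.negMulLog, neg_mul]
  rfl

lemma ent_wordLaw (μ : ProbabilityMeasure (ℕ → Bool)) (n : ℕ) :
    ent (wordLaw μ n) id = blockEntropy μ n := by
  rw [blockEntropy_eq_ent, ent, ent]
  refine Finset.sum_congr rfl fun w _ => ?_
  rw [map_measureReal_apply (measurable_restr n) MeasurableSet.of_discrete]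
  rfl

lemma ent_restr_shift {μ : ProbabilityMeasure (ℕ → Bool)} (hμ : invariantPM μ) (m n : ℕ) :
    ent (μ : Measure (ℕ → Bool)) (restr n ∘ shift^[m]) = blockEntropy μ n := by
  rw [blockEntropy_eq_ent, ent, ent]
  refine Finset.sum_congr rfl fun w _ => ?_
  have hinv : MeasurePreserving (shift : (ℕ → Bool) → ℕ → Bool) (μ : Measure (ℕ → Bool)) μ :=
    ⟨measurable_shift, hμ⟩
  rw [Set.preimage_comp, (hinv.iterate m).measureReal_preimage
    (measurable_restr n MeasurableSet.of_discrete).nullMeasurableSet]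

lemma subadditive_blockEntropy {μ : ProbabilityMeasure (ℕ → Bool)} (hμ : invariantPM μ) :
    Subadditive (blockEntropy μ) := by
  intro m n
  rw [← ent_restr_shift hμ m n, blockEntropy_eq_ent, blockEntropy_eq_ent]
  have h1 := measurable_restr m
  have h2 : Measurable (restr n ∘ shift^[m] : (ℕ → Bool) → Fin n → Bool) :=
    (measurable_restr n).comp (measurable_shift_iterate m)
  have e : (restr (m + n) : (ℕ → Bool) → Fin (m + n) → Bool) =
      (fun c : (Fin m → Bool) × (Fin n → Bool) => Fin.append c.1 c.2) ∘
        fun x => (restr m x, (restr n ∘ shift^[m]) x) := by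
    ext x j
    simp only [Function.comp]
    refine Fin.addCases (fun j => ?_) (fun j => ?_) j
    · rw [Fin.append_left]
      rfl
    · rw [Fin.append_right, restr_shift_iterate]
      rfl
  rw [e]
  exact (ent_comp_le _ (h1.prodMk h2) _).trans (ent_prod_le _ h1 h2)

lemma bddBelow_blockEntropy_div (μ : ProbabilityMeasure (ℕ → Bool)) :
    BddBelow (Set.range fun n => blockEntropy μ n / (n : ℝ)) := by
  refine ⟨0, ?_⟩
  rintro _ ⟨n, rfl⟩
  change 0 ≤ blockEntropy μ n / n
  rw [blockEntropy_eq_ent]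
  exact div_nonneg (ent_nonneg _ _) (Nat.cast_nonneg _)

lemma tendsto_blockEntropy_div {μ : ProbabilityMeasure (ℕ → Bool)} (hμ : invariantPM μ) :
    Tendsto (fun n => blockEntropy μ n / (n : ℝ)) atTop (𝓝 (ksEntropy μ)) := by
  have h := (subadditive_blockEntropy hμ).tendsto_lim (bddBelow_blockEntropy_div μ)
  rwa [ksEntropy, h.limsup_eq]

lemma ksEntropy_le {μ : ProbabilityMeasure (ℕ → Bool)} (hμ : invariantPM μ) {n : ℕ}
    (hn : n ≠ 0) : ksEntropy μ ≤ blockEntropy μ n / n := by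
  have h := (subadditive_blockEntropy hμ).tendsto_lim (bddBelow_blockEntropy_div μ)
  rw [tendsto_nhds_unique (tendsto_blockEntropy_div hμ) h]
  exact (subadditive_blockEntropy hμ).lim_le_div (bddBelow_blockEntropy_div μ) hn

lemma continuous_blockEntropy (n : ℕ) :
    Continuous fun μ : ProbabilityMeasure (ℕ → Bool) => blockEntropy μ n := by
  simp only [blockEntropy_eq_ent, ent]
  refine continuous_finsetSum _ fun w _ => Real.continuous_negMulLog.comp ?_
  simp only [measureReal_restr_preimage]
  exact ProbabilityMeasure.continuous_integral_boundedContinuousFunction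
    (BoundedContinuousFunction.mkOfCompact
      ⟨_, continuous_comp_restr (({w} : Set (Fin n → Bool)).indicator fun _ => (1 : ℝ))⟩)

lemma IsAverageLimit.le_blockEntropy {Ω : Type*} [MeasurableSpace Ω] {P : Measure Ω}
    [IsProbabilityMeasure P] {V : Ω → ℕ → Bool} {μ : ProbabilityMeasure (ℕ → Bool)}
    (h : IsAverageLimit P V μ) (hV : Measurable V) {L : ℕ} {c : ℝ}
    (hc : ∀ᶠ S : ℕ in atTop,
      c ≤ (∑ s ∈ Finset.range S, ent P fun ω => restr L (shift^[s] (V ω))) / S) :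
    c ≤ blockEntropy μ L := by
  set φ : (Fin L → Bool) → (Fin L → Bool) → ℝ :=
    fun w => ({w} : Set (Fin L → Bool)).indicator fun _ => (1 : ℝ) with hφ
  have hφc : ∀ w, Continuous fun x => φ w (restr L x) := fun w => continuous_comp_restr (φ w)
  have hlim : Tendsto (fun S : ℕ => ∑ w, Real.negMulLog
      (∫ ω, average (fun x => φ w (restr L x)) S (V ω) ∂P)) (hyperfilter ℕ : Filter ℕ)
      (𝓝 (blockEntropy μ L)) := by
    rw [blockEntropy_eq_ent, ent]
    refine tendsto_finsetSum _ fun w _ => ?_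
    rw [measureReal_restr_preimage]
    exact (Real.continuous_negMulLog.tendsto _).comp (h _ (hφc w))
  refine ge_of_tendsto hlim (Nat.hyperfilter_le_atTop ?_)
  filter_upwards [hc, eventually_gt_atTop 0] with S hS hS0
  have hS0' : (0 : ℝ) < S := by exact_mod_cast hS0
  refine hS.trans ?_
  simp only [ent]
  rw [Finset.sum_comm, Finset.sum_div]
  refine Finset.sum_le_sum fun w _ => ?_
  have e : ∫ ω, average (fun x => φ w (restr L x)) S (V ω) ∂P =
      ∑ s ∈ Finset.range S, (1 / (S : ℝ)) •
        P.real ((fun ω => restr L (shift^[s] (V ω))) ⁻¹' {w}) := by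
    simp only [average]
    rw [integral_div, integral_finsetSum, Finset.sum_div]
    · refine Finset.sum_congr rfl fun s _ => ?_
      have hm : MeasurableSet ((fun ω => restr L (shift^[s] (V ω))) ⁻¹' {w}) :=
        ((measurable_restr L).comp ((measurable_shift_iterate s).comp hV))
          (measurableSet_singleton w)
      rw [← integral_indicator_one hm, smul_eq_mul, div_eq_mul_one_div, mul_comm]
      rfl
    · exact fun s _ => integrable_comp_of_continuous ((measurable_shift_iterate s).comp hV) (hφc w)
  rw [e]
  refine le_trans (le_of_eq ?_) (Real.concaveOn_negMulLog.le_map_sum (fun _ _ => by positivity)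
    (by simp [hS0'.ne']) fun s _ => measureReal_nonneg)
  rw [Finset.sum_div]
  refine Finset.sum_congr rfl fun s _ => ?_
  rw [smul_eq_mul, div_eq_mul_one_div, mul_comm]

lemma sum_binEntropy_le {S : ℕ} (hS : 0 < S) {d : ℕ → ℝ} (hd0 : ∀ s, 0 ≤ d s)
    (hd1 : ∀ s, d s ≤ 1) {δ : ℝ} (hδ : δ ≤ 2⁻¹) (h : ∑ s ∈ Finset.range S, d s ≤ S * δ) :
    ∑ s ∈ Finset.range S, Real.binEntropy (d s) ≤ S * Real.binEntropy δ := by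
  have hS' : (0 : ℝ) < S := by exact_mod_cast hS
  have hJ := Real.strictConcave_binEntropy.concaveOn.le_map_sum (t := Finset.range S)
    (w := fun _ => 1 / (S : ℝ)) (p := d) (fun _ _ => by positivity) (by simp [hS'.ne'])
    fun s _ => ⟨hd0 s, hd1 s⟩
  simp only [smul_eq_mul] at hJ
  rw [← Finset.mul_sum, ← Finset.mul_sum] at hJ
  have h0 : 0 ≤ 1 / (S : ℝ) * ∑ s ∈ Finset.range S, d s :=
    mul_nonneg (by positivity) (Finset.sum_nonneg fun s _ => hd0 s)
  have h1 : 1 / (S : ℝ) * ∑ s ∈ Finset.range S, d s ≤ δ := by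
    rw [one_div, inv_mul_le_iff₀ hS']
    exact h
  have h2 := Real.binEntropy_strictMonoOn.monotoneOn ⟨h0, h1.trans hδ⟩ ⟨h0.trans h1, hδ⟩ h1
  have h3 := hJ.trans h2
  rwa [one_div, inv_mul_le_iff₀ hS'] at h3

lemma diffs_le_add (x y z : ℕ → Bool) (S : ℕ) : diffs x z S ≤ diffs x y S + diffs y z S := by
  classical
  refine (Finset.card_le_card fun i hi => ?_).trans (Finset.card_union_le _ _)
  simp only [Finset.mem_union, Finset.mem_filter] at *
  by_cases h : x i = y i
  · exact Or.inr ⟨hi.1, h ▸ hi.2⟩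
  · exact Or.inl ⟨hi.1, h⟩

lemma mul_blockEntropy_le_ent_unblock (μ : ProbabilityMeasure (ℕ → Bool)) {n : ℕ} [NeZero n]
    (q s : ℕ) (hm : Measurable (unblock n : (ℕ → Fin n → Bool) → ℕ → Bool)) :
    q * blockEntropy μ n ≤ ent (iidLaw (wordLaw μ n))
      fun ω => restr ((q + 1) * n) (shift^[s] (unblock n ω)) := by
  have hn : 0 < n := Nat.pos_of_ne_zero (NeZero.ne n)
  set g := s / n + 1 with hg
  have h1 : s ≤ g * n := by
    have := Nat.div_add_mod' s n
    have := Nat.mod_lt s hn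
    rw [hg, Nat.succ_mul]
    omega
  have h2 : g * n ≤ s + n := by
    have := Nat.div_mul_le_self s n
    rw [hg, Nat.succ_mul]
    omega
  rw [← ent_wordLaw, ← ent_iid (wordLaw μ n) g q]
  have hlt : ∀ (i : Fin q) (j : Fin n), g * n - s + i * n + j < (q + 1) * n := fun i j => by
    have h3 := Nat.mul_le_mul_right n (Nat.succ_le_of_lt i.2)
    have h4 := j.2
    rw [Nat.succ_mul (i : ℕ)] at h3
    rw [Nat.succ_mul q]
    omega
  have e : (fun (ω : ℕ → Fin n → Bool) (i : Fin q) => ω (g + i)) =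
      (fun (v : Fin ((q + 1) * n) → Bool) (i : Fin q) (j : Fin n) =>
        v ⟨g * n - s + i * n + j, hlt i j⟩) ∘
      fun ω => restr ((q + 1) * n) (shift^[s] (unblock n ω)) := by
    ext ω i j
    simp only [Function.comp]
    rw [restr_shift_iterate, ← unblock_mul_add ω (g + i) j]
    congr 1
    rw [Nat.add_mul]
    change _ = s + (g * n - s + i * n + j)
    omega
  rw [e]
  exact ent_comp_le _ ((measurable_restr _).comp ((measurable_shift_iterate s).comp hm)) _

lemma sub_binEntropy_le_ksEntropy {μ ν : ProbabilityMeasure (ℕ → Bool)}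
    (hμ : μ ∈ Msigma hierShift) (hνi : invariantPM ν)
    {k : ℕ} {ψ : (Fin (blen (k + 1)) → Bool) → Fin (blen (k + 1)) → Bool}
    (hψ : ∀ v, List.ofFn v ∈ lang hierShift →
      ((Finset.univ.filter fun i => v i ≠ ψ v i).card : ℝ) ≤ blen (k + 1) / 2 ^ (k + 6))
    (hν : IsAverageLimit (iidLaw (wordLaw μ (blen (k + 1)))) (hierPoint ψ) ν) :
    ksEntropy μ - Real.binEntropy (1 / 2 ^ (k + 4)) ≤ ksEntropy ν := by
  have hn0 : 0 < blen (k + 1) := blen_pos _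
  have hn0' : (0 : ℝ) < blen (k + 1) := by exact_mod_cast hn0
  set P := iidLaw (wordLaw μ (blen (k + 1))) with hP
  set δ : ℝ := 1 / 2 ^ (k + 4) with hδ
  set b := Real.binEntropy δ
  have hδ2 : δ ≤ 2⁻¹ := by
    rw [hδ, ← one_div]
    gcongr
    calc (2 : ℝ) = 2 ^ 1 := by norm_num
      _ ≤ 2 ^ (k + 4) := pow_le_pow_right₀ (by norm_num) (by omega)
  have hmU : Measurable (unblock (blen (k + 1)) :
      (ℕ → Fin (blen (k + 1)) → Bool) → ℕ → Bool) := measurable_blockSeq (k := k + 1) id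
  have hmV := measurable_hierPoint ψ
  set d : ℕ → ℝ := fun i => P.real {ω | unblock (blen (k + 1)) ω i ≠ hierPoint ψ ω i} with hd
  have hd0 : ∀ i, 0 ≤ d i := fun _ => measureReal_nonneg
  have hd1 : ∀ i, d i ≤ 1 := fun _ => measureReal_le_one
  have hdm : ∀ i, MeasurableSet {ω | unblock (blen (k + 1)) ω i ≠ hierPoint ψ ω i} := fun i =>
    (measurableSet_eq_fun ((measurable_pi_apply i).comp hmU)
      ((measurable_pi_apply i).comp hmV)).compl
  have hdsum : ∀ T, ∑ i ∈ Finset.range T, d i ≤ (2 * T + blen (k + 1)) / 2 ^ (k + 6) := by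
    intro T
    have e : ∑ i ∈ Finset.range T, d i =
        ∫ ω, (diffs (unblock (blen (k + 1)) ω) (hierPoint ψ ω) T : ℝ) ∂P := by
      simp only [diffs_eq_sum]
      rw [integral_finsetSum]
      · refine Finset.sum_congr rfl fun i _ => ?_
        change P.real {ω | unblock (blen (k + 1)) ω i ≠ hierPoint ψ ω i} = _
        rw [← integral_indicator_one (hdm i)]
        refine integral_congr_ae (Eventually.of_forall fun ω => ?_)
        simp [Set.indicator]
      · intro i _
        have : Integrable ({ω | unblock (blen (k + 1)) ω i ≠ hierPoint ψ ω i}.indicator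
            fun _ => (1 : ℝ)) P := (integrable_const 1).indicator (hdm i)
        refine this.congr (Eventually.of_forall fun ω => ?_)
        simp [Set.indicator]
    rw [e]
    have h1 : ∀ᵐ ω ∂P, ‖(diffs (unblock (blen (k + 1)) ω) (hierPoint ψ ω) T : ℝ)‖ ≤
        (2 * T + blen (k + 1)) / 2 ^ (k + 6) := by
      filter_upwards [ae_diffs_blockSeq_le hμ hψ] with ω hω
      rw [Real.norm_eq_abs, abs_of_nonneg (Nat.cast_nonneg _)]
      have h2 := hω T
      have h3 := diffs_shadow_le (k := k + 1) (blockSeq ψ ω) 0 T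
      have h4 : (diffs (unblock (blen (k + 1)) ω) (hierPoint ψ ω) T : ℝ) ≤
          diffs (blockSeq ψ ω) (unblock (blen (k + 1)) ω) T +
            diffs (hierPoint ψ ω) (blockSeq ψ ω) T := by
        rw [diffs_comm (blockSeq ψ ω), diffs_comm (hierPoint ψ ω)]
        exact_mod_cast diffs_le_add _ _ _ _
      have h5 : (T : ℝ) / 2 ^ (k + 1 + 0 + 8) ≤ T / 2 ^ (k + 6) := by
        refine div_le_div_of_nonneg_left (Nat.cast_nonneg T) (by positivity) ?_
        exact pow_le_pow_right₀ (by norm_num) (by omega)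
      calc _ ≤ (T + blen (k + 1) : ℝ) / 2 ^ (k + 6) + T / 2 ^ (k + 6) :=
            h4.trans (add_le_add h2 (h3.trans h5))
        _ = _ := by ring
    have h6 := norm_integral_le_of_norm_le_const h1
    rw [probReal_univ, mul_one] at h6
    exact (Real.le_norm_self _).trans h6
  have hblock : ∀ q : ℕ, q * blockEntropy μ (blen (k + 1)) - ((q + 1) * blen (k + 1) : ℕ) * b ≤
      blockEntropy ν ((q + 1) * blen (k + 1)) := by
    intro q
    set L := (q + 1) * blen (k + 1) with hL
    refine hν.le_blockEntropy hmV ?_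
    filter_upwards [eventually_ge_atTop (2 * L + blen (k + 1)), eventually_gt_atTop 0]
      with S hS hS0
    have hS0' : (0 : ℝ) < S := by exact_mod_cast hS0
    have hSL : (2 * L + blen (k + 1) : ℝ) ≤ S := by exact_mod_cast hS
    have hdS : ∀ j : Fin L, ∑ s ∈ Finset.range S, d (s + j) ≤ S * δ := by
      intro j
      have hj := j.2
      refine (sum_range_add_le hd0 (U := S + L) (by omega)).trans ((hdsum _).trans ?_)
      rw [hδ, mul_one_div, div_le_div_iff₀ (by positivity) (by positivity)]
      push_cast
      calc (2 * (S + L : ℝ) + blen (k + 1)) * 2 ^ (k + 4) ≤ (4 * S) * 2 ^ (k + 4) := by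
            gcongr
            linarith
        _ = _ := by ring
    have hs : ∀ s, q * blockEntropy μ (blen (k + 1)) -
        ∑ j : Fin L, Real.binEntropy (d (s + j)) ≤
        ent P fun ω => restr L (shift^[s] (hierPoint ψ ω)) := by
      intro s
      have h1 := mul_blockEntropy_le_ent_unblock μ q s hmU
      have h2 := ent_le_add_sum_binEntropy P
        (f := fun ω => restr L (shift^[s] (unblock (blen (k + 1)) ω)))
        (g := fun ω => restr L (shift^[s] (hierPoint ψ ω)))
        ((measurable_restr _).comp ((measurable_shift_iterate s).comp hmU))
        ((measurable_restr _).comp ((measurable_shift_iterate s).comp hmV))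
      simp only [restr_shift_iterate] at h2
      have h3 := h1.trans h2
      linarith
    rw [le_div_iff₀ hS0']
    refine le_trans ?_ (Finset.sum_le_sum fun s _ => hs s)
    rw [Finset.sum_sub_distrib, Finset.sum_comm]
    have hJ : ∑ j : Fin L, ∑ s ∈ Finset.range S, Real.binEntropy (d (s + j)) ≤
        ∑ _j : Fin L, S * b := Finset.sum_le_sum fun j _ =>
      sum_binEntropy_le hS0 (fun s => hd0 _) (fun s => hd1 _) hδ2 (hdS j)
    simp only [Finset.sum_const, Finset.card_range, Finset.card_univ, Fintype.card_fin,
      nsmul_eq_mul] at hJ ⊢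
    linarith
  have hq : ∀ q : ℕ, (q / (q + 1 : ℝ)) * ksEntropy μ - b ≤
      blockEntropy ν ((q + 1) * blen (k + 1)) / ((q + 1) * blen (k + 1) : ℕ) := by
    intro q
    have h1 := ksEntropy_le hμ.1 hn0.ne'
    rw [le_div_iff₀ (by positivity)]
    refine le_trans ?_ (hblock q)
    push_cast
    rw [le_div_iff₀ hn0'] at h1
    have h2 : (q / (q + 1 : ℝ) * ksEntropy μ - b) * ((q + 1) * blen (k + 1)) =
        q * (ksEntropy μ * blen (k + 1)) - (q + 1) * blen (k + 1) * b := by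
      field_simp
    rw [h2]
    gcongr
  have hlim1 : Tendsto (fun q : ℕ => (q / (q + 1 : ℝ)) * ksEntropy μ - b) atTop
      (𝓝 (1 * ksEntropy μ - b)) :=
    ((tendsto_natCast_div_add_atTop (1 : ℝ)).mul_const _).sub_const _
  have hlim2 : Tendsto (fun q : ℕ => blockEntropy ν ((q + 1) * blen (k + 1)) /
      ((q + 1) * blen (k + 1) : ℕ)) atTop (𝓝 (ksEntropy ν)) :=
    (tendsto_blockEntropy_div hνi).comp (tendsto_atTop_mono
      (fun q => (Nat.le_succ q).trans (Nat.le_mul_of_pos_right _ hn0)) tendsto_id)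
  rw [one_mul] at hlim1
  exact le_of_tendsto_of_tendsto' hlim1 hlim2 hq

/-! ### Entropy density -/

theorem entropyDense_hierShift : EntropyDense hierShift := by
  intro μ hμ U hU hμU ε hε
  choose ψ hψ1 hψ2 using exists_blockCode
  choose ν hν1 hν2 hν3 using fun k =>
    exists_ergodic_isAverageLimit (wordLaw μ (blen (k + 1))) (hψ1 k)
  have hlim : Tendsto ν atTop (𝓝 μ) := by
    refine tendsto_of_integral_restr fun m φ hφ => ?_
    rw [tendsto_iff_dist_tendsto_zero]
    refine squeeze_zero (fun _ => dist_nonneg)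
      (fun k => abs_integral_limit_sub_le hμ (hψ2 k) (hν3 k) hφ) ?_
    exact tendsto_const_div_atTop_nhds_zero_nat (8 * m + 4 * m ^ 2 + 1 : ℝ) |>.comp (tendsto_add_atTop_nat 1) |>.congr
      fun k => by simp
  have hbin : Tendsto (fun k : ℕ => Real.binEntropy (1 / 2 ^ (k + 4))) atTop (𝓝 0) := by
    have h1 : Tendsto (fun k : ℕ => (1 / 2 : ℝ) ^ k) atTop (𝓝 0) :=
      tendsto_pow_atTop_nhds_zero_of_lt_one (by norm_num) (by norm_num)
    have h2 := (Real.binEntropy_continuous.tendsto 0).comp (h1.comp (tendsto_add_atTop_nat 4))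
    rw [Real.binEntropy_zero] at h2
    exact h2.congr fun k => by simp
  obtain ⟨N, hN, hN0⟩ := ((tendsto_blockEntropy_div hμ.1).eventually_lt_const
    (lt_add_of_pos_right _ hε) |>.and (eventually_ne_atTop 0)).exists
  have hup : ∀ᶠ k in atTop, blockEntropy (ν k) N / N < ksEntropy μ + ε :=
    ((((continuous_blockEntropy N).tendsto μ).comp hlim).div_const (N : ℝ)).eventually_lt_const hN
  obtain ⟨k, hk1, hk2, hk3⟩ := (hup.and ((hbin.eventually_lt_const hε).and
    (hlim.eventually (hU.mem_nhds hμU)))).exists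
  refine ⟨ν k, hν1 k, hk3, hν2 k, ?_⟩
  have h1 := ksEntropy_le (hν1 k).1 hN0
  have h2 := sub_binEntropy_le_ksEntropy hμ (hν1 k).1 (hψ2 k) (hν3 k)
  rw [abs_sub_lt_iff]
  constructor <;> linarith

/-- there exists a minimal, topologically mixing shift space over `{0,1}`
with positive topological entropy and the `d̄`-shadowing property, whose ergodic measures
are entropy dense and form an uncountable set. -/
theorem statement19 :
    ∃ X : Set (ℕ → Bool), MinimalShift X ∧ MixingShift X ∧ 0 < topEntropy X ∧
      DbarShadowing X ∧ EntropyDense X ∧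
      ¬ ({μ : ProbabilityMeasure (ℕ → Bool) | μ ∈ Msigma X ∧ ErgodicPM μ}).Countable := by
  exact ⟨hierShift, minimalShift_hierShift, mixingShift_hierShift, topEntropy_hierShift_pos,
    dbarShadowing_hierShift, entropyDense_hierShift, not_countable_ergodic⟩

end DbarPaper
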